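/- (Triangle diagram in terms of the correlation length.) Suppose d ≥ 1, 0 < α < d and α < 1. Then there is a constant C₁ < ∞ (depending only on d, α, c, C) such that for every β with β_c/2 ≤ β < β_c: if α < d/3 then ∇_β ≤ C₁; if α = d/3 then ∇_β ≤ C₁ (1 + log ξ(β)); and if α > d/3 then ∇_β ≤ C₁ ξ(β)^{3α−d}. -/

import Mathlib

open MeasureTheory ENNReal

namespace LRP

/-- The vertex set `ℤ^d`. -/
abbrev V (d : ℕ) : Type := Fin d → ℤ

/-- The `ℓ^∞` norm of a lattice point, as a natural number. -/
def normInf {d : ℕ} (x : V d) : ℕ := Finset.univ.sup fun i => (x i).natAbs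

/-- A percolation configuration: each (unordered) pair of vertices is open or closed. -/
abbrev Config (d : ℕ) : Type := Sym2 (V d) → Bool

/-- The probability `1 - exp (-β J(x,y))` that the edge `e = {x,y}` is open
(the symmetrization `(J x y + J y x)/2` equals `J x y` for symmetric `J`). -/
noncomputable def edgeProb {d : ℕ} (J : V d → V d → ℝ) (β : ℝ) (e : Sym2 (V d)) : ℝ≥0∞ :=
  ENNReal.ofReal (1 - Real.exp (-β *
    Sym2.lift ⟨fun x y => (J x y + J y x) / 2, fun x y => by dsimp only; rw [add_comm]⟩ e))

/-- `IsLRP J P` asserts that for each `β`, `P β` is the law of long-range percolation on `ℤ^d`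
with kernel `J` at inverse temperature `β`: distinct edges are open independently, edge `{x,y}`
being open with probability `1 - exp (-β J(x,y))`.  This is expressed by prescribing the
probability of every finite cylinder event, which characterizes the measure uniquely. -/
def IsLRP {d : ℕ} (J : V d → V d → ℝ) (P : ℝ → Measure (Config d)) : Prop :=
  ∀ (β : ℝ) (s : Finset (Sym2 (V d))) (f : Sym2 (V d) → Bool),
    P β {ω | ∀ e ∈ s, ω e = f e} =
      ∏ e ∈ s, (if f e then edgeProb J β e else 1 - edgeProb J β e)

/-- Two vertices are adjacent if they are distinct and the edge between them is open. -/
def adj {d : ℕ} (ω : Config d) (x y : V d) : Prop := x ≠ y ∧ ω s(x, y) = true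

/-- `x ↔ y`: the vertices are connected by a path of open edges. -/
def conn {d : ℕ} (ω : Config d) (x y : V d) : Prop := Relation.ReflTransGen (adj ω) x y

/-- `x ↔ y` inside `A`: connected by an open path all of whose vertices lie in `A`. -/
def connIn {d : ℕ} (ω : Config d) (A : Set (V d)) (x y : V d) : Prop :=
  x ∈ A ∧ y ∈ A ∧ Relation.ReflTransGen (fun a b => a ∈ A ∧ b ∈ A ∧ adj ω a b) x y

/-- The cluster of `x`. -/
def cluster {d : ℕ} (ω : Config d) (x : V d) : Set (V d) := {y | conn ω x y}

/-- The critical point `β_c`. -/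
noncomputable def betaC {d : ℕ} (P : ℝ → Measure (Config d)) : ℝ :=
  sInf {β : ℝ | 0 ≤ β ∧ 0 < P β {ω | ∃ x, (cluster ω x).Infinite}}

/-- The two-point function `ℙ_β(x ↔ y)`. -/
noncomputable def twoPoint {d : ℕ} (P : ℝ → Measure (Config d)) (β : ℝ) (x y : V d) : ℝ≥0∞ :=
  P β {ω | conn ω x y}

/-- The susceptibility `χ(β) = Σ_x ℙ_β(0 ↔ x)`. -/
noncomputable def chi {d : ℕ} (P : ℝ → Measure (Config d)) (β : ℝ) : ℝ≥0∞ :=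
  ∑' x : V d, twoPoint P β 0 x

/-- `Σ_{x ∈ [-n,n]^d} ℙ_β(0 ↔ x)`. -/
noncomputable def boxSum {d : ℕ} (P : ℝ → Measure (Config d)) (β : ℝ) (n : ℕ) : ℝ≥0∞ :=
  ∑' x : V d, if normInf x ≤ n then twoPoint P β 0 x else 0

/-- The correlation length `ξ(β) = inf {r ≥ 1 : Σ_{x ∈ [-r,r]^d} ℙ_β(0↔x) ≥ χ(β)/2}`
(`= ∞` if no such `r` exists). -/
noncomputable def xi {d : ℕ} (P : ℝ → Measure (Config d)) (β : ℝ) : ℝ≥0∞ :=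
  sInf {r : ℝ≥0∞ | ∃ n : ℕ, r = (n : ℝ≥0∞) ∧ 1 ≤ n ∧ chi P β ≤ 2 * boxSum P β n}

/-- The triangle diagram `∇_β`. -/
noncomputable def triangle {d : ℕ} (P : ℝ → Measure (Config d)) (β : ℝ) : ℝ≥0∞ :=
  ∑' x : V d, ∑' y : V d, twoPoint P β 0 x * twoPoint P β x y * twoPoint P β y 0

/-- The standing assumptions on the kernel `J`: symmetric, integrable, translation-invariant,
with `c ‖x-y‖^{-d-α} ≤ J(x,y) ≤ C ‖x-y‖^{-d-α}` for distinct `x, y`, where `0 < α < d`. -/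
structure KernelHyp (d : ℕ) (J : V d → V d → ℝ) (α c C : ℝ) : Prop where
  d_pos : 1 ≤ d
  symm : ∀ x y, J x y = J y x
  transInv : ∀ x y z : V d, J (x + z) (y + z) = J x y
  nonneg : ∀ x y, 0 ≤ J x y
  integrable : Summable fun x : V d => J 0 x
  alpha_pos : 0 < α
  alpha_lt_d : α < (d : ℝ)
  c_pos : 0 < c
  c_le_C : c ≤ C
  lower : ∀ x y : V d, x ≠ y → c * (normInf (x - y) : ℝ) ^ (-(d : ℝ) - α) ≤ J x y
  upper : ∀ x y : V d, x ≠ y → J x y ≤ C * (normInf (x - y) : ℝ) ^ (-(d : ℝ) - α)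

set_option linter.unusedSectionVars false

section Expect
variable {ι : Type*} [DecidableEq ι]

/-- Finite-volume expectation of a function of the set of open edges. -/
noncomputable def Ex (E : Finset ι) (p : ι → ℝ) (f : Finset ι → ℝ) : ℝ :=
  ∑ S ∈ E.powerset, (∏ e ∈ E, if e ∈ S then p e else 1 - p e) * f S

theorem Ex_empty (p : ι → ℝ) (f : Finset ι → ℝ) : Ex ∅ p f = f ∅ := by
  simp [Ex]

theorem Ex_congr {E : Finset ι} {p : ι → ℝ} {f g : Finset ι → ℝ}
    (h : ∀ S, S ⊆ E → f S = g S) : Ex E p f = Ex E p g := by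
  unfold Ex
  apply Finset.sum_congr rfl
  intro S hS
  rw [h S (Finset.mem_powerset.1 hS)]

theorem Ex_insert {E : Finset ι} {e : ι} (he : e ∉ E) (p : ι → ℝ) (f : Finset ι → ℝ) :
    Ex (insert e E) p f = p e * Ex E p (fun S => f (insert e S)) + (1 - p e) * Ex E p f := by
  unfold Ex
  rw [Finset.sum_powerset_insert he, add_comm, Finset.mul_sum, Finset.mul_sum]
  congr 1
  · apply Finset.sum_congr rfl
    intro S hS
    have hS' := Finset.mem_powerset.1 hS
    rw [Finset.prod_insert he]
    have : ∏ x ∈ E, (if x ∈ insert e S then p x else 1 - p x)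
        = ∏ x ∈ E, (if x ∈ S then p x else 1 - p x) := by
      apply Finset.prod_congr rfl
      intro x hx
      have hxe : x ≠ e := fun h => he (h ▸ hx)
      simp [hxe]
    rw [this]
    simp [mul_assoc]
  · apply Finset.sum_congr rfl
    intro S hS
    have hS' := Finset.mem_powerset.1 hS
    have : e ∉ S := fun h => he (hS' h)
    rw [Finset.prod_insert he]
    simp [this, mul_assoc]

theorem Ex_add (E : Finset ι) (p : ι → ℝ) (f g : Finset ι → ℝ) :
    Ex E p (fun S => f S + g S) = Ex E p f + Ex E p g := by
  simp [Ex, mul_add, Finset.sum_add_distrib]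

theorem Ex_sub (E : Finset ι) (p : ι → ℝ) (f g : Finset ι → ℝ) :
    Ex E p (fun S => f S - g S) = Ex E p f - Ex E p g := by
  simp [Ex, mul_sub, Finset.sum_sub_distrib]

theorem Ex_mul_left (E : Finset ι) (p : ι → ℝ) (c : ℝ) (f : Finset ι → ℝ) :
    Ex E p (fun S => c * f S) = c * Ex E p f := by
  simp only [Ex, Finset.mul_sum]
  apply Finset.sum_congr rfl
  intro S _; ring

theorem Ex_mul_right (E : Finset ι) (p : ι → ℝ) (c : ℝ) (f : Finset ι → ℝ) :
    Ex E p (fun S => f S * c) = Ex E p f * c := by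
  simp only [Ex, Finset.sum_mul]
  apply Finset.sum_congr rfl
  intro S _; ring

theorem Ex_sum {κ : Type*} (E : Finset ι) (p : ι → ℝ) (s : Finset κ) (f : κ → Finset ι → ℝ) :
    Ex E p (fun S => ∑ k ∈ s, f k S) = ∑ k ∈ s, Ex E p (f k) := by
  simp only [Ex, Finset.mul_sum]
  rw [Finset.sum_comm]

theorem Ex_const (E : Finset ι) (p : ι → ℝ) (c : ℝ) : Ex E p (fun _ => c) = c := by
  induction E using Finset.induction_on with
  | empty => rw [Ex_empty]
  | insert e E he ih => rw [Ex_insert he, ih]; ring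

/-- parameters in the unit interval -/
def PP (p : ι → ℝ) : Prop := ∀ e, 0 ≤ p e ∧ p e ≤ 1

theorem Ex_mono {E : Finset ι} {p : ι → ℝ} (hp : PP p) {f g : Finset ι → ℝ}
    (h : ∀ S, S ⊆ E → f S ≤ g S) : Ex E p f ≤ Ex E p g := by
  unfold Ex
  apply Finset.sum_le_sum
  intro S hS
  apply mul_le_mul_of_nonneg_left (h S (Finset.mem_powerset.1 hS))
  apply Finset.prod_nonneg
  intro e _
  split_ifs
  · exact (hp e).1
  · linarith [(hp e).2]

theorem Ex_nonneg {E : Finset ι} {p : ι → ℝ} (hp : PP p) {f : Finset ι → ℝ}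
    (h : ∀ S, S ⊆ E → 0 ≤ f S) : 0 ≤ Ex E p f := by
  have := Ex_mono (E := E) hp (f := fun _ => 0) (g := f) h
  rwa [Ex_const] at this

theorem Ex_union {E F : Finset ι} (h : Disjoint E F) (p : ι → ℝ) (f : Finset ι → ℝ) :
    Ex (E ∪ F) p f = Ex E p (fun S => Ex F p (fun T => f (S ∪ T))) := by
  induction E using Finset.induction_on generalizing f with
  | empty => simp [Ex_empty]
  | insert e E he ih =>
    rw [Finset.disjoint_insert_left] at h
    rw [Finset.insert_union, Ex_insert (by simp [he, h.1]), Ex_insert he, ih h.2, ih h.2]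
    simp [Finset.insert_union]

theorem Ex_marginal {E E' : Finset ι} (h : E' ⊆ E) (p : ι → ℝ) (f : Finset ι → ℝ) :
    Ex E p (fun S => f (S ∩ E')) = Ex E' p f := by
  have h1 : E = E' ∪ (E \ E') := by simp [Finset.union_eq_right.2 h]
  conv_lhs => rw [h1]
  rw [Ex_union Finset.disjoint_sdiff]
  apply Ex_congr
  intro S hS
  have : Ex (E \ E') p (fun T => f ((S ∪ T) ∩ E')) = Ex (E \ E') p (fun _ => f S) := by
    apply Ex_congr
    intro T hT
    congr 1
    ext x
    have := @hT x
    have := @hS x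
    simp at *
    tauto
  rw [this, Ex_const]

theorem Ex_indep {E F G : Finset ι} (hEG : E ⊆ G) (hFG : F ⊆ G) (h : Disjoint E F) (p : ι → ℝ)
    (f g : Finset ι → ℝ) :
    Ex G p (fun S => f (S ∩ E) * g (S ∩ F)) = Ex E p f * Ex F p g := by
  have h1 := Ex_marginal (Finset.union_subset hEG hFG) p (fun S => f (S ∩ E) * g (S ∩ F))
  have h2 : ∀ S : Finset ι, S ∩ (E ∪ F) ∩ E = S ∩ E := by
    intro S; ext x; simp
  have h3 : ∀ S : Finset ι, S ∩ (E ∪ F) ∩ F = S ∩ F := by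
    intro S; ext x; simp
  simp only [h2, h3] at h1
  rw [h1, Ex_union h, ← Ex_mul_right]
  apply Ex_congr
  intro S hS
  rw [← Ex_mul_left]
  apply Ex_congr
  intro T hT
  have hd := Finset.disjoint_left.1 h
  congr 2
  · ext x
    have := @hT x
    have := @hS x
    have := @hd x
    simp only [Finset.mem_inter, Finset.mem_union]; tauto
  · ext x
    have := @hT x
    have := @hS x
    have := @hd x
    simp only [Finset.mem_inter, Finset.mem_union]; tauto

theorem Ex_mono_set {E F : Finset ι} (hEF : E ⊆ F) {p : ι → ℝ} (hp : PP p) {f : Finset ι → ℝ}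
    (hf : Monotone f) : Ex E p f ≤ Ex F p f := by
  rw [← Ex_marginal hEF]
  apply Ex_mono hp
  intro S _
  exact hf Finset.inter_subset_left

theorem Ex_mono_p {E : Finset ι} {p p' : ι → ℝ} (hp : PP p) (hp' : PP p') (hpp : ∀ e, p e ≤ p' e)
    {f : Finset ι → ℝ} (hf : Monotone f) : Ex E p f ≤ Ex E p' f := by
  induction E using Finset.induction_on generalizing f with
  | empty => simp [Ex_empty]
  | insert e E he ih =>
    rw [Ex_insert he, Ex_insert he]
    have h1 := ih hf
    have h2 := ih (f := fun S => f (insert e S)) (fun S T h => hf (Finset.insert_subset_insert e h))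
    have h3 : Ex E p' f ≤ Ex E p' (fun S => f (insert e S)) :=
      Ex_mono hp' (fun S _ => hf (Finset.subset_insert e S))
    have := hpp e
    have := hp e
    have := hp' e
    nlinarith

theorem Ex_map {κ : Type*} [DecidableEq κ] (φ : ι ↪ κ) (E : Finset ι) (p : κ → ℝ)
    (f : Finset κ → ℝ) :
    Ex (E.map φ) p f = Ex E (fun e => p (φ e)) (fun S => f (S.map φ)) := by
  induction E using Finset.induction_on generalizing f with
  | empty => simp [Ex_empty]
  | insert e E he ih =>
    rw [Finset.map_insert, Ex_insert (by simpa using he), Ex_insert he, ih, ih]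
    simp [Finset.map_insert]

open Classical in
/-- indicator of a proposition -/
noncomputable def ind (Q : Prop) : ℝ := if Q then 1 else 0

theorem ind_true {Q : Prop} (h : Q) : ind Q = 1 := by simp [ind, h]
theorem ind_false {Q : Prop} (h : ¬ Q) : ind Q = 0 := by simp [ind, h]
theorem ind_nonneg (Q : Prop) : 0 ≤ ind Q := by unfold ind; split_ifs <;> norm_num
theorem ind_le_one (Q : Prop) : ind Q ≤ 1 := by unfold ind; split_ifs <;> norm_num
theorem ind_mono {Q Q' : Prop} (h : Q → Q') : ind Q ≤ ind Q' := by
  by_cases h1 : Q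
  · rw [ind_true h1, ind_true (h h1)]
  · rw [ind_false h1]; exact ind_nonneg _
theorem ind_and (Q Q' : Prop) : ind (Q ∧ Q') = ind Q * ind Q' := by
  by_cases h : Q <;> by_cases h' : Q' <;> simp [ind, h, h']

/-- probability of an event -/
noncomputable def Pr (E : Finset ι) (p : ι → ℝ) (A : Finset ι → Prop) : ℝ :=
  Ex E p (fun S => ind (A S))

theorem Pr_mono {E : Finset ι} {p : ι → ℝ} (hp : PP p) {A B : Finset ι → Prop}
    (h : ∀ S, S ⊆ E → A S → B S) : Pr E p A ≤ Pr E p B := by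
  apply Ex_mono hp
  intro S hS
  exact ind_mono (h S hS)

theorem Pr_nonneg {E : Finset ι} {p : ι → ℝ} (hp : PP p) (A : Finset ι → Prop) : 0 ≤ Pr E p A :=
  Ex_nonneg hp (fun S _ => ind_nonneg _)

theorem Pr_le_one {E : Finset ι} {p : ι → ℝ} (hp : PP p) (A : Finset ι → Prop) : Pr E p A ≤ 1 := by
  have := Ex_mono (E := E) hp (f := fun S => ind (A S)) (g := fun _ => 1)
    (fun S _ => ind_le_one _)
  rw [Ex_const] at this
  exact this

theorem Pr_insert {E : Finset ι} {e : ι} (he : e ∉ E) (p : ι → ℝ) (A : Finset ι → Prop) :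
    Pr (insert e E) p A = p e * Pr E p (fun S => A (insert e S)) + (1 - p e) * Pr E p A := by
  unfold Pr
  rw [Ex_insert he]

theorem Pr_union_le {E : Finset ι} {p : ι → ℝ} (hp : PP p) (A B : Finset ι → Prop) :
    Pr E p (fun S => A S ∨ B S) ≤ Pr E p A + Pr E p B := by
  unfold Pr
  rw [← Ex_add]
  apply Ex_mono hp
  intro S _
  by_cases h1 : A S <;> by_cases h2 : B S <;> simp [ind, h1, h2]

theorem Pr_exists_le {κ : Type*} {E : Finset ι} {p : ι → ℝ} (hp : PP p) (s : Finset κ)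
    (A : κ → Finset ι → Prop) :
    Pr E p (fun S => ∃ k ∈ s, A k S) ≤ ∑ k ∈ s, Pr E p (A k) := by
  unfold Pr
  rw [← Ex_sum]
  apply Ex_mono hp
  intro S _
  by_cases h : ∃ k ∈ s, A k S
  · obtain ⟨k, hk, hA⟩ := h
    have := Finset.single_le_sum (f := fun k => ind (A k S)) (fun i _ => ind_nonneg _) hk
    refine le_trans (ind_le_one _) (le_trans ?_ this)
    simp [ind_true hA]
  · rw [ind_false h]
    exact Finset.sum_nonneg (fun i _ => ind_nonneg _)

/-- disjoint occurrence -/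
def DO (A B : Finset ι → Prop) (S : Finset ι) : Prop :=
  ∃ S1 S2, S1 ⊆ S ∧ S2 ⊆ S ∧ Disjoint S1 S2 ∧ A S1 ∧ B S2

/-- increasing event -/
def Inc (A : Finset ι → Prop) : Prop := ∀ S T, S ⊆ T → A S → A T

theorem DO_mono {A A' B B' : Finset ι → Prop} (hA : ∀ S, A S → A' S) (hB : ∀ S, B S → B' S)
    {S : Finset ι} (h : DO A B S) : DO A' B' S := by
  obtain ⟨S1, S2, h1, h2, h3, h4, h5⟩ := h
  exact ⟨S1, S2, h1, h2, h3, hA _ h4, hB _ h5⟩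

theorem Inc_DO (A B : Finset ι → Prop) : Inc (DO A B) := by
  rintro S T hST ⟨S1, S2, h1, h2, h3⟩
  exact ⟨S1, S2, h1.trans hST, h2.trans hST, h3⟩

/-- The van den Berg--Kesten inequality for increasing events. -/
theorem BK (E : Finset ι) {p : ι → ℝ} (hp : PP p) {A B : Finset ι → Prop}
    (hA : Inc A) (hB : Inc B) : Pr E p (DO A B) ≤ Pr E p A * Pr E p B := by
  classical
  induction E using Finset.induction_on generalizing A B with
  | empty =>
    simp only [Pr, Ex_empty, ind]
    by_cases h : DO A B ∅
    · obtain ⟨S1, S2, h1, h2, h3, h4, h5⟩ := h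
      have e1 : S1 = ∅ := Finset.subset_empty.1 h1
      have e2 : S2 = ∅ := Finset.subset_empty.1 h2
      subst e1; subst e2
      simp only [h4, h5, if_true]
      split_ifs <;> norm_num
    · simp only [h, if_false]
      split_ifs <;> norm_num
  | insert e E he ih =>
    set A1 : Finset ι → Prop := fun S => A (insert e S) with hA1
    set B1 : Finset ι → Prop := fun S => B (insert e S) with hB1
    have iA1 : Inc A1 := fun S T h => hA _ _ (Finset.insert_subset_insert e h)
    have iB1 : Inc B1 := fun S T h => hB _ _ (Finset.insert_subset_insert e h)
    have AA1 : ∀ S, A S → A1 S := fun S => hA _ _ (Finset.subset_insert e S)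
    have BB1 : ∀ S, B S → B1 S := fun S => hB _ _ (Finset.subset_insert e S)
    have key : ∀ S, S ⊆ E → DO A B (insert e S) → DO A1 B S ∨ DO A B1 S := by
      rintro S hS ⟨S1, S2, h1, h2, h3, h4, h5⟩
      have heS : e ∉ S := fun h => he (hS h)
      by_cases heS1 : e ∈ S1
      · left
        have heS2 : e ∉ S2 := fun h => Finset.disjoint_left.1 h3 heS1 h
        refine ⟨S1.erase e, S2, ?_, ?_, ?_, ?_, h5⟩
        · intro x hx
          rw [Finset.mem_erase] at hx
          have := h1 hx.2
          simp [hx.1] at this; exact this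
        · intro x hx
          have hxe : x ≠ e := fun h => heS2 (h ▸ hx)
          have := h2 hx
          simp [hxe] at this; exact this
        · exact h3.mono_left (Finset.erase_subset _ _)
        · simp only [hA1]; rw [Finset.insert_erase heS1]; exact h4
      · right
        refine ⟨S1, S2.erase e, ?_, ?_, ?_, h4, ?_⟩
        · intro x hx
          have hxe : x ≠ e := fun h => heS1 (h ▸ hx)
          have := h1 hx
          simp [hxe] at this; exact this
        · intro x hx
          rw [Finset.mem_erase] at hx
          have := h2 hx.2
          simp [hx.1] at this; exact this
        · exact h3.mono_right (Finset.erase_subset _ _)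
        · simp only [hB1]
          exact hB _ _ (Finset.insert_erase_subset e S2) h5
    rw [Pr_insert he, Pr_insert he, Pr_insert he]
    set U := Pr E p (fun S => DO A B (insert e S))
    have hU1 : U ≤ Pr E p (DO A1 B) + Pr E p (DO A B1) - Pr E p (DO A B) := by
      have : U + Pr E p (DO A B) ≤ Pr E p (DO A1 B) + Pr E p (DO A B1) := by
        simp only [U, Pr, ind]
        rw [← Ex_add, ← Ex_add]
        apply Ex_mono hp
        intro S hS
        have k1 := key S hS
        by_cases h0 : DO A B S
        · have h1 : DO A1 B S := DO_mono AA1 (fun _ h => h) h0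
          have h2 : DO A B1 S := DO_mono (fun _ h => h) BB1 h0
          simp only [h0, h1, h2, if_true]
          split_ifs <;> norm_num
        · simp only [h0, if_false]
          by_cases h3 : DO A B (insert e S)
          · rcases k1 h3 with h | h <;> simp only [h, h3, if_true] <;> split_ifs <;> norm_num
          · simp only [h3, if_false]; split_ifs <;> norm_num
      linarith
    have hU2 : U ≤ Pr E p (DO A1 B1) := by
      apply Pr_mono hp
      intro S hS h
      rcases key S hS h with h | h
      · exact DO_mono (fun _ h => h) BB1 h
      · exact DO_mono AA1 (fun _ h => h) h
    have i00 := ih hA hB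
    have i10 := ih iA1 hB
    have i01 := ih hA iB1
    have i11 := ih iA1 iB1
    have a01 : Pr E p A ≤ Pr E p A1 := Pr_mono hp (fun S _ => AA1 S)
    have b01 : Pr E p B ≤ Pr E p B1 := Pr_mono hp (fun S _ => BB1 S)
    have hpe := hp e
    have hab : 0 ≤ (Pr E p A1 - Pr E p A) * (Pr E p B1 - Pr E p B) :=
      mul_nonneg (by linarith) (by linarith)
    have e1 : Pr E p (fun S => A (insert e S)) = Pr E p A1 := rfl
    have e2 : Pr E p (fun S => B (insert e S)) = Pr E p B1 := rfl
    rw [e1, e2]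
    generalize Pr E p A = a0 at *
    generalize Pr E p B = b0 at *
    generalize Pr E p A1 = a1 at *
    generalize Pr E p B1 = b1 at *
    generalize Pr E p (DO A B) = d00 at *
    generalize Pr E p (DO A1 B) = d10 at *
    generalize Pr E p (DO A B1) = d01 at *
    generalize Pr E p (DO A1 B1) = d11 at *
    generalize p e = q at *
    obtain ⟨q0, q1⟩ := hpe
    by_cases hq : q ≤ 1 / 2
    · have s1 : q * U + (1 - q) * d00 ≤ q * (d10 + d01 - d00) + (1 - q) * d00 := by
        have := mul_le_mul_of_nonneg_left hU1 q0
        linarith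
      have s2 : q * (d10 + d01) ≤ q * (a1 * b0 + a0 * b1) :=
        mul_le_mul_of_nonneg_left (by linarith) q0
      have s3 : (1 - 2 * q) * d00 ≤ (1 - 2 * q) * (a0 * b0) :=
        mul_le_mul_of_nonneg_left i00 (by linarith)
      have s4 : 0 ≤ q ^ 2 * ((a1 - a0) * (b1 - b0)) := mul_nonneg (sq_nonneg _) hab
      nlinarith
    · have s1 : (1 - q) * (U + d00) ≤ (1 - q) * (a1 * b0 + a0 * b1) :=
        mul_le_mul_of_nonneg_left (by linarith) (by linarith)
      have s2 : (2 * q - 1) * U ≤ (2 * q - 1) * (a1 * b1) :=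
        mul_le_mul_of_nonneg_left (by linarith) (by linarith)
      have s4 : 0 ≤ (1 - q) ^ 2 * ((a1 - a0) * (b1 - b0)) := mul_nonneg (sq_nonneg _) hab
      nlinarith

/-- no open edge in `F` -/
theorem Pr_disjoint {E F : Finset ι} (h : F ⊆ E) (p : ι → ℝ) :
    Pr E p (fun S => Disjoint S F) = ∏ e ∈ F, (1 - p e) := by
  classical
  have h1 : Pr E p (fun S => Disjoint S F) = Pr F p (fun S => Disjoint S F) := by
    unfold Pr
    rw [← Ex_marginal h]
    apply Ex_congr
    intro S _
    have : Disjoint S F ↔ Disjoint (S ∩ F) F := by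
      simp [Finset.disjoint_left]
    simp only [this]
  rw [h1]
  clear h h1
  suffices H : ∀ G : Finset ι, F ⊆ G → Pr F p (fun S => Disjoint S G) = ∏ e ∈ F, (1 - p e) from
    H F (Finset.Subset.refl _)
  intro G hG
  induction F using Finset.induction_on with
  | empty => simp [Pr, ind, Ex_empty]
  | insert e F he ih =>
    rw [Pr_insert he, Finset.prod_insert he, ih ((Finset.subset_insert _ _).trans hG)]
    have : Pr F p (fun S => Disjoint (insert e S) G) = 0 := by
      have heG : e ∈ G := hG (Finset.mem_insert_self _ _)
      unfold Pr
      simp [heG, ind, Ex_const]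
    rw [this]; ring

theorem Ex_hasDeriv (E : Finset ι) (J : ι → ℝ) (f : Finset ι → ℝ) (β : ℝ) :
    HasDerivAt (fun b => Ex E (fun e => 1 - Real.exp (-b * J e)) f)
      (∑ e ∈ E, J e * Ex E (fun e => 1 - Real.exp (-β * J e))
        (fun S => if e ∈ S then 0 else f (insert e S) - f S)) β := by
  induction E using Finset.induction_on generalizing f with
  | empty => simp [Ex_empty, hasDerivAt_const]
  | insert e E he ih =>
    simp only [Ex_insert he]
    have hd : HasDerivAt (fun b : ℝ => 1 - Real.exp (-b * J e)) (J e * Real.exp (-β * J e)) β := by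
      have h1 : HasDerivAt (fun b : ℝ => -b * J e) (-J e) β := by
        simpa using ((hasDerivAt_id β).neg.mul_const (J e))
      have h2 := (h1.exp).const_sub 1
      refine h2.congr_deriv ?_
      ring
    have h1 := hd.mul (ih (fun S => f (insert e S)))
    have h2 := (hd.const_sub 1).mul (ih f)
    have h3 := h1.add h2
    refine HasDerivAt.congr_deriv (f := _) h3 ?_
    rw [Finset.sum_insert he]
    set q := fun e => 1 - Real.exp (-β * J e) with hq
    have t1 : Ex E q (fun S => if e ∈ S then 0 else f (insert e S) - f S)
        = Ex E q (fun S => f (insert e S)) - Ex E q f := by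
      rw [← Ex_sub]
      apply Ex_congr
      intro S hS
      have : e ∉ S := fun h => he (hS h)
      simp [this]
    have t2 : Ex E q (fun S => if e ∈ insert e S then (0:ℝ) else f (insert e (insert e S)) - f (insert e S)) = 0 := by
      simp [Ex_const]
    rw [t1, t2]
    have t3 : ∀ x ∈ E, J x * (q e * Ex E q (fun S => if x ∈ insert e S then 0 else f (insert x (insert e S)) - f (insert e S)) + (1 - q e) * Ex E q (fun S => if x ∈ S then 0 else f (insert x S) - f S))
      = q e * (J x * Ex E q (fun S => if x ∈ S then 0 else f (insert e (insert x S)) - f (insert e S))) + (1 - q e) * (J x * Ex E q (fun S => if x ∈ S then 0 else f (insert x S) - f S)) := by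
      intro x hx
      have hxe : x ≠ e := fun h => he (h ▸ hx)
      have : Ex E q (fun S => if x ∈ insert e S then 0 else f (insert x (insert e S)) - f (insert e S)) = Ex E q (fun S => if x ∈ S then 0 else f (insert e (insert x S)) - f (insert e S)) := by
        apply Ex_congr
        intro S _
        simp [hxe, Finset.insert_comm]
      rw [this]; ring
    rw [Finset.sum_congr rfl t3, Finset.sum_add_distrib, ← Finset.mul_sum, ← Finset.mul_sum]
    have : q e = 1 - Real.exp (-β * J e) := rfl
    rw [this]
    ring

end Expect


section Graph
variable {W : Type*} [DecidableEq W]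

/-- connected by edges of `S` -/
def R (S : Finset (Sym2 W)) (x y : W) : Prop := Relation.ReflTransGen (fun a b => s(a, b) ∈ S) x y

theorem R.refl {S : Finset (Sym2 W)} (x : W) : R S x x := Relation.ReflTransGen.refl

theorem R.trans {S : Finset (Sym2 W)} {x y z : W} (h : R S x y) (h' : R S y z) : R S x z :=
  Relation.ReflTransGen.trans h h'

theorem R.symm {S : Finset (Sym2 W)} {x y : W} (h : R S x y) : R S y x := by
  induction h with
  | refl => exact R.refl _
  | tail _ h ih => exact Relation.ReflTransGen.head (by rw [Sym2.eq_swap]; exact h) ih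

theorem R.mono {S T : Finset (Sym2 W)} (hST : S ⊆ T) {x y : W} (h : R S x y) : R T x y :=
  Relation.ReflTransGen.mono (fun _ _ h => hST h) _ _ h

theorem R.edge {S : Finset (Sym2 W)} {x y : W} (h : s(x, y) ∈ S) : R S x y :=
  Relation.ReflTransGen.single h

theorem R.mem {B : Finset W} {S : Finset (Sym2 W)} (hS : S ⊆ B.sym2) {x y : W} (h : R S x y)
    (hx : x ∈ B) : y ∈ B := by
  induction h with
  | refl => exact hx
  | tail _ h _ => exact (Finset.mk_mem_sym2_iff.1 (hS h)).2

open Classical in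
/-- cluster of `u` intersected with `B` -/
noncomputable def K (B : Finset W) (S : Finset (Sym2 W)) (u : W) : Finset W := B.filter (R S u)

theorem mem_K {B : Finset W} {S : Finset (Sym2 W)} {u v : W} : v ∈ K B S u ↔ v ∈ B ∧ R S u v := by
  simp [K]

theorem K_mono {B : Finset W} {S T : Finset (Sym2 W)} (h : S ⊆ T) (u : W) : K B S u ⊆ K B T u := by
  intro v hv
  rw [mem_K] at *
  exact ⟨hv.1, hv.2.mono h⟩

/-- Paths stay within any set of edges that is closed under adjacency. -/
theorem R_restrict {S T : Finset (Sym2 W)} {x y : W} (h : R S x y)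
    (hT : ∀ a b, R S x a → s(a, b) ∈ S → s(a, b) ∈ T) : R T x y := by
  induction h with
  | refl => exact R.refl _
  | tail h1 h2 ih => exact ih.trans (R.edge (hT _ _ h1 h2))

theorem R_erase {S : Finset (Sym2 W)} {u w x y : W} (h : R S x y) (hx : R (S.erase s(u, w)) u x ∨
    R (S.erase s(u, w)) w x) : R (S.erase s(u, w)) u y ∨ R (S.erase s(u, w)) w y := by
  induction h with
  | refl => exact hx
  | @tail b c h1 h2 ih =>
    by_cases he : s(b, c) = s(u, w)
    · rw [Sym2.eq_iff] at he
      rcases he with ⟨_, rfl⟩ | ⟨_, rfl⟩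
      · right; exact R.refl _
      · left; exact R.refl _
    · have : s(b, c) ∈ S.erase s(u, w) := Finset.mem_erase.2 ⟨he, h2⟩
      rcases ih with h | h
      · left; exact h.trans (R.edge this)
      · right; exact h.trans (R.edge this)

open Classical in
/-- edges of `S` attached to the cluster of `u` -/
noncomputable def cl (S : Finset (Sym2 W)) (u : W) : Finset (Sym2 W) :=
  S.filter (fun e => ∃ a b, R S u a ∧ e = s(a, b))

theorem cl_sub (S : Finset (Sym2 W)) (u : W) : cl S u ⊆ S := by
  intro e he; simp only [cl, Finset.mem_filter] at he; exact he.1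

theorem R_cl {S : Finset (Sym2 W)} {u y : W} (h : R S u y) : R (cl S u) u y := by
  apply R_restrict h
  intro a b ha hb
  simp only [cl, Finset.mem_filter]
  exact ⟨hb, a, b, ha, rfl⟩

theorem cl_mem_R {S : Finset (Sym2 W)} {u a b : W} (h : s(a, b) ∈ cl S u) : R S u a := by
  simp only [cl, Finset.mem_filter] at h
  obtain ⟨h1, a', b', h2, h3⟩ := h
  rw [Sym2.eq_iff] at h3
  rcases h3 with ⟨rfl, rfl⟩ | ⟨rfl, rfl⟩
  · exact h2
  · exact h2.trans (R.edge (by rw [Sym2.eq_swap]; exact h1))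

theorem cl_disj {S : Finset (Sym2 W)} {u w : W} (h : ¬ R S u w) : Disjoint (cl S u) (cl S w) := by
  rw [Finset.disjoint_left]
  intro e
  induction e using Sym2.ind with
  | _ a b =>
    intro h1 h2
    exact h ((cl_mem_R h1).trans (cl_mem_R h2).symm)

theorem split_aux (B : Finset W) (m : ℕ) (hm : 1 ≤ m) : ∀ (n : ℕ) (S : Finset (Sym2 W)) (u : W),
    S.card = n → m ≤ (K B S u).card → ∃ v S1 S2, S1 ⊆ S ∧ S2 ⊆ S ∧ Disjoint S1 S2 ∧
      m ≤ (K B S2 v).card ∧ (K B S2 v).card ≤ 2 * m ∧ K B S u ⊆ K B S1 u ∪ K B S2 v := by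
  intro n
  induction n using Nat.strong_induction_on with
  | _ n ih =>
  intro S u hn hmK
  by_cases hsmall : (K B S u).card ≤ 2 * m
  · exact ⟨u, ∅, S, by simp, by simp, by simp, hmK, hsmall, Finset.subset_union_right⟩
  push Not at hsmall
  obtain ⟨y, hy, hyu⟩ := Finset.exists_mem_ne (by omega : 1 < (K B S u).card) u
  have hRy := (mem_K.1 hy).2
  obtain ⟨w, hw, -⟩ : ∃ w, s(u, w) ∈ S ∧ R S w y := by
    rcases Relation.ReflTransGen.cases_head hRy with h | ⟨c, h1, h2⟩
    · exact absurd h.symm hyu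
    · exact ⟨c, h1, h2⟩
  set S' := S.erase s(u, w) with hS'
  have hS'S : S' ⊆ S := Finset.erase_subset _ _
  have hcard : S'.card < n := by rw [← hn]; exact Finset.card_erase_lt_of_mem hw
  have hsplit : ∀ z, R S u z → R S' u z ∨ R S' w z := fun z hz => R_erase hz (Or.inl (R.refl _))
  have hKsub : K B S u ⊆ K B S' u ∪ K B S' w := by
    intro z hz
    rw [mem_K] at hz
    rw [Finset.mem_union, mem_K, mem_K]
    rcases hsplit z hz.2 with h | h
    · exact Or.inl ⟨hz.1, h⟩
    · exact Or.inr ⟨hz.1, h⟩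
  by_cases hconn : R S' u w
  · have hKe : K B S u ⊆ K B S' u := by
      refine hKsub.trans (Finset.union_subset (Finset.Subset.refl _) ?_)
      intro z hz
      rw [mem_K] at *
      exact ⟨hz.1, hconn.trans hz.2⟩
    obtain ⟨v, S1, S2, h1, h2, h3, h4, h5, h6⟩ :=
      ih _ hcard S' u rfl (hmK.trans (Finset.card_le_card hKe))
    exact ⟨v, S1, S2, h1.trans hS'S, h2.trans hS'S, h3, h4, h5, hKe.trans h6⟩
  have hdisj := cl_disj hconn
  have hclu : K B S' u ⊆ K B (cl S' u) u := by
    intro z hz; rw [mem_K] at *; exact ⟨hz.1, R_cl hz.2⟩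
  have hclw : K B S' w ⊆ K B (cl S' w) w := by
    intro z hz; rw [mem_K] at *; exact ⟨hz.1, R_cl hz.2⟩
  have hE : s(u, w) ∉ S' := Finset.notMem_erase _ _
  by_cases hKw : m ≤ (K B S' w).card
  · obtain ⟨v, S1, S2, h1, h2, h3, h4, h5, h6⟩ :=
      ih _ (lt_of_le_of_lt (Finset.card_le_card (cl_sub S' w)) hcard) (cl S' w) w rfl
        (hKw.trans (Finset.card_le_card hclw))
    refine ⟨v, insert s(u, w) (S1 ∪ cl S' u), S2, ?_, ?_, ?_, h4, h5, ?_⟩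
    · intro e he
      rw [Finset.mem_insert, Finset.mem_union] at he
      rcases he with rfl | he | he
      · exact hw
      · exact hS'S (cl_sub _ _ (h1 he))
      · exact hS'S (cl_sub _ _ he)
    · exact h2.trans ((cl_sub _ _).trans hS'S)
    · rw [Finset.disjoint_insert_left, Finset.disjoint_union_left]
      exact ⟨fun h => hE (cl_sub _ _ (h2 h)), h3, hdisj.mono_right h2⟩
    · refine hKsub.trans (Finset.union_subset ?_ ?_)
      · refine hclu.trans (Finset.Subset.trans (K_mono ?_ u) Finset.subset_union_left)
        exact Finset.subset_union_right.trans (Finset.subset_insert _ _)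
      · refine hclw.trans (h6.trans (Finset.union_subset_union ?_ (Finset.Subset.refl _)))
        intro z hz
        rw [mem_K] at *
        refine ⟨hz.1, R.trans (R.edge (Finset.mem_insert_self _ _)) (hz.2.mono ?_)⟩
        exact Finset.subset_union_left.trans (Finset.subset_insert _ _)
  · have hKu : m ≤ (K B S' u).card := by
      have := (Finset.card_le_card hKsub).trans (Finset.card_union_le _ _)
      omega
    obtain ⟨v, S1, S2, h1, h2, h3, h4, h5, h6⟩ :=
      ih _ (lt_of_le_of_lt (Finset.card_le_card (cl_sub S' u)) hcard) (cl S' u) u rfl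
        (hKu.trans (Finset.card_le_card hclu))
    refine ⟨v, insert s(u, w) (S1 ∪ cl S' w), S2, ?_, ?_, ?_, h4, h5, ?_⟩
    · intro e he
      rw [Finset.mem_insert, Finset.mem_union] at he
      rcases he with rfl | he | he
      · exact hw
      · exact hS'S (cl_sub _ _ (h1 he))
      · exact hS'S (cl_sub _ _ he)
    · exact h2.trans ((cl_sub _ _).trans hS'S)
    · rw [Finset.disjoint_insert_left, Finset.disjoint_union_left]
      exact ⟨fun h => hE (cl_sub _ _ (h2 h)), h3, hdisj.symm.mono_right h2⟩
    · refine hKsub.trans (Finset.union_subset ?_ ?_)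
      · refine hclu.trans (h6.trans (Finset.union_subset_union (K_mono ?_ u) (Finset.Subset.refl _)))
        exact Finset.subset_union_left.trans (Finset.subset_insert _ _)
      · refine hclw.trans (Finset.Subset.trans ?_ Finset.subset_union_left)
        intro z hz
        rw [mem_K] at *
        refine ⟨hz.1, R.trans (R.edge (Finset.mem_insert_self _ _)) (hz.2.mono ?_)⟩
        exact Finset.subset_union_right.trans (Finset.subset_insert _ _)

/-- there is a cluster of size at least `m` -/
def Big (B : Finset W) (m : ℕ) (S : Finset (Sym2 W)) : Prop := ∃ v ∈ B, m ≤ (K B S v).card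

theorem tight (B : Finset W) (E : Finset (Sym2 W)) {p : Sym2 W → ℝ} (hp : PP p) (m : ℕ)
    (hm : 1 ≤ m) (u : W) :
    Pr E p (fun S => 3 * m ≤ (K B S u).card) ≤
      Pr E p (fun S => m ≤ (K B S u).card) * Pr E p (Big B m) := by
  refine le_trans ?_ (BK E hp ?_ ?_)
  · apply Pr_mono hp
    intro S _ h
    obtain ⟨v, S1, S2, h1, h2, h3, h4, h5, h6⟩ := split_aux B m hm _ S u rfl (by omega)
    have := (Finset.card_le_card h6).trans (Finset.card_union_le _ _)
    have hne : (K B S2 v).Nonempty := Finset.card_pos.1 (by omega)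
    obtain ⟨z, hz⟩ := hne
    rw [mem_K] at hz
    refine ⟨S1, S2, h1, h2, h3, by omega, z, hz.1, ?_⟩
    have : K B S2 v ⊆ K B S2 z := by
      intro y hy
      rw [mem_K] at *
      exact ⟨hy.1, hz.2.symm.trans hy.2⟩
    exact h4.trans (Finset.card_le_card this)
  · intro S T h h'
    exact h'.trans (Finset.card_le_card (K_mono h u))
  · rintro S T h ⟨v, hv, h'⟩
    exact ⟨v, hv, h'.trans (Finset.card_le_card (K_mono h v))⟩

/-- Last exit decomposition. -/
theorem last_exit {S : Finset (Sym2 W)} {C : W → Prop} {y x : W} (h : R S y x) (hx : ¬ C x) :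
    (¬ C y ∧ ∃ T ⊆ S, (∀ a b, s(a, b) ∈ T → ¬ C a) ∧ R T y x) ∨
    (∃ a b, ∃ T ⊆ S, C a ∧ ¬ C b ∧ s(a, b) ∈ S ∧ (∀ a b, s(a, b) ∈ T → ¬ C a) ∧ R T b x) := by
  induction h using Relation.ReflTransGen.head_induction_on with
  | refl => exact Or.inl ⟨hx, ∅, by simp, by simp, R.refl _⟩
  | @head a c h1 h2 ih =>
    rcases ih with ⟨h3, T, h4, h5, h6⟩ | h
    · by_cases ha : C a
      · exact Or.inr ⟨a, c, T, h4, ha, h3, h1, h5, h6⟩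
      · refine Or.inl ⟨ha, insert s(a, c) T, ?_, ?_, ?_⟩
        · intro e he
          rw [Finset.mem_insert] at he
          rcases he with rfl | he
          · exact h1
          · exact h4 he
        · intro a' b' h'
          rw [Finset.mem_insert, Sym2.eq_iff] at h'
          rcases h' with (⟨rfl, rfl⟩ | ⟨rfl, rfl⟩) | h'
          · exact ha
          · exact h3
          · exact h5 _ _ h'
        · exact R.trans (R.edge (Finset.mem_insert_self _ _)) (h6.mono (Finset.subset_insert _ _))
    · exact Or.inr h

/-- two-point function in the finite volume `B` -/
noncomputable def tau (B : Finset W) (p : Sym2 W → ℝ) (x y : W) : ℝ :=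
  Pr B.sym2 p (fun S => R S x y)

theorem Inc_R (x y : W) : Inc (fun S : Finset (Sym2 W) => R S x y) := fun _ _ h h' => h'.mono h

theorem mono_of_Inc {ι : Type*} {A : Finset ι → Prop} (h : Inc A) :
    Monotone (fun S => ind (A S)) := fun S T hST => ind_mono (h S T hST)

theorem tau_nonneg (B : Finset W) {p : Sym2 W → ℝ} (hp : PP p) (x y : W) : 0 ≤ tau B p x y :=
  Pr_nonneg hp _

theorem tau_le_one (B : Finset W) {p : Sym2 W → ℝ} (hp : PP p) (x y : W) : tau B p x y ≤ 1 :=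
  Pr_le_one hp _

theorem tau_mono {B B' : Finset W} (h : B ⊆ B') {p : Sym2 W → ℝ} (hp : PP p) (x y : W) :
    tau B p x y ≤ tau B' p x y :=
  Ex_mono_set (Finset.sym2_mono h) hp (mono_of_Inc (Inc_R x y))

theorem Pr_edge {E : Finset (Sym2 W)} {e : Sym2 W} (he : e ∈ E) (p : Sym2 W → ℝ) :
    Pr E p (fun S => e ∈ S) = p e := by
  have h := Pr_disjoint (E := E) (F := {e}) (by simpa using he) p
  simp only [Finset.prod_singleton, Finset.disjoint_singleton_right] at h
  have h2 : Pr E p (fun S => e ∈ S) + Pr E p (fun S => e ∉ S) = 1 := by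
    unfold Pr
    rw [← Ex_add]
    rw [← Ex_const E p 1]
    apply Ex_congr
    intro S _
    by_cases h : e ∈ S <;> simp [ind, h]
  linarith

/-- The Simon--Lieb inequality. -/
theorem simon_lieb {L Ω : Finset W} (hL : L ⊆ Ω) {p : Sym2 W → ℝ} (hp : PP p) {o x : W}
    (ho : o ∈ L) (hx : x ∈ Ω) :
    tau Ω p o x ≤ tau L p o x +
      ∑ a ∈ L, ∑ b ∈ Ω \ L, tau L p o a * p s(a, b) * tau Ω p b x := by
  set Ev : W → W → Finset (Sym2 W) → Prop := fun a b =>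
    DO (DO (fun S => R (S ∩ L.sym2) o a) (fun S => s(a, b) ∈ S)) (fun S => R S b x) with hEv
  have key : ∀ S, S ⊆ Ω.sym2 → R S o x → R (S ∩ L.sym2) o x ∨
      ∃ k ∈ L ×ˢ (Ω \ L), Ev k.1 k.2 S := by
    intro S hS hR
    by_cases hC : R (S ∩ L.sym2) o x
    · exact Or.inl hC
    right
    rcases last_exit (C := fun z => R (S ∩ L.sym2) o z) hR hC with ⟨h, -⟩ | h
    · exact absurd (R.refl _) h
    · obtain ⟨a, b, T, hT, ha, hb, hab, hT2, hbx⟩ := h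
      have haL : a ∈ L := R.mem Finset.inter_subset_right ha ho
      have hbΩ : b ∈ Ω := (Finset.mk_mem_sym2_iff.1 (hS hab)).2
      have hbL : b ∉ L := by
        intro hbL
        exact hb (ha.trans (R.edge (Finset.mem_inter.2 ⟨hab, Finset.mk_mem_sym2_iff.2 ⟨haL, hbL⟩⟩)))
      refine ⟨(a, b), by simp [haL, hbΩ, hbL], ?_⟩
      set C1 := cl (S ∩ L.sym2) o with hC1
      have hC1L : C1 ⊆ L.sym2 := (cl_sub _ _).trans Finset.inter_subset_right
      have hC1S : C1 ⊆ S := (cl_sub _ _).trans Finset.inter_subset_left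
      refine ⟨insert s(a, b) C1, T, ?_, hT, ?_, ?_, hbx⟩
      · exact Finset.insert_subset hab hC1S
      · rw [Finset.disjoint_insert_left]
        refine ⟨fun h => hT2 _ _ h ha, ?_⟩
        rw [Finset.disjoint_left]
        intro e
        induction e using Sym2.ind with
        | _ a' b' => intro h1 h2; exact hT2 _ _ h2 (cl_mem_R h1)
      · refine ⟨C1, {s(a, b)}, Finset.subset_insert _ _, by simp, ?_, ?_, by simp⟩
        · rw [Finset.disjoint_singleton_right]
          intro h
          exact hbL (Finset.mk_mem_sym2_iff.1 (hC1L h)).2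
        · change R (C1 ∩ L.sym2) o a
          rw [Finset.inter_eq_left.2 hC1L]
          exact R_cl ha
  have marg : ∀ z, Pr Ω.sym2 p (fun S => R (S ∩ L.sym2) o z) = tau L p o z := fun z =>
    Ex_marginal (Finset.sym2_mono hL) p (fun S => ind (R S o z))
  calc tau Ω p o x ≤ Pr Ω.sym2 p (fun S => R (S ∩ L.sym2) o x ∨
        ∃ k ∈ L ×ˢ (Ω \ L), Ev k.1 k.2 S) := Pr_mono hp key
    _ ≤ Pr Ω.sym2 p (fun S => R (S ∩ L.sym2) o x) +
        Pr Ω.sym2 p (fun S => ∃ k ∈ L ×ˢ (Ω \ L), Ev k.1 k.2 S) := Pr_union_le hp _ _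
    _ ≤ tau L p o x + ∑ k ∈ L ×ˢ (Ω \ L), Pr Ω.sym2 p (Ev k.1 k.2) := by
        rw [marg]
        have := Pr_exists_le (E := Ω.sym2) hp (L ×ˢ (Ω \ L)) (fun k => Ev k.1 k.2)
        linarith
    _ ≤ _ := by
        rw [Finset.sum_product]
        gcongr with a ha b hb
        have hab : s(a, b) ∈ Ω.sym2 := by
          rw [Finset.mk_mem_sym2_iff]
          exact ⟨hL ha, (Finset.mem_sdiff.1 hb).1⟩
        have i1 : Inc (fun S : Finset (Sym2 W) => R (S ∩ L.sym2) o a) :=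
          fun S T h h' => h'.mono (Finset.inter_subset_inter_right h)
        have i2 : Inc (fun S : Finset (Sym2 W) => s(a, b) ∈ S) := fun S T h h' => h h'
        have b1 := BK Ω.sym2 hp (Inc_DO (fun S => R (S ∩ L.sym2) o a) (fun S => s(a, b) ∈ S))
          (Inc_R b x)
        have b2 := BK Ω.sym2 hp i1 i2
        rw [marg, Pr_edge hab] at b2
        exact b1.trans (mul_le_mul_of_nonneg_right b2 (Pr_nonneg hp _))

end Graph

section Merge
variable {W : Type*} [DecidableEq W]

theorem count_aux {k M m0 : ℕ} (hk : k ≤ M) :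
    k ≤ min k (3 * m0) + 3 * ((Finset.Icc m0 M).filter (fun m => 3 * m ≤ k)).card := by
  by_cases h : k ≤ 3 * m0
  · simp [h]
  have : Finset.Icc m0 (k / 3) ⊆ (Finset.Icc m0 M).filter (fun m => 3 * m ≤ k) := by
    intro m hm
    simp only [Finset.mem_filter, Finset.mem_Icc] at *
    omega
  have := Finset.card_le_card this
  rw [Nat.card_Icc] at this
  omega

theorem sum_ind_eq {α : Type*} (s : Finset α) (Q : α → Prop) [DecidablePred Q] :
    ∑ m ∈ s, ind (Q m) = ((s.filter Q).card : ℝ) := by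
  rw [Finset.card_filter]
  push_cast
  apply Finset.sum_congr rfl
  intro m _
  unfold ind
  split_ifs <;> simp

set_option maxHeartbeats 1000000 in
theorem Nlemma (B : Finset W) (hB : B.Nonempty) {p : Sym2 W → ℝ} (hp : PP p) :
    ∃ N : ℕ, (N : ℝ) ^ 2 ≤ 216 * ∑ u ∈ B, Ex B.sym2 p (fun S => ((K B S u).card : ℝ)) ∧
      ∀ u, Ex B.sym2 p (fun S => ((K B S u).card : ℝ)) ≤
        2 * Ex B.sym2 p (fun S => ((min (K B S u).card N : ℕ) : ℝ)) := by
  classical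
  set E := B.sym2 with hE
  have hcard : ∀ S u, (K B S u).card ≤ B.card := fun S u => by
    unfold K; exact Finset.card_filter_le _ _
  have hex : ∃ m, Pr E p (Big B m) ≤ 1 / 6 := by
    refine ⟨B.card + 1, ?_⟩
    have : Pr E p (Big B (B.card + 1)) ≤ Ex E p (fun _ => 0) := by
      apply Ex_mono hp
      intro S _
      rw [ind_false]
      rintro ⟨v, _, h⟩
      have := hcard S v
      omega
    rw [Ex_const] at this
    linarith
  have hone : ∀ m, m ≤ 1 → Pr E p (Big B m) = 1 := by
    intro m hm
    rw [← Ex_const E p 1]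
    apply Ex_congr
    intro S _
    obtain ⟨v, hv⟩ := hB
    apply ind_true
    refine ⟨v, hv, hm.trans (Finset.card_pos.2 ⟨v, mem_K.2 ⟨hv, R.refl _⟩⟩)⟩
  obtain ⟨m0, hm0, hmin⟩ : ∃ m0, Pr E p (Big B m0) ≤ 1 / 6 ∧
      ∀ m < m0, ¬ Pr E p (Big B m) ≤ 1 / 6 :=
    ⟨Nat.find hex, Nat.find_spec hex, fun m hm => Nat.find_min hex hm⟩
  have hm2 : 2 ≤ m0 := by
    by_contra h
    rw [hone m0 (by omega)] at hm0
    norm_num at hm0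
  refine ⟨3 * m0, ?_, ?_⟩
  · obtain ⟨s, rfl⟩ : ∃ s, m0 = s + 1 := ⟨m0 - 1, by omega⟩
    have hs := hmin s (by omega)
    push Not at hs
    have h1 : (s : ℝ) ^ 2 * Pr E p (Big B s) ≤
        ∑ u ∈ B, Ex E p (fun S => ((K B S u).card : ℝ)) := by
      rw [← Ex_sum, Pr, ← Ex_mul_left]
      apply Ex_mono hp
      intro S _
      by_cases hb : Big B s S
      · rw [ind_true hb, mul_one]
        obtain ⟨v, hv, hb⟩ := hb
        have : ∑ u ∈ K B S v, (s : ℝ) ≤ ∑ u ∈ B, ((K B S u).card : ℝ) := by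
          refine le_trans (Finset.sum_le_sum (g := fun u => ((K B S u).card : ℝ)) ?_)
            (Finset.sum_le_sum_of_subset_of_nonneg ?_ ?_)
          · intro u hu
            rw [mem_K] at hu
            norm_cast
            refine hb.trans (Finset.card_le_card ?_)
            intro z hz
            rw [mem_K] at *
            exact ⟨hz.1, hu.2.symm.trans hz.2⟩
          · intro u hu; exact (mem_K.1 hu).1
          · intros; positivity
        rw [Finset.sum_const, nsmul_eq_mul] at this
        refine le_trans ?_ this
        have : (s : ℝ) ≤ ((K B S v).card : ℝ) := by exact_mod_cast hb
        rw [sq]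
        exact mul_le_mul_of_nonneg_right this (Nat.cast_nonneg s)
      · rw [ind_false hb, mul_zero]
        exact Finset.sum_nonneg fun _ _ => Nat.cast_nonneg _
    have hs1 : (1 : ℝ) ≤ s := by
      have : 1 ≤ s := by omega
      exact_mod_cast this
    have h3 := mul_le_mul_of_nonneg_left hs.le (sq_nonneg (s : ℝ))
    have h4 : ((3 * (s + 1) : ℕ) : ℝ) ^ 2 ≤ 36 * (s : ℝ) ^ 2 := by
      push_cast
      nlinarith
    linarith
  · intro u
    set g : ℕ → ℝ := fun t => Pr E p (fun S => t ≤ (K B S u).card) with hg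
    have hg3 : ∀ m ∈ Finset.Icc m0 B.card, g (3 * m) ≤ g m * (1 / 6) := by
      intro m hm
      rw [Finset.mem_Icc] at hm
      refine (tight B E hp m (by omega) u).trans ?_
      refine mul_le_mul_of_nonneg_left (le_trans (Pr_mono hp ?_) hm0) (Pr_nonneg hp _)
      rintro S _ ⟨v, hv, h⟩
      exact ⟨v, hv, hm.1.trans h⟩
    have hA : Ex E p (fun S => ((K B S u).card : ℝ)) ≤
        Ex E p (fun S => ((min (K B S u).card (3 * m0) : ℕ) : ℝ)) +
        3 * ∑ m ∈ Finset.Icc m0 B.card, g (3 * m) := by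
      rw [hg]
      unfold Pr
      rw [← Ex_sum, ← Ex_mul_left, ← Ex_add]
      apply Ex_mono hp
      intro S _
      rw [sum_ind_eq]
      exact_mod_cast count_aux (hcard S u)
    have hB' : ∑ m ∈ Finset.Icc m0 B.card, g m ≤ Ex E p (fun S => ((K B S u).card : ℝ)) := by
      rw [hg]
      unfold Pr
      rw [← Ex_sum]
      apply Ex_mono hp
      intro S _
      rw [sum_ind_eq]
      have : (Finset.Icc m0 B.card).filter (fun m => m ≤ (K B S u).card) ⊆
          Finset.Icc 1 (K B S u).card := by
        intro m hm
        simp only [Finset.mem_filter, Finset.mem_Icc] at *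
        omega
      have := Finset.card_le_card this
      rw [Nat.card_Icc] at this
      exact_mod_cast this
    have hC : ∑ m ∈ Finset.Icc m0 B.card, g (3 * m) ≤
        (∑ m ∈ Finset.Icc m0 B.card, g m) * (1 / 6) := by
      rw [Finset.sum_mul]
      exact Finset.sum_le_sum hg3
    linarith

theorem exp_aux {x : ℝ} (hx : 0 ≤ x) : x / (1 + x) ≤ 1 - Real.exp (-x) := by
  have h1 : 1 + x ≤ Real.exp x := by linarith [Real.add_one_le_exp x]
  rw [Real.exp_neg, div_le_iff₀ (by linarith)]
  have h2 : (Real.exp x)⁻¹ ≤ (1 + x)⁻¹ := inv_anti₀ (by linarith) h1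
  have h3 : (1 + x)⁻¹ * (1 + x) = 1 := inv_mul_cancel₀ (by linarith)
  nlinarith [mul_le_mul_of_nonneg_right h2 (by linarith : 0 ≤ 1 + x)]

theorem merge {B1 B2 L : Finset W} (hd : Disjoint B1 B2) (h1 : B1 ⊆ L) (h2 : B2 ⊆ L)
    {p : Sym2 W → ℝ} (hp : PP p) {q : ℝ} (hq : 0 ≤ q)
    (hpq : ∀ a ∈ B1, ∀ b ∈ B2, 1 - p s(a, b) ≤ Real.exp (-q)) (N : ℕ) {u v : W}
    (hu : u ∈ B1) (hv : v ∈ B2) :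
    q / (1 + q * (N : ℝ) ^ 2) *
      (Ex B1.sym2 p (fun S => ((min (K B1 S u).card N : ℕ) : ℝ)) *
      Ex B2.sym2 p (fun S => ((min (K B2 S v).card N : ℕ) : ℝ))) ≤ tau L p u v := by
  set F : Finset (Sym2 W) := (B1 ×ˢ B2).image (fun k => s(k.1, k.2)) with hF
  have hmemF : ∀ a b, s(a, b) ∈ F → (a ∈ B1 ∧ b ∈ B2) ∨ (a ∈ B2 ∧ b ∈ B1) := by
    intro a b h
    rw [hF, Finset.mem_image] at h
    obtain ⟨⟨x, y⟩, h, h'⟩ := h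
    rw [Finset.mem_product] at h
    rw [Sym2.eq_iff] at h'
    rcases h' with ⟨rfl, rfl⟩ | ⟨rfl, rfl⟩
    · exact Or.inl h
    · exact Or.inr ⟨h.2, h.1⟩
  have hdl := Finset.disjoint_left.1 hd
  have hd1 : Disjoint B2.sym2 F := by
    rw [Finset.disjoint_left]
    intro e
    induction e using Sym2.ind with
    | _ a b =>
      intro h h'
      rw [Finset.mk_mem_sym2_iff] at h
      rcases hmemF _ _ h' with h' | h'
      · exact hdl h'.1 h.1
      · exact hdl h'.2 h.2
  have hd2 : Disjoint B1.sym2 (B2.sym2 ∪ F) := by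
    rw [Finset.disjoint_left]
    intro e
    induction e using Sym2.ind with
    | _ a b =>
      intro h h'
      rw [Finset.mk_mem_sym2_iff] at h
      rw [Finset.mem_union, Finset.mk_mem_sym2_iff] at h'
      rcases h' with h' | h'
      · exact hdl h.1 h'.1
      rcases hmemF _ _ h' with h' | h'
      · exact hdl h.2 h'.2
      · exact hdl h.1 h'.1
  have hsub : B1.sym2 ∪ (B2.sym2 ∪ F) ⊆ L.sym2 := by
    refine Finset.union_subset (Finset.sym2_mono h1)
      (Finset.union_subset (Finset.sym2_mono h2) ?_)
    intro e
    induction e using Sym2.ind with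
    | _ a b =>
      intro h'
      rw [Finset.mk_mem_sym2_iff]
      rcases hmemF _ _ h' with h' | h'
      · exact ⟨h1 h'.1, h2 h'.2⟩
      · exact ⟨h2 h'.1, h1 h'.2⟩
  have hmono := Ex_mono_set hsub hp (mono_of_Inc (Inc_R u v))
  refine le_trans ?_ hmono
  rw [Ex_union hd2, ← Ex_mul_right, ← Ex_mul_left]
  apply Ex_mono hp
  intro S hS
  rw [Ex_union hd1, ← Ex_mul_left, ← Ex_mul_left]
  apply Ex_mono hp
  intro T hT
  set k := (K B1 S u).card with hk
  set l := (K B2 T v).card with hl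
  set G : Finset (Sym2 W) := (K B1 S u ×ˢ K B2 T v).image (fun k => s(k.1, k.2)) with hG
  have hGF : G ⊆ F := by
    apply Finset.image_subset_image
    apply Finset.product_subset_product
    · intro z hz; exact (mem_K.1 hz).1
    · intro z hz; exact (mem_K.1 hz).1
  have hGcard : G.card = k * l := by
    rw [hG, Finset.card_image_of_injOn, Finset.card_product]
    rintro ⟨a, b⟩ h ⟨a', b'⟩ h' he
    simp only [Finset.coe_product, Set.mem_prod, Finset.mem_coe, mem_K] at h h'
    simp only [Sym2.eq_iff] at he
    rcases he with ⟨rfl, rfl⟩ | ⟨rfl, rfl⟩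
    · rfl
    · exact absurd h'.2.1 (hdl h.1.1)
  have hstep : 1 - Pr F p (fun U => Disjoint U G) ≤
      Ex F p (fun U => ind (R (S ∪ (T ∪ U)) u v)) := by
    rw [← Ex_const F p 1, Pr, ← Ex_sub]
    apply Ex_mono hp
    intro U _
    by_cases hUG : Disjoint U G
    · rw [ind_true hUG]; simpa using ind_nonneg _
    · rw [ind_false hUG, sub_zero, ind_true]
      rw [Finset.not_disjoint_iff] at hUG
      obtain ⟨e, he, he'⟩ := hUG
      rw [hG, Finset.mem_image] at he'
      obtain ⟨⟨a, b⟩, h, rfl⟩ := he'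
      rw [Finset.mem_product, mem_K, mem_K] at h
      have ha : R (S ∪ (T ∪ U)) u a := h.1.2.mono Finset.subset_union_left
      have hb : R (S ∪ (T ∪ U)) v b :=
        h.2.2.mono (Finset.subset_union_left.trans Finset.subset_union_right)
      have hab : R (S ∪ (T ∪ U)) a b := R.edge (by simp [he])
      exact ha.trans (hab.trans hb.symm)
  refine le_trans ?_ hstep
  rw [Pr_disjoint hGF]
  have hprod : ∏ e ∈ G, (1 - p e) ≤ Real.exp (-q) ^ G.card := by
    rw [← Finset.prod_const]
    apply Finset.prod_le_prod
    · intro e he; linarith [(hp e).2]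
    · intro e he
      rw [hG, Finset.mem_image] at he
      obtain ⟨⟨a, b⟩, h, rfl⟩ := he
      rw [Finset.mem_product, mem_K, mem_K] at h
      exact hpq _ h.1.1 _ h.2.1
  rw [hGcard, ← Real.exp_nat_mul] at hprod
  have hk' : (min k N : ℕ) ≤ k := min_le_left _ _
  have hl' : (min l N : ℕ) ≤ l := min_le_left _ _
  have hkN : (min k N : ℕ) ≤ N := min_le_right _ _
  have hlN : (min l N : ℕ) ≤ N := min_le_right _ _
  generalize min k N = k' at *
  generalize min l N = l' at *
  have e1 : ((k' : ℝ) * l') ≤ (k : ℝ) * l := by exact_mod_cast Nat.mul_le_mul hk' hl'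
  have e2 : ((k' : ℝ) * l') ≤ (N : ℝ) ^ 2 := by
    rw [sq]; exact_mod_cast Nat.mul_le_mul hkN hlN
  have e3 : 0 ≤ (k' : ℝ) * l' := by positivity
  have e4 := exp_aux (mul_nonneg hq e3)
  have e5 : Real.exp (((k * l : ℕ) : ℝ) * -q) ≤ Real.exp (-(q * (k' * l'))) := by
    apply Real.exp_le_exp.2
    push_cast
    nlinarith
  have e6 : q / (1 + q * (N : ℝ) ^ 2) * (k' * l') ≤ q * (k' * l') / (1 + q * (k' * l')) := by
    rw [div_mul_eq_mul_div]
    apply div_le_div_of_nonneg_left (by positivity) (by positivity)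
    nlinarith
  linarith

end Merge

section DCT
variable {W : Type*} [DecidableEq W]

/-- connected to the complement of `L` in `Ω` -/
def Bd (L Ω : Finset W) (S : Finset (Sym2 W)) (x : W) : Prop := ∃ y ∈ Ω \ L, R S x y

open Classical in
/-- set of points not connected to the boundary -/
noncomputable def NB (L Ω : Finset W) (S : Finset (Sym2 W)) : Finset W :=
  L.filter (fun x => ¬ Bd L Ω S x)

theorem mem_NB {L Ω : Finset W} {S : Finset (Sym2 W)} {x : W} :
    x ∈ NB L Ω S ↔ x ∈ L ∧ ¬ Bd L Ω S x := by simp [NB]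

theorem NB_iff {L Ω : Finset W} {S : Finset (Sym2 W)} (hS : S ⊆ Ω.sym2) (T : Finset W) :
    NB L Ω S = T ↔ NB L Ω (S \ T.sym2) = T := by
  constructor
  · intro h
    ext x
    rw [mem_NB]
    constructor
    · rintro ⟨hx, hb⟩
      by_contra hxT
      apply hb
      have : Bd L Ω S x := by
        by_contra h'
        exact hxT (h ▸ mem_NB.2 ⟨hx, h'⟩)
      obtain ⟨y, hy, hR⟩ := this
      refine ⟨y, hy, R_restrict hR ?_⟩
      intro a b ha hab
      rw [Finset.mem_sdiff]
      refine ⟨hab, fun h' => ?_⟩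
      have haT := (Finset.mk_mem_sym2_iff.1 h').1
      rw [← h, mem_NB] at haT
      exact haT.2 ⟨y, hy, ha.symm.trans hR⟩
    · intro hx
      rw [← h, mem_NB] at hx
      refine ⟨hx.1, fun ⟨y, hy, hR⟩ => hx.2 ⟨y, hy, hR.mono Finset.sdiff_subset⟩⟩
  · intro h
    ext x
    rw [mem_NB]
    constructor
    · rintro ⟨hx, hb⟩
      rw [← h, mem_NB]
      exact ⟨hx, fun ⟨y, hy, hR⟩ => hb ⟨y, hy, hR.mono Finset.sdiff_subset⟩⟩
    · intro hx
      have hTL : ∀ z ∈ T, z ∈ L := fun z hz => by rw [← h, mem_NB] at hz; exact hz.1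
      refine ⟨hTL x hx, ?_⟩
      rintro ⟨y, hy, hR⟩
      have : y ∈ T := by
        clear hy
        induction hR with
        | refl => exact hx
        | @tail a b _ hab ih =>
          by_contra hbT
          have hab' : s(a, b) ∈ S \ T.sym2 := by
            rw [Finset.mem_sdiff, Finset.mk_mem_sym2_iff]
            exact ⟨hab, fun h => hbT h.2⟩
          have ha := ih
          rw [← h, mem_NB] at ha
          apply ha.2
          have hbΩ := (Finset.mk_mem_sym2_iff.1 (hS hab)).2
          by_cases hbL : b ∈ L
          · have : Bd L Ω (S \ T.sym2) b := by
              by_contra h'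
              exact hbT (h ▸ mem_NB.2 ⟨hbL, h'⟩)
            obtain ⟨z, hz, hR⟩ := this
            exact ⟨z, hz, (R.edge hab').trans hR⟩
          · exact ⟨b, Finset.mem_sdiff.2 ⟨hbΩ, hbL⟩, R.edge hab'⟩
      exact (Finset.mem_sdiff.1 hy).2 (hTL y this)

theorem Bd_mono {L Ω : Finset W} {S S' : Finset (Sym2 W)} (h : S ⊆ S') {x : W}
    (hb : Bd L Ω S x) : Bd L Ω S' x := by
  obtain ⟨y, hy, hR⟩ := hb
  exact ⟨y, hy, hR.mono h⟩

theorem dct_pointwise {L Ω : Finset W} (hL : L ⊆ Ω) {S : Finset (Sym2 W)} (hS : S ⊆ Ω.sym2)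
    {J : Sym2 W → ℝ} (hJ : ∀ e, 0 ≤ J e) {o : W} :
    ∑ T ∈ L.powerset.filter (fun T => o ∈ T), ∑ x ∈ T, ∑ y ∈ Ω \ T, J s(x, y) *
      (ind (R (S ∩ T.sym2) o x) * ind (NB L Ω S = T)) ≤
    ∑ e ∈ Ω.sym2, J e * (if e ∈ S then 0 else ind (Bd L Ω (insert e S) o) - ind (Bd L Ω S o)) := by
  have hg : ∀ e, 0 ≤ J e *
      (if e ∈ S then 0 else ind (Bd L Ω (insert e S) o) - ind (Bd L Ω S o)) := by
    intro e
    apply mul_nonneg (hJ e)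
    split_ifs
    · exact le_rfl
    · rw [sub_nonneg]
      exact ind_mono (Bd_mono (Finset.subset_insert _ _))
  set T0 := NB L Ω S with hT0
  by_cases ho : o ∈ T0
  · have hT0L : T0 ⊆ L := fun x hx => (mem_NB.1 hx).1
    rw [Finset.sum_eq_single_of_mem T0 (by simp [ho, hT0L])]
    · rw [← Finset.sum_product' T0 (Ω \ T0) (fun x y => J s(x, y) *
        (ind (R (S ∩ T0.sym2) o x) * ind (T0 = T0)))]
      have hstep : ∀ k ∈ T0 ×ˢ (Ω \ T0), J s(k.1, k.2) *
          (ind (R (S ∩ T0.sym2) o k.1) * ind (T0 = T0)) ≤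
          (fun e => J e * (if e ∈ S then 0 else ind (Bd L Ω (insert e S) o) - ind (Bd L Ω S o)))
            s(k.1, k.2) := by
        rintro ⟨x, y⟩ hk
        rw [Finset.mem_product, Finset.mem_sdiff] at hk
        obtain ⟨hx, hyΩ, hyT⟩ := hk
        by_cases hR : R (S ∩ T0.sym2) o x
        · have hyb : Bd L Ω S y := by
            by_cases hyL : y ∈ L
            · by_contra h'
              exact hyT (mem_NB.2 ⟨hyL, h'⟩)
            · exact ⟨y, Finset.mem_sdiff.2 ⟨hyΩ, hyL⟩, R.refl _⟩
          have hnS : s(x, y) ∉ S := by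
            intro h
            obtain ⟨z, hz, hyz⟩ := hyb
            exact (mem_NB.1 hx).2 ⟨z, hz, (R.edge h).trans hyz⟩
          have hins : Bd L Ω (insert s(x, y) S) o := by
            obtain ⟨z, hz, hyz⟩ := hyb
            refine ⟨z, hz, (hR.mono (Finset.inter_subset_left.trans
              (Finset.subset_insert _ _))).trans ((R.edge (Finset.mem_insert_self _ _)).trans
              (hyz.mono (Finset.subset_insert _ _)))⟩
          simp only [hnS, if_false]
          rw [ind_true hR, ind_true hins, ind_false (mem_NB.1 ho).2, ind_true trivial]
          simp
        · rw [ind_false hR, zero_mul, mul_zero]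
          exact hg _
      refine (Finset.sum_le_sum hstep).trans ?_
      refine (Finset.sum_image (s := T0 ×ˢ (Ω \ T0)) (g := fun k : W × W => s(k.1, k.2))
        (f := fun e => J e * (if e ∈ S then 0 else ind (Bd L Ω (insert e S) o) -
          ind (Bd L Ω S o))) ?_).symm.le.trans ?_
      rotate_left
      · apply Finset.sum_le_sum_of_subset_of_nonneg
        · intro e he
          rw [Finset.mem_image] at he
          obtain ⟨⟨x, y⟩, hk, rfl⟩ := he
          rw [Finset.mem_product, Finset.mem_sdiff] at hk
          rw [Finset.mk_mem_sym2_iff]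
          exact ⟨hL (hT0L hk.1), hk.2.1⟩
        · intro e _ _; exact hg e
      · rintro ⟨x, y⟩ hk ⟨x', y'⟩ hk' he
        simp only [Finset.coe_product, Set.mem_prod, Finset.mem_coe, Finset.mem_sdiff] at hk hk'
        simp only [Sym2.eq_iff] at he
        rcases he with ⟨rfl, rfl⟩ | ⟨rfl, rfl⟩
        · rfl
        · exact absurd hk.1 hk'.2.2
    · intro T _ hne
      apply Finset.sum_eq_zero
      intro x _
      apply Finset.sum_eq_zero
      intro y _
      rw [ind_false (Q := T0 = T) (fun h => hne h.symm)]
      simp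
  · refine le_trans (le_of_eq ?_) (Finset.sum_nonneg fun e _ => hg e)
    apply Finset.sum_eq_zero
    intro T hT
    apply Finset.sum_eq_zero
    intro x _
    apply Finset.sum_eq_zero
    intro y _
    rw [Finset.mem_filter] at hT
    rw [ind_false (Q := T0 = T) (fun h => ho (h ▸ hT.2))]
    simp

theorem PP_exp {J : Sym2 W → ℝ} (hJ : ∀ e, 0 ≤ J e) {b : ℝ} (hb : 0 ≤ b) :
    PP (fun e => 1 - Real.exp (-b * J e)) := by
  intro e
  have : Real.exp (-b * J e) ≤ 1 := Real.exp_le_one_iff.2 (by nlinarith [mul_nonneg hb (hJ e)])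
  have := Real.exp_pos (-b * J e)
  constructor <;> linarith

theorem dct_deriv {L Ω : Finset W} (hL : L ⊆ Ω) {J : Sym2 W → ℝ} (hJ : ∀ e, 0 ≤ J e) {o : W}
    (ho : o ∈ L) {b κ : ℝ} (hb : 0 ≤ b)
    (hκ : ∀ T, T ⊆ L → o ∈ T → κ ≤ ∑ x ∈ T, ∑ y ∈ Ω \ T, J s(x, y) *
      tau T (fun e => 1 - Real.exp (-b * J e)) o x) :
    ∃ D, HasDerivAt (fun b => Pr Ω.sym2 (fun e => 1 - Real.exp (-b * J e))
      (fun S => Bd L Ω S o)) D b ∧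
      κ * (1 - Pr Ω.sym2 (fun e => 1 - Real.exp (-b * J e)) (fun S => Bd L Ω S o)) ≤ D := by
  refine ⟨_, Ex_hasDeriv Ω.sym2 J (fun S => ind (Bd L Ω S o)) b, ?_⟩
  have hp := PP_exp hJ hb
  set p : Sym2 W → ℝ := fun e => 1 - Real.exp (-b * J e) with hpdef
  have h1 : ∀ e ∈ Ω.sym2, J e * Ex Ω.sym2 p (fun S => if e ∈ S then 0 else
      ind (Bd L Ω (insert e S) o) - ind (Bd L Ω S o)) = Ex Ω.sym2 p (fun S => J e *
      (if e ∈ S then 0 else ind (Bd L Ω (insert e S) o) - ind (Bd L Ω S o))) := by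
    intro e _
    rw [Ex_mul_left]
  rw [Finset.sum_congr rfl h1, ← Ex_sum]
  refine le_trans ?_ (Ex_mono hp (fun S hS => dct_pointwise hL hS hJ (o := o)))
  have h2 : ∀ T ∈ L.powerset.filter (fun T => o ∈ T), ∀ x,
      Ex Ω.sym2 p (fun S => ind (R (S ∩ T.sym2) o x) * ind (NB L Ω S = T)) =
      tau T p o x * Pr Ω.sym2 p (fun S => NB L Ω S = T) := by
    intro T hT x
    rw [Finset.mem_filter, Finset.mem_powerset] at hT
    have hTΩ : T.sym2 ⊆ Ω.sym2 := Finset.sym2_mono (hT.1.trans hL)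
    have hinter : ∀ S, S ⊆ Ω.sym2 → S ∩ (Ω.sym2 \ T.sym2) = S \ T.sym2 := by
      intro S hS
      ext e
      simp only [Finset.mem_inter, Finset.mem_sdiff]
      exact ⟨fun h => ⟨h.1, h.2.2⟩, fun h => ⟨h.1, hS h.1, h.2⟩⟩
    have e1 := Ex_indep hTΩ (Finset.sdiff_subset (s := Ω.sym2) (t := T.sym2))
      Finset.disjoint_sdiff p (fun S => ind (R S o x)) (fun S => ind (NB L Ω S = T))
    have e2 := Ex_marginal (Finset.sdiff_subset (s := Ω.sym2) (t := T.sym2)) p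
      (fun S => ind (NB L Ω S = T))
    have e3 : ∀ S, S ⊆ Ω.sym2 → ind (NB L Ω (S ∩ (Ω.sym2 \ T.sym2)) = T) =
        ind (NB L Ω S = T) := by
      intro S hS
      rw [hinter S hS]
      congr 1
      exact propext (NB_iff hS T).symm
    rw [Ex_congr (g := fun S => ind (R (S ∩ T.sym2) o x) * ind (NB L Ω S = T))
      (fun S hS => by rw [e3 S hS])] at e1
    rw [Ex_congr (g := fun S => ind (NB L Ω S = T)) e3] at e2
    rw [e1, ← e2]
    rfl
  have h3 : Ex Ω.sym2 p (fun S => ∑ T ∈ L.powerset.filter (fun T => o ∈ T), ∑ x ∈ T,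
      ∑ y ∈ Ω \ T, J s(x, y) * (ind (R (S ∩ T.sym2) o x) * ind (NB L Ω S = T))) =
      ∑ T ∈ L.powerset.filter (fun T => o ∈ T), (∑ x ∈ T,
      ∑ y ∈ Ω \ T, J s(x, y) * tau T p o x) * Pr Ω.sym2 p (fun S => NB L Ω S = T) := by
    rw [Ex_sum]
    apply Finset.sum_congr rfl
    intro T hT
    rw [Ex_sum, Finset.sum_mul]
    apply Finset.sum_congr rfl
    intro x _
    rw [Ex_sum, Finset.sum_mul]
    apply Finset.sum_congr rfl
    intro y _
    rw [Ex_mul_left, h2 T hT x]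
    ring
  rw [h3]
  have h4 : 1 - Pr Ω.sym2 p (fun S => Bd L Ω S o) =
      ∑ T ∈ L.powerset.filter (fun T => o ∈ T), Pr Ω.sym2 p (fun S => NB L Ω S = T) := by
    unfold Pr
    rw [← Ex_sum]
    rw [← Ex_const Ω.sym2 p 1, ← Ex_sub]
    apply Ex_congr
    intro S _
    by_cases hB : Bd L Ω S o
    · rw [ind_true hB, sub_self]
      symm
      apply Finset.sum_eq_zero
      intro T hT
      apply ind_false
      rintro rfl
      rw [Finset.mem_filter, mem_NB] at hT
      exact hT.2.2 hB
    · rw [ind_false hB, sub_zero]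
      rw [Finset.sum_eq_single_of_mem (NB L Ω S), ind_true rfl]
      · rw [Finset.mem_filter, Finset.mem_powerset]
        exact ⟨fun x hx => (mem_NB.1 hx).1, mem_NB.2 ⟨ho, hB⟩⟩
      · intro T _ hne
        exact ind_false (fun h => hne h.symm)
  rw [h4, Finset.mul_sum]
  apply Finset.sum_le_sum
  intro T hT
  rw [Finset.mem_filter, Finset.mem_powerset] at hT
  exact mul_le_mul_of_nonneg_right (hκ T hT.1 hT.2) (Pr_nonneg hp _)

theorem tau_mono_b (B : Finset W) {J : Sym2 W → ℝ} (hJ : ∀ e, 0 ≤ J e) {b b' : ℝ} (hb : 0 ≤ b)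
    (hbb : b ≤ b') (x y : W) :
    tau B (fun e => 1 - Real.exp (-b * J e)) x y ≤
      tau B (fun e => 1 - Real.exp (-b' * J e)) x y := by
  apply Ex_mono_p (PP_exp hJ hb) (PP_exp hJ (hb.trans hbb)) _ (mono_of_Inc (Inc_R x y))
  intro e
  have : Real.exp (-b' * J e) ≤ Real.exp (-b * J e) :=
    Real.exp_le_exp.2 (by nlinarith [mul_le_mul_of_nonneg_right hbb (hJ e)])
  linarith

/-- integrated Duminil-Copin--Tassion inequality -/
theorem dct {L Ω : Finset W} (hL : L ⊆ Ω) {J : Sym2 W → ℝ} (hJ : ∀ e, 0 ≤ J e) {o : W}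
    (ho : o ∈ L) {b0 b1 κ : ℝ} (hb : 0 ≤ b0) (hbb : b0 ≤ b1)
    (hκ : ∀ T, T ⊆ L → o ∈ T → κ ≤ ∑ x ∈ T, ∑ y ∈ Ω \ T, J s(x, y) *
      tau T (fun e => 1 - Real.exp (-b0 * J e)) o x) :
    1 - Real.exp (-(κ * (b1 - b0))) ≤ Pr Ω.sym2 (fun e => 1 - Real.exp (-b1 * J e))
      (fun S => Bd L Ω S o) := by
  set f : ℝ → ℝ := fun b => Pr Ω.sym2 (fun e => 1 - Real.exp (-b * J e))
      (fun S => Bd L Ω S o) with hf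
  have hd : ∀ b, b0 ≤ b → ∃ D, HasDerivAt f D b ∧ κ * (1 - f b) ≤ D := by
    intro b hb'
    apply dct_deriv hL hJ ho (hb.trans hb')
    intro T h1 h2
    refine (hκ T h1 h2).trans (Finset.sum_le_sum fun x _ => Finset.sum_le_sum fun y _ => ?_)
    exact mul_le_mul_of_nonneg_left (tau_mono_b T hJ hb hb' o x) (hJ _)
  choose! D hD1 hD2 using hd
  set h : ℝ → ℝ := fun b => (1 - f b) * Real.exp (κ * b) with hh
  have hder : ∀ b, b0 ≤ b → HasDerivAt h
      ((-(D b)) * Real.exp (κ * b) + (1 - f b) * (Real.exp (κ * b) * κ)) b := by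
    intro b hb'
    have e1 : HasDerivAt (fun b => 1 - f b) (-(D b)) b := (hD1 b hb').const_sub 1
    have e2 : HasDerivAt (fun b => Real.exp (κ * b)) (Real.exp (κ * b) * κ) b := by
      simpa using ((hasDerivAt_id b).const_mul κ).exp
    exact e1.mul e2
  have hanti : AntitoneOn h (Set.Icc b0 b1) := by
    apply antitoneOn_of_deriv_nonpos (convex_Icc _ _)
    · intro x hx
      exact (hder x hx.1).continuousAt.continuousWithinAt
    · intro x hx
      rw [interior_Icc] at hx
      exact (hder x hx.1.le).differentiableAt.differentiableWithinAt
    · intro x hx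
      rw [interior_Icc] at hx
      rw [(hder x hx.1.le).deriv]
      have := hD2 x hx.1.le
      have e := Real.exp_pos (κ * x)
      nlinarith
  have hfin := hanti (Set.left_mem_Icc.2 hbb) (Set.right_mem_Icc.2 hbb) hbb
  simp only [hh] at hfin
  have hf0 : 0 ≤ f b0 := Pr_nonneg (PP_exp hJ hb) _
  have e3 : (1 - f b1) * Real.exp (κ * b1) ≤ Real.exp (κ * b0) := by
    refine hfin.trans ?_
    nlinarith [Real.exp_pos (κ * b0)]
  have e4 : 1 - f b1 ≤ Real.exp (κ * b0) / Real.exp (κ * b1) := by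
    rw [le_div_iff₀ (Real.exp_pos _)]; exact e3
  rw [← Real.exp_sub] at e4
  have e5 : κ * b0 - κ * b1 = -(κ * (b1 - b0)) := by ring
  rw [e5] at e4
  linarith

end DCT

section Transl
variable {W : Type*} [DecidableEq W]

theorem R_map (φ : W ↪ W) (S : Finset (Sym2 W)) (x y : W) :
    R (S.map φ.sym2Map) (φ x) (φ y) ↔ R S x y := by
  constructor
  · intro h
    have : ∀ z, R (S.map φ.sym2Map) (φ x) z → ∃ w, z = φ w ∧ R S x w := by
      intro z hz
      induction hz with
      | refl => exact ⟨x, rfl, R.refl _⟩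
      | @tail b c _ h ih =>
        obtain ⟨w, rfl, hw⟩ := ih
        rw [Finset.mem_map] at h
        obtain ⟨e, he, he'⟩ := h
        induction e using Sym2.ind with
        | _ a' b' =>
          rw [Function.Embedding.sym2Map_apply, Sym2.map_mk, Sym2.eq_iff] at he'
          rcases he' with ⟨h1, h2⟩ | ⟨h1, h2⟩
          · rw [φ.injective h1] at he
            exact ⟨b', h2.symm, hw.trans (R.edge he)⟩
          · rw [φ.injective h2, Sym2.eq_swap] at he
            exact ⟨a', h1.symm, hw.trans (R.edge he)⟩
    obtain ⟨w, h1, h2⟩ := this _ h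
    rwa [φ.injective h1]
  · intro h
    induction h with
    | refl => exact R.refl _
    | @tail b c _ h ih =>
      refine ih.trans (R.edge ?_)
      rw [Finset.mem_map]
      exact ⟨s(b, c), h, rfl⟩

theorem tau_map (φ : W ↪ W) (B : Finset W) (p : Sym2 W → ℝ)
    (hp : ∀ a b, p s(φ a, φ b) = p s(a, b)) (x y : W) :
    tau (B.map φ) p (φ x) (φ y) = tau B p x y := by
  unfold tau Pr
  rw [Finset.sym2_map, Ex_map]
  have : (fun e => p (φ.sym2Map e)) = p := by
    funext e
    induction e using Sym2.ind with
    | _ a b => exact hp a b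
  rw [this]
  apply Ex_congr
  intro S _
  simp only [R_map]

theorem tau_zero {B : Finset W} {p : Sym2 W → ℝ} {x y : W} (hx : x ∈ B) (hy : y ∉ B) :
    tau B p x y = 0 := by
  rw [← Ex_const B.sym2 p 0]
  apply Ex_congr
  intro S hS
  exact ind_false (fun h => hy (h.mem hS hx))

theorem tau_symm (B : Finset W) (p : Sym2 W → ℝ) (x y : W) : tau B p x y = tau B p y x := by
  apply Ex_congr
  intro S _
  congr 1
  exact propext ⟨R.symm, R.symm⟩

theorem tau_self (B : Finset W) (p : Sym2 W → ℝ) (x : W) : tau B p x x = 1 := by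
  rw [← Ex_const B.sym2 p 1]
  apply Ex_congr
  intro S _
  exact ind_true (R.refl _)

end Transl

section Lattice
variable {d : ℕ}

/-- symmetrized kernel as a function of edges -/
noncomputable def Je (J : V d → V d → ℝ) (e : Sym2 (V d)) : ℝ :=
  Sym2.lift ⟨fun x y => (J x y + J y x) / 2, fun x y => by dsimp only; rw [add_comm]⟩ e

/-- real-valued edge probabilities -/
noncomputable def pp (J : V d → V d → ℝ) (β : ℝ) (e : Sym2 (V d)) : ℝ :=
  1 - Real.exp (-β * Je J e)

theorem edgeProb_eq (J : V d → V d → ℝ) (β : ℝ) (e : Sym2 (V d)) :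
    edgeProb J β e = ENNReal.ofReal (pp J β e) := rfl

/-- box `[-r,r]^d` -/
noncomputable def bx (d r : ℕ) : Finset (V d) := Fintype.piFinset (fun _ => Finset.Icc (-(r : ℤ)) r)

theorem mem_bx {r : ℕ} {x : V d} : x ∈ bx d r ↔ normInf x ≤ r := by
  simp only [bx, Fintype.mem_piFinset, Finset.mem_Icc, normInf, Finset.sup_le_iff, Finset.mem_univ,
    true_imp_iff]
  constructor
  · intro h i; have := h i; omega
  · intro h i; have := h i; omega

theorem bx_mono {r s : ℕ} (h : r ≤ s) : bx d r ⊆ bx d s := by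
  intro x hx
  rw [mem_bx] at *
  omega

theorem exists_bx (B : Finset (V d)) : ∃ r, B ⊆ bx d r := by
  refine ⟨B.sup normInf, fun x hx => ?_⟩
  rw [mem_bx]
  exact Finset.le_sup (f := normInf) hx

/-- open edges in a finite set -/
def Phi (E : Finset (Sym2 (V d))) (ω : Config d) : Finset (Sym2 (V d)) :=
  E.filter (fun e => ω e = true)

theorem cyl_meas (s : Finset (Sym2 (V d))) (f : Sym2 (V d) → Bool) :
    MeasurableSet {ω : Config d | ∀ e ∈ s, ω e = f e} := by
  have : {ω : Config d | ∀ e ∈ s, ω e = f e} =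
      ⋂ e ∈ s, (fun ω : Config d => ω e) ⁻¹' {f e} := by
    ext ω; simp
  rw [this]
  apply Finset.measurableSet_biInter
  intro e _
  exact (measurable_pi_apply e) (measurableSet_singleton _)

theorem Phi_eq_iff {E S : Finset (Sym2 (V d))} (hS : S ⊆ E) (ω : Config d) :
    Phi E ω = S ↔ ∀ e ∈ E, ω e = decide (e ∈ S) := by
  constructor
  · rintro rfl e he
    cases h : ω e <;> simp [Phi, he, h]
  · intro h
    ext e
    simp only [Phi, Finset.mem_filter]
    constructor
    · rintro ⟨h1, h2⟩
      rw [h e h1] at h2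
      simpa using h2
    · intro he
      exact ⟨hS he, by rw [h e (hS he)]; simpa using he⟩

theorem Phi_set (E : Finset (Sym2 (V d))) (Q : Finset (Sym2 (V d)) → Prop) [DecidablePred Q] :
    {ω : Config d | Q (Phi E ω)} =
      ⋃ S ∈ E.powerset.filter Q, {ω : Config d | ∀ e ∈ E, ω e = decide (e ∈ S)} := by
  ext ω
  simp only [Set.mem_ofPred_eq, Set.mem_iUnion, Finset.mem_filter, Finset.mem_powerset, exists_prop]
  constructor
  · intro h
    have : Phi E ω ⊆ E := Finset.filter_subset _ _
    exact ⟨Phi E ω, ⟨this, h⟩, (Phi_eq_iff this ω).1 rfl⟩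
  · rintro ⟨S, ⟨h1, h2⟩, h3⟩
    rwa [(Phi_eq_iff h1 ω).2 h3]

theorem Phi_meas (E : Finset (Sym2 (V d))) (Q : Finset (Sym2 (V d)) → Prop) :
    MeasurableSet {ω : Config d | Q (Phi E ω)} := by
  classical
  rw [Phi_set]
  apply Finset.measurableSet_biUnion
  intro S _
  exact cyl_meas _ _

theorem Phi_measure {J : V d → V d → ℝ} {P : ℝ → Measure (Config d)} (hP : IsLRP J P) {β : ℝ}
    (hp : PP (pp J β)) (E : Finset (Sym2 (V d))) (Q : Finset (Sym2 (V d)) → Prop) :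
    P β {ω | Q (Phi E ω)} = ENNReal.ofReal (Pr E (pp J β) Q) := by
  classical
  rw [Phi_set, measure_biUnion_finset]
  · have h1 : ∀ S ∈ E.powerset.filter Q, P β {ω : Config d | ∀ e ∈ E, ω e = decide (e ∈ S)} =
        ENNReal.ofReal ((∏ e ∈ E, if e ∈ S then pp J β e else 1 - pp J β e) * ind (Q S)) := by
      intro S hS
      rw [Finset.mem_filter] at hS
      rw [hP, ind_true hS.2, mul_one, ENNReal.ofReal_prod_of_nonneg]
      · apply Finset.prod_congr rfl
        intro e _
        by_cases he : e ∈ S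
        · simp [he, edgeProb_eq]
        · simp [he, edgeProb_eq, ENNReal.ofReal_sub _ (hp e).1]
      · intro e _
        split_ifs
        · exact (hp e).1
        · linarith [(hp e).2]
    rw [Finset.sum_congr rfl h1, ← ENNReal.ofReal_sum_of_nonneg]
    · congr 1
      rw [Pr, Ex, Finset.sum_filter]
      apply Finset.sum_congr rfl
      intro S _
      split_ifs with h
      · rfl
      · rw [ind_false h, mul_zero]
    · intro S _
      apply mul_nonneg _ (ind_nonneg _)
      apply Finset.prod_nonneg
      intro e _
      split_ifs
      · exact (hp e).1
      · linarith [(hp e).2]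
  · intro S hS T hT hne
    rw [Function.onFun, Set.disjoint_left]
    intro ω h1 h2
    simp only [Finset.coe_filter, Finset.mem_powerset, Set.mem_ofPred_eq] at hS hT
    exact hne (((Phi_eq_iff hS.1 ω).2 h1).symm.trans ((Phi_eq_iff hT.1 ω).2 h2))
  · intro S _
    exact cyl_meas _ _

theorem P_univ {J : V d → V d → ℝ} {P : ℝ → Measure (Config d)} (hP : IsLRP J P) (β : ℝ) :
    P β Set.univ = 1 := by
  have := hP β ∅ (fun _ => true)
  simpa using this

theorem Phi_mono {E F : Finset (Sym2 (V d))} (h : E ⊆ F) (ω : Config d) : Phi E ω ⊆ Phi F ω := by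
  unfold Phi; exact Finset.filter_subset_filter _ h

theorem R_conn {E : Finset (Sym2 (V d))} {ω : Config d} {x y : V d} (h : R (Phi E ω) x y) :
    conn ω x y := by
  induction h with
  | refl => exact Relation.ReflTransGen.refl
  | @tail b c _ h ih =>
    by_cases hbc : b = c
    · rwa [← hbc]
    · refine ih.tail ⟨hbc, ?_⟩
      unfold Phi at h
      exact (Finset.mem_filter.1 h).2

theorem conn_iff {ω : Config d} {x y : V d} :
    conn ω x y ↔ ∃ N, R (Phi (bx d N).sym2 ω) x y := by
  constructor
  · intro h
    induction h with
    | refl => exact ⟨0, R.refl _⟩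
    | @tail b c _ h ih =>
      obtain ⟨N, hN⟩ := ih
      refine ⟨N + normInf b + normInf c, (hN.mono (Phi_mono (Finset.sym2_mono
        (bx_mono (by omega))) ω)).trans (R.edge ?_)⟩
      unfold Phi
      rw [Finset.mem_filter, Finset.mk_mem_sym2_iff, mem_bx, mem_bx]
      exact ⟨⟨by omega, by omega⟩, h.2⟩
  · rintro ⟨N, h⟩
    exact R_conn h

/-- real infinite-volume two-point function -/
noncomputable def ti (p : Sym2 (V d) → ℝ) (x y : V d) : ℝ := ⨆ N, tau (bx d N) p x y

theorem ti_bdd {p : Sym2 (V d) → ℝ} (hp : PP p) (x y : V d) :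
    BddAbove (Set.range (fun N => tau (bx d N) p x y)) :=
  ⟨1, by rintro _ ⟨N, rfl⟩; exact tau_le_one _ hp _ _⟩

theorem tau_le_ti {p : Sym2 (V d) → ℝ} (hp : PP p) (B : Finset (V d)) (x y : V d) :
    tau B p x y ≤ ti p x y := by
  obtain ⟨N, hN⟩ := exists_bx B
  exact (tau_mono hN hp x y).trans (le_ciSup (ti_bdd hp x y) N)

theorem ti_le {p : Sym2 (V d) → ℝ} {x y : V d} {a : ℝ}
    (h : ∀ N, tau (bx d N) p x y ≤ a) : ti p x y ≤ a := ciSup_le h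

theorem ti_nonneg {p : Sym2 (V d) → ℝ} (hp : PP p) (x y : V d) : 0 ≤ ti p x y :=
  (tau_nonneg ∅ hp x y).trans (tau_le_ti hp ∅ x y)

theorem ti_le_one {p : Sym2 (V d) → ℝ} (hp : PP p) (x y : V d) : ti p x y ≤ 1 :=
  ti_le fun _ => tau_le_one _ hp _ _

theorem ti_tendsto {p : Sym2 (V d) → ℝ} (hp : PP p) (x y : V d) :
    Filter.Tendsto (fun N => tau (bx d N) p x y) Filter.atTop (nhds (ti p x y)) :=
  tendsto_atTop_ciSup (fun _ _ h => tau_mono (bx_mono h) hp x y) (ti_bdd hp x y)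

theorem ti_symm (p : Sym2 (V d) → ℝ) (x y : V d) : ti p x y = ti p y x := by
  unfold ti; congr 1; funext N; exact tau_symm _ _ _ _

theorem twoPoint_eq {J : V d → V d → ℝ} {P : ℝ → Measure (Config d)} (hP : IsLRP J P) {β : ℝ}
    (hp : PP (pp J β)) (x y : V d) :
    twoPoint P β x y = ENNReal.ofReal (ti (pp J β) x y) := by
  have h1 : {ω : Config d | conn ω x y} = ⋃ N, {ω | R (Phi (bx d N).sym2 ω) x y} := by
    ext ω; simp [conn_iff]
  have hmono : Monotone (fun N => {ω : Config d | R (Phi (bx d N).sym2 ω) x y}) :=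
    fun M N h ω hω => hω.mono (Phi_mono (Finset.sym2_mono (bx_mono h)) ω)
  unfold twoPoint
  rw [h1]
  refine tendsto_nhds_unique (tendsto_measure_iUnion_atTop hmono) ?_
  have h2 : ∀ N, P β {ω : Config d | R (Phi (bx d N).sym2 ω) x y} =
      ENNReal.ofReal (tau (bx d N) (pp J β) x y) := fun N =>
    Phi_measure hP hp _ (fun S => R S x y)
  simp only [Function.comp_def, h2]
  exact (ENNReal.continuous_ofReal.tendsto _).comp (ti_tendsto hp x y)

theorem conn_meas (x y : V d) : MeasurableSet {ω : Config d | conn ω x y} := by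
  have h1 : {ω : Config d | conn ω x y} = ⋃ N, {ω | R (Phi (bx d N).sym2 ω) x y} := by
    ext ω; simp [conn_iff]
  rw [h1]
  exact MeasurableSet.iUnion fun N => Phi_meas _ (fun S => R S x y)

/-- translation invariance of edge probabilities -/
def TI (p : Sym2 (V d) → ℝ) : Prop := ∀ a b z : V d, p s(a + z, b + z) = p s(a, b)

theorem tau_add {p : Sym2 (V d) → ℝ} (hT : TI p) (B : Finset (V d)) (x y z : V d) :
    tau (B.map (addRightEmbedding z)) p (x + z) (y + z) = tau B p x y :=
  tau_map (addRightEmbedding z) B p (fun a b => hT a b z) x y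

theorem ti_add {p : Sym2 (V d) → ℝ} (hp : PP p) (hT : TI p) (x y z : V d) :
    ti p (x + z) (y + z) = ti p x y := by
  have key : ∀ x y z : V d, ti p x y ≤ ti p (x + z) (y + z) := by
    intro x y z
    apply ti_le
    intro N
    rw [← tau_add hT _ x y z]
    exact tau_le_ti hp _ _ _
  apply le_antisymm _ (key x y z)
  have := key (x + z) (y + z) (-z)
  simpa using this

theorem ti_zero {p : Sym2 (V d) → ℝ} (hp : PP p) (hT : TI p) (x y : V d) :
    ti p x y = ti p 0 (y - x) := by
  have := ti_add hp hT 0 (y - x) x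
  simpa using this

theorem ti_even {p : Sym2 (V d) → ℝ} (hp : PP p) (hT : TI p) (x : V d) :
    ti p 0 (-x) = ti p 0 x := by
  have := ti_add hp hT 0 (-x) x
  rw [← this]
  simp [ti_symm p x 0]

end Lattice

section Sharp
variable {d : ℕ}

/-- finite criterion for finite susceptibility -/
theorem chi_bdd {p : Sym2 (V d) → ℝ} (hp : PP p) (hT : TI p) {T : Finset (V d)} (h0 : (0 : V d) ∈ T)
    (hφ : ∀ Ω : Finset (V d), ∑ x ∈ T, ∑ y ∈ Ω \ T, tau T p 0 x * p s(x, y) ≤ 1 / 2)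
    (L : Finset (V d)) (y : V d) (hy : y ∈ L) :
    ∑ x ∈ L, tau L p y x ≤ 2 * (T.card : ℝ) := by
  obtain ⟨m, hm, hmax⟩ := Finset.exists_max_image L (fun y => ∑ x ∈ L, tau L p y x) ⟨y, hy⟩
  refine (hmax y hy).trans ?_
  set M := ∑ x ∈ L, tau L p m x with hM
  clear hy y
  have hM0 : 0 ≤ M := Finset.sum_nonneg fun x _ => tau_nonneg _ hp _ _
  set Tm := T.map (addRightEmbedding m) with hTm
  have hmT : m ∈ Tm := by
    rw [hTm, Finset.mem_map]; exact ⟨0, h0, by simp⟩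
  set Ty := Tm ∩ L with hTy
  have hmTy : m ∈ Ty := Finset.mem_inter.2 ⟨hmT, hm⟩
  have hTyL : Ty ⊆ L := Finset.inter_subset_right
  have hLT : L \ Ty = L \ Tm := by
    ext z; simp only [hTy, Finset.mem_sdiff, Finset.mem_inter]; tauto
  have h1 : M ≤ ∑ x ∈ L, tau Ty p m x + ∑ x ∈ L, ∑ a ∈ Ty, ∑ b ∈ L \ Ty,
      tau Ty p m a * p s(a, b) * tau L p b x := by
    rw [hM, ← Finset.sum_add_distrib]
    apply Finset.sum_le_sum
    intro x hx
    exact simon_lieb hTyL hp hmTy hx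
  have h2 : ∑ x ∈ L, tau Ty p m x ≤ (T.card : ℝ) := by
    have : ∑ x ∈ L, tau Ty p m x ≤ ∑ x ∈ Ty, (1 : ℝ) := by
      rw [← Finset.sum_subset hTyL (fun x _ hx => tau_zero hmTy hx)]
      exact Finset.sum_le_sum fun x _ => tau_le_one _ hp _ _
    refine this.trans ?_
    rw [Finset.sum_const, nsmul_eq_mul, mul_one]
    have : Ty.card ≤ T.card := by
      rw [← Finset.card_map (addRightEmbedding m) (s := T)]
      exact Finset.card_le_card Finset.inter_subset_left
    exact_mod_cast this
  have h3 : ∑ x ∈ L, ∑ a ∈ Ty, ∑ b ∈ L \ Ty, tau Ty p m a * p s(a, b) * tau L p b x ≤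
      ∑ a ∈ Ty, ∑ b ∈ L \ Ty, tau Ty p m a * p s(a, b) * M := by
    rw [Finset.sum_comm]
    apply Finset.sum_le_sum
    intro a _
    rw [Finset.sum_comm]
    apply Finset.sum_le_sum
    intro b hb
    rw [← Finset.mul_sum]
    exact mul_le_mul_of_nonneg_left (hmax b (Finset.mem_sdiff.1 hb).1)
      (mul_nonneg (tau_nonneg _ hp _ _) (hp _).1)
  have h4 : ∑ a ∈ Ty, ∑ b ∈ L \ Ty, tau Ty p m a * p s(a, b) ≤ 1 / 2 := by
    refine le_trans ?_ (hφ (L.map (addRightEmbedding (-m))))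
    have e1 : ∑ a ∈ Ty, ∑ b ∈ L \ Ty, tau Ty p m a * p s(a, b) ≤
        ∑ a ∈ Tm, ∑ b ∈ L \ Tm, tau Tm p m a * p s(a, b) := by
      rw [hLT]
      refine le_trans (Finset.sum_le_sum (g := fun a => ∑ b ∈ L \ Tm, tau Tm p m a * p s(a, b)) ?_)
        (Finset.sum_le_sum_of_subset_of_nonneg Finset.inter_subset_left ?_)
      · intro a _
        apply Finset.sum_le_sum
        intro b _
        exact mul_le_mul_of_nonneg_right (tau_mono Finset.inter_subset_left hp _ _) (hp _).1
      · intro a _ _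
        exact Finset.sum_nonneg fun b _ => mul_nonneg (tau_nonneg _ hp _ _) (hp _).1
    refine e1.trans (le_of_eq ?_)
    rw [hTm, Finset.sum_map]
    apply Finset.sum_congr rfl
    intro x _
    have e2 : L \ T.map (addRightEmbedding m) =
        (L.map (addRightEmbedding (-m)) \ T).map (addRightEmbedding m) := by
      ext z
      simp only [Finset.mem_sdiff, Finset.mem_map, addRightEmbedding_apply]
      constructor
      · rintro ⟨h1, h2⟩
        refine ⟨z + -m, ⟨⟨z, h1, rfl⟩, fun h => h2 ⟨_, h, by simp⟩⟩, by simp⟩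
      · rintro ⟨w, ⟨⟨z', hz', rfl⟩, h2⟩, rfl⟩
        refine ⟨by simpa using hz', ?_⟩
        rintro ⟨t, ht, h⟩
        rw [add_left_injective m h] at ht
        exact h2 ht
    rw [e2, Finset.sum_map]
    apply Finset.sum_congr rfl
    intro y _
    have e3 := tau_add hT T 0 x m
    rw [zero_add] at e3
    simp only [addRightEmbedding_apply]
    rw [e3, hT]
  have h5 : ∑ a ∈ Ty, ∑ b ∈ L \ Ty, tau Ty p m a * p s(a, b) * M ≤ 1 / 2 * M := by
    simp_rw [← Finset.sum_mul]
    exact mul_le_mul_of_nonneg_right h4 hM0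
  linarith

theorem Je_mk {J : V d → V d → ℝ} {α c C : ℝ} (hJ : KernelHyp d J α c C) (x y : V d) :
    Je J s(x, y) = J x y := by
  simp only [Je, Sym2.lift_mk]
  rw [hJ.symm y x]
  ring

theorem Je_nonneg {J : V d → V d → ℝ} {α c C : ℝ} (hJ : KernelHyp d J α c C) (e : Sym2 (V d)) :
    0 ≤ Je J e := by
  induction e using Sym2.ind with
  | _ x y => rw [Je_mk hJ]; exact hJ.nonneg x y

theorem PP_pp {J : V d → V d → ℝ} {α c C : ℝ} (hJ : KernelHyp d J α c C) {β : ℝ} (hβ : 0 ≤ β) :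
    PP (pp J β) := PP_exp (Je_nonneg hJ) hβ

theorem TI_pp {J : V d → V d → ℝ} {α c C : ℝ} (hJ : KernelHyp d J α c C) (β : ℝ) :
    TI (pp J β) := by
  intro a b z
  unfold pp
  rw [Je_mk hJ, Je_mk hJ, hJ.transInv]

theorem pp_le {J : V d → V d → ℝ} {α c C : ℝ} (hJ : KernelHyp d J α c C) (β : ℝ) (x y : V d) :
    pp J β s(x, y) ≤ β * J x y := by
  unfold pp
  rw [Je_mk hJ]
  linarith [Real.add_one_le_exp (-β * J x y)]

theorem summable_of_bdd {p : Sym2 (V d) → ℝ} (hp : PP p) {M : ℝ}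
    (h : ∀ N, ∑ x ∈ bx d N, tau (bx d N) p 0 x ≤ M) : Summable (fun x => ti p 0 x) := by
  apply summable_of_sum_le (fun x => ti_nonneg hp 0 x) (c := M)
  intro u
  have h1 : Filter.Tendsto (fun N => ∑ x ∈ u, tau (bx d N) p 0 x) Filter.atTop
      (nhds (∑ x ∈ u, ti p 0 x)) := tendsto_finsetSum u fun x _ => ti_tendsto hp 0 x
  refine le_of_tendsto h1 ?_
  obtain ⟨r, hr⟩ := exists_bx u
  filter_upwards [Filter.eventually_ge_atTop r] with N hN
  refine le_trans ?_ (h N)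
  exact Finset.sum_le_sum_of_subset_of_nonneg (hr.trans (bx_mono hN))
    fun x _ _ => tau_nonneg _ hp _ _

theorem infinite_of_unbounded {s : Set (V d)} (h : ∀ n, ∃ y ∈ s, y ∉ bx d n) : s.Infinite := by
  intro hf
  obtain ⟨n, hn⟩ := exists_bx hf.toFinset
  obtain ⟨y, hy, hy'⟩ := h n
  exact hy' (hn (by simpa using hy))

theorem sharp {J : V d → V d → ℝ} {α c C : ℝ} (hJ : KernelHyp d J α c C)
    {P : ℝ → Measure (Config d)} (hP : IsLRP J P) {β : ℝ} (hβ : 0 ≤ β) (hβc : β < betaC P) :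
    Summable (fun x => ti (pp J β) 0 x) := by
  classical
  by_contra hns
  have hp := PP_pp hJ hβ
  have hT := TI_pp hJ β
  have key : ∀ T : Finset (V d), (0 : V d) ∈ T → ∃ Ω : Finset (V d),
      1 / 2 < ∑ x ∈ T, ∑ y ∈ Ω \ T, tau T (pp J β) 0 x * pp J β s(x, y) := by
    intro T h0
    by_contra hcon
    push Not at hcon
    apply hns
    apply summable_of_bdd hp (M := 2 * (T.card : ℝ))
    intro N
    exact chi_bdd hp hT h0 hcon _ _ (by rw [mem_bx]; simp [normInf])
  choose! Om hOm using key
  have hβ0 : 0 < β := by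
    rcases hβ.lt_or_eq with h | h
    · exact h
    exfalso
    have := hOm {0} (by simp)
    rw [← h] at this
    have h2 : ∀ e, pp J 0 e = 0 := fun e => by simp [pp]
    simp [h2] at this
    linarith
  set κ := 1 / (2 * β) with hκ
  set β1 := (β + betaC P) / 2 with hβ1
  have hb1 : β < β1 := by rw [hβ1]; linarith
  have hb2 : β1 < betaC P := by rw [hβ1]; linarith
  have hp1 := PP_pp hJ (hβ.trans hb1.le)
  set δ := 1 - Real.exp (-(κ * (β1 - β))) with hδ
  have hδ0 : 0 < δ := by
    have : Real.exp (-(κ * (β1 - β))) < 1 := by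
      rw [Real.exp_lt_one_iff]
      have : 0 < κ * (β1 - β) := mul_pos (by positivity) (by linarith)
      linarith
    linarith
  set A : ℕ → Set (Config d) := fun n => {ω | ∃ y, y ∉ bx d n ∧ conn ω 0 y} with hA
  have hAδ : ∀ n, ENNReal.ofReal δ ≤ P β1 (A n) := by
    intro n
    set L := bx d n with hL
    set Ω := L ∪ L.powerset.biUnion Om with hΩ
    have hd := dct (L := L) (Ω := Ω) Finset.subset_union_left (Je_nonneg hJ) (o := 0)
      (by rw [hL, mem_bx]; simp [normInf]) (b0 := β) (b1 := β1) (κ := κ) hβ hb1.le ?_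
    · refine (ENNReal.ofReal_le_ofReal hd).trans ?_
      have := Phi_measure hP hp1 Ω.sym2 (fun S => Bd L Ω S 0)
      change ENNReal.ofReal (Pr Ω.sym2 (pp J β1) (fun S => Bd L Ω S 0)) ≤ _
      rw [← this]
      apply measure_mono
      rintro ω ⟨y, hy, hR⟩
      exact ⟨y, (Finset.mem_sdiff.1 hy).2, R_conn hR⟩
    · intro T hTL h0
      have h1 := hOm T h0
      have h2 : Om T \ T ⊆ Ω \ T := by
        apply Finset.sdiff_subset_sdiff _ (Finset.Subset.refl _)
        intro z hz
        rw [hΩ, Finset.mem_union, Finset.mem_biUnion]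
        exact Or.inr ⟨T, Finset.mem_powerset.2 hTL, hz⟩
      have h3 : ∑ x ∈ T, ∑ y ∈ Om T \ T, tau T (pp J β) 0 x * pp J β s(x, y) ≤
          ∑ x ∈ T, ∑ y ∈ Ω \ T, β * (Je J s(x, y) * tau T (pp J β) 0 x) := by
        apply Finset.sum_le_sum
        intro x _
        refine le_trans (Finset.sum_le_sum_of_subset_of_nonneg h2 fun y _ _ =>
          mul_nonneg (tau_nonneg _ hp _ _) (hp _).1) (Finset.sum_le_sum fun y _ => ?_)
        have h4 := pp_le hJ β x y
        rw [Je_mk hJ]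
        nlinarith [mul_le_mul_of_nonneg_left h4 (tau_nonneg T hp 0 x)]
      have h5 := h1.le.trans h3
      simp_rw [← Finset.mul_sum] at h5
      rw [hκ, div_le_iff₀ (by positivity)]
      change 1 ≤ (∑ x ∈ T, ∑ y ∈ Ω \ T, Je J s(x, y) * tau T (pp J β) 0 x) * (2 * β)
      linarith
  have hAmeas : ∀ n, MeasurableSet (A n) := by
    intro n
    have : A n = ⋃ y : V d, ⋃ _ : y ∉ bx d n, {ω | conn ω 0 y} := by
      ext ω; simp [hA]
    rw [this]
    exact MeasurableSet.iUnion fun y => MeasurableSet.iUnion fun _ => conn_meas 0 y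
  have hAanti : Antitone A := by
    rintro m n h ω ⟨y, hy, hc⟩
    exact ⟨y, fun h' => hy (bx_mono h h'), hc⟩
  have hI := hAanti.measure_iInter (μ := P β1) (fun n => (hAmeas n).nullMeasurableSet)
    ⟨0, ((measure_mono (Set.subset_univ _)).trans_lt (by rw [P_univ hP]; simp)).ne⟩
  have hpos : 0 < P β1 {ω | ∃ x, (cluster ω x).Infinite} := by
    refine lt_of_lt_of_le (ENNReal.ofReal_pos.2 hδ0) ?_
    refine le_trans (le_iInf hAδ) (hI ▸ measure_mono ?_)
    intro ω hω
    refine ⟨0, infinite_of_unbounded fun n => ?_⟩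
    rw [Set.mem_iInter] at hω
    obtain ⟨y, h1, h2⟩ := hω n
    exact ⟨y, h2, h1⟩
  have : betaC P ≤ β1 := csInf_le ⟨0, fun b hb => hb.1⟩ ⟨hβ.trans hb1.le, hpos⟩
  linarith

end Sharp

section Avg
variable {d : ℕ}

/-- cube `[0,r)^d` -/
noncomputable def cb (d r : ℕ) : Finset (V d) := Fintype.piFinset (fun _ => Finset.Ico (0 : ℤ) r)

theorem mem_cb {r : ℕ} {x : V d} : x ∈ cb d r ↔ ∀ i, 0 ≤ x i ∧ x i < r := by
  simp [cb, Fintype.mem_piFinset]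

theorem card_cb (r : ℕ) : (cb d r).card = r ^ d := by
  simp [cb, Fintype.card_piFinset]

theorem Ex_K {W : Type*} [DecidableEq W] (B : Finset W) (p : Sym2 W → ℝ) (u : W) :
    Ex B.sym2 p (fun S => ((K B S u).card : ℝ)) = ∑ v ∈ B, tau B p u v := by
  classical
  unfold tau Pr
  rw [← Ex_sum]
  apply Ex_congr
  intro S _
  rw [sum_ind_eq]
  congr 2

/-- total pair connectivity in a cube -/
noncomputable def XX (B : Finset (V d)) (p : Sym2 (V d) → ℝ) : ℝ := ∑ u ∈ B, ∑ v ∈ B, tau B p u v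

theorem XX_nonneg {p : Sym2 (V d) → ℝ} (hp : PP p) (B : Finset (V d)) : 0 ≤ XX B p :=
  Finset.sum_nonneg fun _ _ => Finset.sum_nonneg fun _ _ => tau_nonneg _ hp _ _

theorem XX_add {p : Sym2 (V d) → ℝ} (hT : TI p) (B : Finset (V d)) (z : V d) :
    XX (B.map (addRightEmbedding z)) p = XX B p := by
  unfold XX
  rw [Finset.sum_map]
  apply Finset.sum_congr rfl
  intro u _
  rw [Finset.sum_map]
  apply Finset.sum_congr rfl
  intro v _
  exact tau_add hT B u v z

theorem pair_merge {B1 B2 L : Finset (V d)} (hn1 : B1.Nonempty) (hn2 : B2.Nonempty)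
    (hd : Disjoint B1 B2) (h1 : B1 ⊆ L) (h2 : B2 ⊆ L)
    {p : Sym2 (V d) → ℝ} (hp : PP p) {q X : ℝ} (hq : 0 ≤ q)
    (hpq : ∀ a ∈ B1, ∀ b ∈ B2, 1 - p s(a, b) ≤ Real.exp (-q))
    (hX1 : XX B1 p = X) (hX2 : XX B2 p = X) :
    q / (1 + q * (216 * X)) * (X / 2) ^ 2 ≤ ∑ u ∈ B1, ∑ v ∈ B2, tau L p u v := by
  have hX : 0 ≤ X := hX1 ▸ XX_nonneg hp B1
  obtain ⟨N1, hN1, hE1⟩ := Nlemma B1 hn1 hp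
  obtain ⟨N2, hN2, hE2⟩ := Nlemma B2 hn2 hp
  have e1 : ∑ u ∈ B1, Ex B1.sym2 p (fun S => ((K B1 S u).card : ℝ)) = X := by
    rw [← hX1]; exact Finset.sum_congr rfl fun u _ => Ex_K _ _ _
  have e2 : ∑ u ∈ B2, Ex B2.sym2 p (fun S => ((K B2 S u).card : ℝ)) = X := by
    rw [← hX2]; exact Finset.sum_congr rfl fun u _ => Ex_K _ _ _
  rw [e1] at hN1
  rw [e2] at hN2
  set N := max N1 N2 with hN
  have hNX : (N : ℝ) ^ 2 ≤ 216 * X := by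
    rcases max_cases N1 N2 with h | h <;> rw [hN, h.1] <;> assumption
  set m1 : V d → ℝ := fun u => Ex B1.sym2 p (fun S => ((min (K B1 S u).card N : ℕ) : ℝ)) with hm1
  set m2 : V d → ℝ := fun u => Ex B2.sym2 p (fun S => ((min (K B2 S u).card N : ℕ) : ℝ)) with hm2
  have hs1 : X / 2 ≤ ∑ u ∈ B1, m1 u := by
    have : X ≤ ∑ u ∈ B1, 2 * m1 u := by
      rw [← e1]
      refine Finset.sum_le_sum fun u _ => (hE1 u).trans ?_
      refine mul_le_mul_of_nonneg_left (Ex_mono hp fun S _ => ?_) (by norm_num)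
      exact_mod_cast min_le_min_left _ (le_max_left _ _)
    rw [← Finset.mul_sum] at this
    linarith
  have hs2 : X / 2 ≤ ∑ u ∈ B2, m2 u := by
    have : X ≤ ∑ u ∈ B2, 2 * m2 u := by
      rw [← e2]
      refine Finset.sum_le_sum fun u _ => (hE2 u).trans ?_
      refine mul_le_mul_of_nonneg_left (Ex_mono hp fun S _ => ?_) (by norm_num)
      exact_mod_cast min_le_min_left _ (le_max_right _ _)
    rw [← Finset.mul_sum] at this
    linarith
  have hmerge : ∑ u ∈ B1, ∑ v ∈ B2, q / (1 + q * (N : ℝ) ^ 2) * (m1 u * m2 v) ≤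
      ∑ u ∈ B1, ∑ v ∈ B2, tau L p u v :=
    Finset.sum_le_sum fun u hu => Finset.sum_le_sum fun v hv => merge hd h1 h2 hp hq hpq N hu hv
  refine le_trans ?_ hmerge
  simp_rw [← Finset.mul_sum, ← Finset.sum_mul]
  have hq1 : q / (1 + q * (216 * X)) ≤ q / (1 + q * (N : ℝ) ^ 2) := by
    apply div_le_div_of_nonneg_left hq (by positivity)
    nlinarith
  have hq0 : 0 ≤ q / (1 + q * (216 * X)) := by positivity
  have hsq : (X / 2) ^ 2 ≤ (∑ u ∈ B1, m1 u) * ∑ v ∈ B2, m2 v := by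
    rw [sq]
    exact mul_le_mul hs1 hs2 (by positivity) (le_trans (by positivity) hs1)
  exact mul_le_mul hq1 hsq (by positivity) (hq0.trans hq1)

theorem normInf_le {x : V d} {n : ℕ} : normInf x ≤ n ↔ ∀ i, (x i).natAbs ≤ n := by
  simp [normInf, Finset.sup_le_iff]

theorem normInf_pos {x : V d} (h : x ≠ 0) : 1 ≤ normInf x := by
  by_contra hc
  apply h
  have : normInf x ≤ 0 := by omega
  rw [normInf_le] at this
  funext i
  have := this i
  simp at this
  simpa using this

theorem grow {J : V d → V d → ℝ} {α c C : ℝ} (hJ : KernelHyp d J α c C) {β : ℝ} (hβ : 0 < β)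
    {b r : ℕ} (hb : 2 ≤ b) (hr : 1 ≤ r) :
    ((b : ℝ) ^ d) ^ 2 / 2 * ((β * c * ((b * r : ℕ) : ℝ) ^ (-(d : ℝ) - α)) /
      (1 + (β * c * ((b * r : ℕ) : ℝ) ^ (-(d : ℝ) - α)) * (216 * XX (cb d r) (pp J β))) *
      (XX (cb d r) (pp J β) / 2) ^ 2) ≤ XX (cb d (b * r)) (pp J β) := by
  classical
  have hp := PP_pp hJ hβ.le
  have hT := TI_pp hJ β
  set p := pp J β with hpdef
  set q := β * c * ((b * r : ℕ) : ℝ) ^ (-(d : ℝ) - α) with hq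
  set X := XX (cb d r) p with hX
  have hc := hJ.c_pos
  have hq0 : 0 ≤ q := by positivity
  have hX0 : 0 ≤ X := XX_nonneg hp _
  set L := cb d (b * r) with hL
  set Bk : V d → Finset (V d) := fun k => (cb d r).map (addRightEmbedding ((r : ℤ) • k)) with hBk
  have hmem : ∀ k z, z ∈ Bk k ↔ ∀ i, (r : ℤ) * k i ≤ z i ∧ z i < r * k i + r := by
    intro k z
    simp only [hBk, Finset.mem_map, addRightEmbedding_apply, mem_cb]
    constructor
    · rintro ⟨a, ha, rfl⟩ i
      have := ha i
      simp only [Pi.add_apply, Pi.smul_apply, smul_eq_mul]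
      constructor <;> linarith
    · intro h
      refine ⟨z - (r : ℤ) • k, fun i => ?_, by simp⟩
      have := h i
      simp only [Pi.sub_apply, Pi.smul_apply, smul_eq_mul]
      constructor <;> linarith
  have hsub : ∀ k ∈ cb d b, Bk k ⊆ L := by
    intro k hk z hz
    rw [hmem] at hz
    rw [mem_cb] at hk
    rw [hL, mem_cb]
    intro i
    have h1 := hz i
    have h2 := hk i
    have h3 : (r : ℤ) * k i ≤ r * (b - 1) :=
      mul_le_mul_of_nonneg_left (by omega) (by positivity)
    have h4 : 0 ≤ (r : ℤ) * k i := mul_nonneg (by positivity) h2.1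
    push_cast
    constructor
    · linarith
    · nlinarith
  have hdisj : ∀ k k', k ≠ k' → Disjoint (Bk k) (Bk k') := by
    intro k k' hne
    rw [Finset.disjoint_left]
    intro z h1 h2
    apply hne
    funext i
    have h1 := (hmem _ _).1 h1 i
    have h2 := (hmem _ _).1 h2 i
    have hr' : (0 : ℤ) < r := by exact_mod_cast hr
    have h3 : (r : ℤ) * k i < r * (k' i + 1) := by linarith
    have h4 : (r : ℤ) * k' i < r * (k i + 1) := by linarith
    have := lt_of_mul_lt_mul_left h3 hr'.le
    have := lt_of_mul_lt_mul_left h4 hr'.le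
    omega
  have hne : ∀ k, (Bk k).Nonempty := by
    intro k
    refine ⟨(r : ℤ) • k, ?_⟩
    rw [hmem]
    intro i
    simp only [Pi.smul_apply, smul_eq_mul]
    constructor
    · exact le_rfl
    · have : (0 : ℤ) < r := by exact_mod_cast hr
      linarith
  have hpq : ∀ x ∈ L, ∀ y ∈ L, x ≠ y → 1 - p s(x, y) ≤ Real.exp (-q) := by
    intro x hx y hy hxy
    rw [hpdef]
    unfold pp
    rw [Je_mk hJ, show 1 - (1 - Real.exp (-β * J x y)) = Real.exp (-β * J x y) by ring]
    apply Real.exp_le_exp.2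
    have h1 := hJ.lower x y hxy
    have h2 : normInf (x - y) ≤ b * r := by
      rw [normInf_le]
      intro i
      rw [hL, mem_cb] at hx hy
      have := hx i
      have := hy i
      simp only [Pi.sub_apply]
      omega
    have h3 : (1 : ℝ) ≤ normInf (x - y) := by
      exact_mod_cast normInf_pos (sub_ne_zero.2 hxy)
    have h4 : ((b * r : ℕ) : ℝ) ^ (-(d : ℝ) - α) ≤ (normInf (x - y) : ℝ) ^ (-(d : ℝ) - α) := by
      apply Real.rpow_le_rpow_of_nonpos (by linarith) (by exact_mod_cast h2)
      have := hJ.alpha_pos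
      have : (0 : ℝ) ≤ d := by positivity
      linarith
    have h5 : c * ((b * r : ℕ) : ℝ) ^ (-(d : ℝ) - α) ≤ J x y :=
      (mul_le_mul_of_nonneg_left h4 hc.le).trans h1
    rw [hq]
    nlinarith
  set w := q / (1 + q * (216 * X)) * (X / 2) ^ 2 with hw
  have hw0 : 0 ≤ w := by positivity
  have hpair : ∀ k ∈ cb d b, ∀ k' ∈ cb d b, (if k = k' then 0 else w) ≤
      ∑ u ∈ Bk k, ∑ v ∈ Bk k', tau L p u v := by
    intro k hk k' hk'
    split_ifs with h
    · exact Finset.sum_nonneg fun _ _ => Finset.sum_nonneg fun _ _ => tau_nonneg _ hp _ _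
    · refine pair_merge (hne k) (hne k') (hdisj k k' h) (hsub k hk) (hsub k' hk') hp hq0 ?_
        (XX_add hT _ _) (XX_add hT _ _)
      intro x hx y hy
      refine hpq x (hsub k hk hx) y (hsub k' hk' hy) ?_
      rintro rfl
      exact Finset.disjoint_left.1 (hdisj k k' h) hx hy
  have hpd : Set.PairwiseDisjoint (↑(cb d b)) Bk := fun k _ k' _ h => hdisj k k' h
  have hbi : (cb d b).biUnion Bk ⊆ L := Finset.biUnion_subset.2 hsub
  have htot : ∑ k ∈ cb d b, ∑ k' ∈ cb d b, (∑ u ∈ Bk k, ∑ v ∈ Bk k', tau L p u v) ≤ XX L p := by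
    have e1 : ∀ u, ∑ v ∈ (cb d b).biUnion Bk, tau L p u v ≤ ∑ v ∈ L, tau L p u v := fun u =>
      Finset.sum_le_sum_of_subset_of_nonneg hbi fun _ _ _ => tau_nonneg _ hp _ _
    have e2 : ∑ u ∈ (cb d b).biUnion Bk, ∑ v ∈ (cb d b).biUnion Bk, tau L p u v ≤ XX L p := by
      refine (Finset.sum_le_sum fun u _ => e1 u).trans ?_
      exact Finset.sum_le_sum_of_subset_of_nonneg hbi fun _ _ _ =>
        Finset.sum_nonneg fun _ _ => tau_nonneg _ hp _ _
    refine le_trans (le_of_eq ?_) e2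
    rw [Finset.sum_biUnion hpd]
    apply Finset.sum_congr rfl
    intro k _
    rw [Finset.sum_comm]
    apply Finset.sum_congr rfl
    intro u _
    rw [Finset.sum_biUnion hpd]
  refine le_trans ?_ htot
  refine le_trans ?_ (Finset.sum_le_sum fun k hk => Finset.sum_le_sum fun k' hk' => hpair k hk k' hk')
  have hcount : ∀ k ∈ cb d b, ∑ k' ∈ cb d b, (if k = k' then 0 else w) = ((b : ℝ) ^ d - 1) * w := by
    intro k hk
    have : ∀ k' ∈ cb d b, (if k = k' then 0 else w) = w - (if k = k' then w else 0) := by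
      intro k' _; split_ifs <;> simp
    rw [Finset.sum_congr rfl this, Finset.sum_sub_distrib, Finset.sum_ite_eq, if_pos hk,
      Finset.sum_const, card_cb, nsmul_eq_mul]
    push_cast
    ring
  rw [Finset.sum_congr rfl hcount, Finset.sum_const, card_cb, nsmul_eq_mul]
  push_cast
  have hbd : (2 : ℝ) ≤ (b : ℝ) ^ d := by
    have h2 : (2 : ℝ) ≤ b := by exact_mod_cast hb
    exact h2.trans (le_self_pow₀ (by linarith) (by have := hJ.d_pos; omega))
  have : ((b : ℝ) ^ d) ^ 2 / 2 ≤ (b : ℝ) ^ d * ((b : ℝ) ^ d - 1) := by nlinarith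
  calc _ ≤ ((b : ℝ) ^ d * ((b : ℝ) ^ d - 1)) * w := mul_le_mul_of_nonneg_right this hw0
    _ = _ := by ring

theorem XX_le {p : Sym2 (V d) → ℝ} (hp : PP p) (hT : TI p) (hs : Summable (fun x => ti p 0 x))
    (r : ℕ) : XX (cb d r) p ≤ (r : ℝ) ^ d * ∑' x, ti p 0 x := by
  have : ∀ u ∈ cb d r, ∑ v ∈ cb d r, tau (cb d r) p u v ≤ ∑' x, ti p 0 x := by
    intro u _
    have h1 : ∑ v ∈ cb d r, tau (cb d r) p u v ≤ ∑ v ∈ cb d r, ti p 0 (v - u) := by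
      apply Finset.sum_le_sum
      intro v _
      rw [← ti_zero hp hT]
      exact tau_le_ti hp _ _ _
    refine h1.trans ?_
    have h2 : ∑ v ∈ cb d r, ti p 0 (v - u) = ∑ v ∈ (cb d r).map (addRightEmbedding (-u)), ti p 0 v := by
      rw [Finset.sum_map]; simp [sub_eq_add_neg]
    rw [h2]
    exact hs.sum_le_tsum _ (fun x _ => ti_nonneg hp 0 x)
  refine (Finset.sum_le_sum this).trans ?_
  rw [Finset.sum_const, card_cb, nsmul_eq_mul]
  push_cast
  exact le_rfl

theorem hfr_aux {q X : ℝ} (hq : 0 < q) (hX : 0 < X) (h : 1 ≤ q * X) :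
    X / 868 ≤ q / (1 + q * (216 * X)) * (X / 2) ^ 2 := by
  rw [div_mul_eq_mul_div, le_div_iff₀ (by positivity)]
  nlinarith [mul_le_mul_of_nonneg_left h hX.le]

theorem hbb_aux {d : ℕ} {α b : ℝ} (hb0 : 0 < b) (hb2 : 3472 ≤ b ^ ((d : ℝ) - α)) :
    3472 * b ^ ((d : ℝ) + α) ≤ (b ^ d) ^ 2 := by
  have : (b ^ d) ^ 2 = b ^ ((d : ℝ) - α) * b ^ ((d : ℝ) + α) := by
    rw [← Real.rpow_add hb0, ← pow_mul, ← Real.rpow_natCast]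
    congr 1
    push_cast; ring
  rw [this]
  exact mul_le_mul_of_nonneg_right hb2 (by positivity)

theorem XX_bound {J : V d → V d → ℝ} {α c C : ℝ} (hJ : KernelHyp d J α c C) {b : ℕ} (hb : 2 ≤ b)
    (hb2 : 3472 ≤ (b : ℝ) ^ ((d : ℝ) - α)) {β : ℝ} (hβ : 0 < β)
    (hs : Summable (fun x => ti (pp J β) 0 x)) {r : ℕ} (hr : 1 ≤ r) :
    β * c * XX (cb d r) (pp J β) ≤ ((b * r : ℕ) : ℝ) ^ ((d : ℝ) + α) := by
  by_contra hcon
  push Not at hcon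
  have hp := PP_pp hJ hβ.le
  have hT := TI_pp hJ β
  have hc := hJ.c_pos
  have hb0 : (0 : ℝ) < b := by positivity
  set D := (d : ℝ) + α with hD
  set X : ℕ → ℝ := fun r => XX (cb d r) (pp J β) with hX
  have hX0 : ∀ r, 0 ≤ X r := fun r => XX_nonneg hp _
  have step : ∀ r : ℕ, 1 ≤ r → ((b * r : ℕ) : ℝ) ^ D ≤ β * c * X r →
      2 * (b : ℝ) ^ D * X r ≤ X (b * r) := by
    intro r hr h
    have hg := grow hJ hβ hb hr
    have hbr : (0 : ℝ) < ((b * r : ℕ) : ℝ) := by positivity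
    have hneg : ((b * r : ℕ) : ℝ) ^ (-(d : ℝ) - α) = (((b * r : ℕ) : ℝ) ^ D)⁻¹ := by
      rw [← Real.rpow_neg hbr.le]; congr 1; rw [hD]; ring
    rw [hneg] at hg
    have hM : 0 < ((b * r : ℕ) : ℝ) ^ D := by positivity
    set M := ((b * r : ℕ) : ℝ) ^ D with hMdef
    change ((b : ℝ) ^ d) ^ 2 / 2 * ((β * c * M⁻¹) / (1 + (β * c * M⁻¹) * (216 * X r)) *
      (X r / 2) ^ 2) ≤ X (b * r) at hg
    set q := β * c * M⁻¹ with hq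
    have hq0 : 0 < q := by positivity
    have hqX : 1 ≤ q * X r := by
      rw [hq]
      have : β * c * M⁻¹ * X r = (β * c * X r) / M := by field_simp
      rw [this, le_div_iff₀ hM]; linarith
    have hXr : 0 < X r := by
      by_contra h'
      have : X r = 0 := le_antisymm (not_lt.1 h') (hX0 r)
      rw [this] at hqX
      norm_num at hqX
    have hfr := hfr_aux hq0 hXr hqX
    refine le_trans ?_ hg
    have hbb := hbb_aux hb0 hb2
    rw [← hD] at hbb
    clear_value X q M D
    calc 2 * (b : ℝ) ^ D * X r = (3472 * (b : ℝ) ^ D) / 2 * (X r / 868) := by ring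
      _ ≤ ((b : ℝ) ^ d) ^ 2 / 2 * (X r / 868) := by
          apply mul_le_mul_of_nonneg_right _ (by positivity); linarith
      _ ≤ _ := mul_le_mul_of_nonneg_left hfr (by positivity)
  have iter : ∀ k : ℕ, (2 * (b : ℝ) ^ D) ^ k * X r ≤ X (b ^ k * r) := by
    intro k
    induction k with
    | zero => simp
    | succ k ih =>
      have hcond : ((b * (b ^ k * r) : ℕ) : ℝ) ^ D ≤ β * c * X (b ^ k * r) := by
        have e1 : ((b * (b ^ k * r) : ℕ) : ℝ) ^ D = ((b : ℝ) ^ D) ^ k * ((b * r : ℕ) : ℝ) ^ D := by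
          have : ((b * (b ^ k * r) : ℕ) : ℝ) = (b : ℝ) ^ k * ((b * r : ℕ) : ℝ) := by push_cast; ring
          rw [this, Real.mul_rpow (by positivity) (by positivity)]
          congr 1
          rw [← Real.rpow_natCast, ← Real.rpow_mul hb0.le, ← Real.rpow_natCast,
            ← Real.rpow_mul hb0.le, mul_comm]
        rw [e1]
        have hbD : 0 < (b : ℝ) ^ D := by positivity
        calc ((b : ℝ) ^ D) ^ k * ((b * r : ℕ) : ℝ) ^ D
            ≤ (2 * (b : ℝ) ^ D) ^ k * (β * c * X r) := by
              apply mul_le_mul _ hcon.le (by positivity) (by positivity)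
              exact pow_le_pow_left₀ hbD.le (by linarith) k
          _ = β * c * ((2 * (b : ℝ) ^ D) ^ k * X r) := by ring
          _ ≤ _ := mul_le_mul_of_nonneg_left ih (by positivity)
      have h1 := step (b ^ k * r) (Nat.mul_pos (by positivity) hr) hcond
      have e2 : b ^ (k + 1) * r = b * (b ^ k * r) := by ring
      rw [e2]
      refine le_trans ?_ h1
      calc (2 * (b : ℝ) ^ D) ^ (k + 1) * X r = 2 * (b : ℝ) ^ D * ((2 * (b : ℝ) ^ D) ^ k * X r) := by
            ring
        _ ≤ _ := mul_le_mul_of_nonneg_left ih (by positivity)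
  have hXr : 0 < X r := by
    by_contra h'
    have h0 : X r = 0 := le_antisymm (not_lt.1 h') (hX0 r)
    change ((b * r : ℕ) : ℝ) ^ D < β * c * X r at hcon
    rw [h0, mul_zero] at hcon
    have : (0 : ℝ) ≤ ((b * r : ℕ) : ℝ) ^ D := by positivity
    linarith
  set χ := ∑' x, ti (pp J β) 0 x with hχ
  have up : ∀ k : ℕ, (2 : ℝ) ^ k * X r ≤ (r : ℝ) ^ d * χ := by
    intro k
    have h1 := (iter k).trans (XX_le hp hT hs (b ^ k * r))
    have hbd : (b : ℝ) ^ d ≤ (b : ℝ) ^ D := by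
      rw [← Real.rpow_natCast]
      apply Real.rpow_le_rpow_of_exponent_le
      · have : (2 : ℝ) ≤ b := by exact_mod_cast hb
        linarith
      · rw [hD]; linarith [hJ.alpha_pos]
    have h2 : ((b : ℝ) ^ d) ^ k * (2 ^ k * X r) ≤ ((b : ℝ) ^ d) ^ k * ((r : ℝ) ^ d * χ) := by
      calc ((b : ℝ) ^ d) ^ k * (2 ^ k * X r) ≤ ((b : ℝ) ^ D) ^ k * (2 ^ k * X r) := by
            apply mul_le_mul_of_nonneg_right _ (by positivity)
            exact pow_le_pow_left₀ (by positivity) hbd k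
        _ = (2 * (b : ℝ) ^ D) ^ k * X r := by rw [mul_pow]; ring
        _ ≤ _ := h1
        _ = _ := by push_cast; rw [mul_pow, ← pow_mul, ← pow_mul, mul_comm k d]; ring
    exact le_of_mul_le_mul_left h2 (by positivity)
  obtain ⟨k, hk⟩ := pow_unbounded_of_one_lt ((r : ℝ) ^ d * χ / X r) (by norm_num : (1 : ℝ) < 2)
  rw [div_lt_iff₀ hXr] at hk
  linarith [up k]

theorem avg_bound {J : V d → V d → ℝ} {α c C : ℝ} (hJ : KernelHyp d J α c C) {b0 : ℝ}
    (hb0 : 0 < b0) : ∃ A : ℝ, 0 < A ∧ ∀ β, b0 ≤ β → Summable (fun x => ti (pp J β) 0 x) →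
      ∀ ρ : ℕ, 1 ≤ ρ → ∑ a ∈ bx d ρ, tau (bx d ρ) (pp J β) 0 a ≤ A * (ρ : ℝ) ^ α := by
  have hda : 0 < (d : ℝ) - α := by linarith [hJ.alpha_lt_d]
  obtain ⟨b, hb, hb2⟩ : ∃ b : ℕ, 2 ≤ b ∧ 3472 ≤ (b : ℝ) ^ ((d : ℝ) - α) := by
    have := ((tendsto_rpow_atTop hda).comp tendsto_natCast_atTop_atTop).eventually_ge_atTop 3472
    obtain ⟨b, h⟩ := (this.and (Filter.eventually_ge_atTop 2)).exists
    exact ⟨b, h.2, h.1⟩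
  have hc := hJ.c_pos
  refine ⟨(b * 5 : ℝ) ^ ((d : ℝ) + α) / (b0 * c), by positivity, ?_⟩
  intro β hβ hs ρ hρ
  have hβ0 : 0 < β := hb0.trans_le hβ
  have hp := PP_pp hJ hβ0.le
  have hT := TI_pp hJ β
  set p := pp J β with hpd
  set r := 4 * ρ + 1 with hr
  have h1 := XX_bound hJ hb hb2 hβ0 hs (r := r) (by omega)
  set T := ∑ a ∈ bx d ρ, tau (bx d ρ) p 0 a with hTdef
  have hT0 : 0 ≤ T := Finset.sum_nonneg fun _ _ => tau_nonneg _ hp _ _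
  have h2 : (ρ : ℝ) ^ d * T ≤ XX (cb d r) p := by
    set s : V d := fun _ => (ρ : ℤ) with hs
    have e1 : ∀ w ∈ (cb d ρ).map (addRightEmbedding s), T ≤ ∑ v ∈ cb d r, tau (cb d r) p w v := by
      intro w hw
      rw [Finset.mem_map] at hw
      obtain ⟨w', hw', rfl⟩ := hw
      rw [mem_cb] at hw'
      simp only [addRightEmbedding_apply]
      have hsub : (bx d ρ).map (addRightEmbedding (w' + s)) ⊆ cb d r := by
        intro z hz
        rw [Finset.mem_map] at hz
        obtain ⟨a, ha, rfl⟩ := hz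
        rw [mem_bx, normInf_le] at ha
        rw [mem_cb]
        intro i
        have := ha i
        have := hw' i
        simp only [addRightEmbedding_apply, Pi.add_apply, hs, hr]
        push_cast
        omega
      have e2 : T = ∑ v ∈ (bx d ρ).map (addRightEmbedding (w' + s)),
          tau ((bx d ρ).map (addRightEmbedding (w' + s))) p (w' + s) v := by
        rw [Finset.sum_map]
        apply Finset.sum_congr rfl
        intro a _
        have := tau_add hT (bx d ρ) 0 a (w' + s)
        rw [zero_add] at this
        exact this.symm
      rw [e2]
      refine (Finset.sum_le_sum fun v _ => tau_mono hsub hp _ _).trans ?_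
      exact Finset.sum_le_sum_of_subset_of_nonneg hsub fun _ _ _ => tau_nonneg _ hp _ _
    have e3 : (cb d ρ).map (addRightEmbedding s) ⊆ cb d r := by
      intro z hz
      rw [Finset.mem_map] at hz
      obtain ⟨a, ha, rfl⟩ := hz
      rw [mem_cb] at *
      intro i
      have := ha i
      simp only [addRightEmbedding_apply, Pi.add_apply, hs, hr]
      push_cast
      omega
    have e4 := (Finset.sum_le_sum e1).trans (Finset.sum_le_sum_of_subset_of_nonneg e3
      fun _ _ _ => Finset.sum_nonneg fun _ _ => tau_nonneg (cb d r) hp _ _)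
    rw [Finset.sum_const, Finset.card_map, card_cb, nsmul_eq_mul] at e4
    push_cast at e4
    exact e4
  have hρ1 : (1 : ℝ) ≤ ρ := by exact_mod_cast hρ
  have hap := hJ.alpha_pos
  have h3 : ((b * r : ℕ) : ℝ) ^ ((d : ℝ) + α) ≤
      (b * 5 : ℝ) ^ ((d : ℝ) + α) * ((ρ : ℝ) ^ d * (ρ : ℝ) ^ α) := by
    have : (ρ : ℝ) ^ d * (ρ : ℝ) ^ α = (ρ : ℝ) ^ ((d : ℝ) + α) := by
      rw [Real.rpow_add (by linarith), Real.rpow_natCast]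
    rw [this, ← Real.mul_rpow (by positivity) (by positivity)]
    apply Real.rpow_le_rpow (by positivity) _ (by positivity)
    rw [hr]
    push_cast
    have : (0 : ℝ) ≤ b := by positivity
    nlinarith
  have hX0 : 0 ≤ XX (cb d r) p := XX_nonneg hp _
  have h4 : b0 * c * ((ρ : ℝ) ^ d * T) ≤ (b * 5 : ℝ) ^ ((d : ℝ) + α) * ((ρ : ℝ) ^ d * (ρ : ℝ) ^ α) := by
    refine le_trans ?_ h3
    refine le_trans ?_ h1
    have : b0 * c ≤ β * c := mul_le_mul_of_nonneg_right hβ hc.le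
    exact mul_le_mul this h2 (by positivity) (by positivity)
  rw [div_mul_eq_mul_div, le_div_iff₀ (by positivity)]
  have h5 : (ρ : ℝ) ^ d * (T * (b0 * c)) ≤
      (ρ : ℝ) ^ d * ((b * 5 : ℝ) ^ ((d : ℝ) + α) * (ρ : ℝ) ^ α) := by
    linarith
  exact le_of_mul_le_mul_left h5 (by positivity)

end Avg

section Dy
variable {d : ℕ}

theorem normInf_add (x y : V d) : normInf (x + y) ≤ normInf x + normInf y := by
  rw [normInf_le]
  intro i
  have h1 := (normInf_le (x := x)).1 le_rfl i
  have h2 := (normInf_le (x := y)).1 le_rfl i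
  simp only [Pi.add_apply]
  omega

theorem normInf_neg (x : V d) : normInf (-x) = normInf x := by
  simp [normInf]

theorem normInf_zero : normInf (0 : V d) = 0 := by
  have : normInf (0 : V d) ≤ 0 := by rw [normInf_le]; simp
  omega

theorem normInf_sub (x y : V d) : normInf (x - y) ≤ normInf x + normInf y := by
  have := normInf_add x (-y)
  rwa [normInf_neg, ← sub_eq_add_neg] at this

theorem card_bx (r : ℕ) : ((bx d r).card : ℝ) = (2 * r + 1) ^ d := by
  have : (bx d r).card = (2 * r + 1) ^ d := by
    simp only [bx, Fintype.card_piFinset, Int.card_Icc, Finset.prod_const, Finset.card_univ,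
      Fintype.card_fin]
    congr 1; omega
  rw [this]; push_cast; rfl

theorem card_bx_le {r : ℕ} (hr : 1 ≤ r) : ∑ _v ∈ bx d r, (1 : ℝ) ≤ 3 ^ d * (r : ℝ) ^ (d : ℝ) := by
  rw [Finset.sum_const, nsmul_eq_mul, mul_one, card_bx, Real.rpow_natCast, ← mul_pow]
  have : (1 : ℝ) ≤ r := by exact_mod_cast hr
  exact pow_le_pow_left₀ (by positivity) (by linarith) d

theorem rpow_shell {m x s : ℝ} (hm : 0 < m) (h1 : m ≤ x) (h2 : x ≤ 2 * m) :
    x ^ (-s) ≤ 2 ^ |s| * m ^ (-s) := by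
  rcases le_total 0 s with hs | hs
  · have h3 : x ^ (-s) ≤ m ^ (-s) := Real.rpow_le_rpow_of_nonpos hm h1 (by linarith)
    have h4 : (1 : ℝ) ≤ 2 ^ |s| := Real.one_le_rpow (by norm_num) (abs_nonneg s)
    have : 0 ≤ m ^ (-s) := by positivity
    nlinarith
  · rw [abs_of_nonpos hs, ← Real.mul_rpow (by norm_num) hm.le]
    exact Real.rpow_le_rpow (by linarith) h2 (by linarith)

variable {g : V d → ℝ} {G γ s : ℝ}

theorem shell_sum (hg : ∀ v, 0 ≤ g v)
    (hG : ∀ r : ℕ, 1 ≤ r → ∑ v ∈ bx d r, g v ≤ G * (r : ℝ) ^ γ) {m : ℕ} (hm : 1 ≤ m) :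
    ∑ v ∈ bx d (2 * m) \ bx d m, (normInf v : ℝ) ^ (-s) * g v ≤
      2 ^ (|s| + γ) * G * (m : ℝ) ^ (γ - s) := by
  have hm0 : (0 : ℝ) < m := by exact_mod_cast hm
  have h1 : ∑ v ∈ bx d (2 * m) \ bx d m, (normInf v : ℝ) ^ (-s) * g v ≤
      ∑ v ∈ bx d (2 * m) \ bx d m, (2 ^ |s| * (m : ℝ) ^ (-s)) * g v := by
    apply Finset.sum_le_sum
    intro v hv
    rw [Finset.mem_sdiff, mem_bx, mem_bx] at hv
    apply mul_le_mul_of_nonneg_right _ (hg v)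
    apply rpow_shell hm0
    · exact_mod_cast (by omega : m ≤ normInf v)
    · exact_mod_cast hv.1
  refine h1.trans ?_
  rw [← Finset.mul_sum]
  have h2 : ∑ v ∈ bx d (2 * m) \ bx d m, g v ≤ G * ((2 * m : ℕ) : ℝ) ^ γ :=
    (Finset.sum_le_sum_of_subset_of_nonneg Finset.sdiff_subset fun v _ _ => hg v).trans
      (hG (2 * m) (by omega))
  refine (mul_le_mul_of_nonneg_left h2 (by positivity)).trans (le_of_eq ?_)
  push_cast
  rw [Real.mul_rpow (by norm_num) hm0.le, Real.rpow_add (by norm_num), sub_eq_add_neg,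
    Real.rpow_add hm0]
  ring

theorem ann_sum (hg : ∀ v, 0 ≤ g v)
    (hG : ∀ r : ℕ, 1 ≤ r → ∑ v ∈ bx d r, g v ≤ G * (r : ℝ) ^ γ) {m : ℕ} (hm : 1 ≤ m) (n : ℕ) :
    ∑ v ∈ bx d (2 ^ n * m) \ bx d m, (normInf v : ℝ) ^ (-s) * g v ≤
      2 ^ (|s| + γ) * G * (m : ℝ) ^ (γ - s) * ∑ k ∈ Finset.range n, ((2 : ℝ) ^ (γ - s)) ^ k := by
  have hm0 : (0 : ℝ) < m := by exact_mod_cast hm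
  induction n with
  | zero => simp
  | succ n ih =>
    have hsub : bx d (2 ^ (n + 1) * m) \ bx d m ⊆
        (bx d (2 ^ n * m) \ bx d m) ∪ (bx d (2 * (2 ^ n * m)) \ bx d (2 ^ n * m)) := by
      intro v
      simp only [Finset.mem_union, Finset.mem_sdiff, mem_bx]
      intro h
      have e : 2 ^ (n + 1) * m = 2 * (2 ^ n * m) := by ring
      rw [e] at h
      omega
    have h1 := shell_sum (s := s) hg hG (m := 2 ^ n * m) (Nat.mul_pos (by positivity) hm)
    have hnn : ∀ v, 0 ≤ (normInf v : ℝ) ^ (-s) * g v := fun v =>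
      mul_nonneg (by positivity) (hg v)
    refine (Finset.sum_le_sum_of_subset_of_nonneg hsub fun v _ _ => hnn v).trans ?_
    have hui := Finset.sum_union_inter (s₁ := bx d (2 ^ n * m) \ bx d m)
      (s₂ := bx d (2 * (2 ^ n * m)) \ bx d (2 ^ n * m)) (f := fun v => (normInf v : ℝ) ^ (-s) * g v)
    have hin := Finset.sum_nonneg (fun v (_ : v ∈ (bx d (2 ^ n * m) \ bx d m) ∩
      (bx d (2 * (2 ^ n * m)) \ bx d (2 ^ n * m))) => hnn v)
    rw [Finset.sum_range_succ, mul_add]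
    have e2 : ((2 ^ n * m : ℕ) : ℝ) ^ (γ - s) = (m : ℝ) ^ (γ - s) * ((2 : ℝ) ^ (γ - s)) ^ n := by
      push_cast
      rw [Real.mul_rpow (by positivity) hm0.le, ← Real.rpow_natCast, ← Real.rpow_natCast,
        ← Real.rpow_mul (by norm_num), ← Real.rpow_mul (by norm_num), mul_comm (n : ℝ), mul_comm]
    rw [e2] at h1
    linarith

/-- far sums -/
theorem far_sum (h : γ < s) : ∃ K : ℝ, 0 < K ∧ ∀ (g : V d → ℝ) (G : ℝ), (∀ v, 0 ≤ g v) → 0 ≤ G →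
    (∀ r : ℕ, 1 ≤ r → ∑ v ∈ bx d r, g v ≤ G * (r : ℝ) ^ γ) → ∀ l N : ℕ, 1 ≤ l →
    ∑ v ∈ bx d N \ bx d l, (normInf v : ℝ) ^ (-s) * g v ≤ K * G * (l : ℝ) ^ (γ - s) := by
  set q : ℝ := 2 ^ (γ - s) with hq
  have hq0 : 0 < q := by positivity
  have hq1 : q < 1 := Real.rpow_lt_one_of_one_lt_of_neg (by norm_num) (by linarith)
  refine ⟨2 ^ (|s| + γ) * (1 - q)⁻¹, by have : 0 < 1 - q := by linarith
                                        positivity, ?_⟩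
  intro g G hg hG0 hG l N hl
  have h1 := ann_sum (s := s) hg hG hl N
  have hN : N ≤ 2 ^ N * l := by
    have : N < 2 ^ N := Nat.lt_two_pow_self
    nlinarith
  have h2 : ∑ v ∈ bx d N \ bx d l, (normInf v : ℝ) ^ (-s) * g v ≤
      ∑ v ∈ bx d (2 ^ N * l) \ bx d l, (normInf v : ℝ) ^ (-s) * g v :=
    Finset.sum_le_sum_of_subset_of_nonneg (Finset.sdiff_subset_sdiff (bx_mono hN) le_rfl)
      fun v _ _ => mul_nonneg (by positivity) (hg v)
  have h3 : ∑ k ∈ Finset.range N, q ^ k ≤ (1 - q)⁻¹ := by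
    rw [← tsum_geometric_of_lt_one hq0.le hq1]
    exact (summable_geometric_of_lt_one hq0.le hq1).sum_le_tsum _ fun _ _ => by positivity
  refine h2.trans (h1.trans ?_)
  calc _ ≤ 2 ^ (|s| + γ) * G * (l : ℝ) ^ (γ - s) * (1 - q)⁻¹ :=
        mul_le_mul_of_nonneg_left h3 (by positivity)
    _ = _ := by ring

/-- sums over a punctured box, reduced to dyadic annuli -/
theorem near_aux (hg : ∀ v, 0 ≤ g v) (hG0 : 0 ≤ G)
    (hG : ∀ r : ℕ, 1 ≤ r → ∑ v ∈ bx d r, g v ≤ G * (r : ℝ) ^ γ) {l n : ℕ} (hl : l ≤ 2 ^ n) :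
    ∑ v ∈ bx d l \ bx d 0, (normInf v : ℝ) ^ (-s) * g v ≤
      G + 2 ^ (|s| + γ) * G * ∑ k ∈ Finset.range n, ((2 : ℝ) ^ (γ - s)) ^ k := by
  have hnn : ∀ v, 0 ≤ (normInf v : ℝ) ^ (-s) * g v := fun v => mul_nonneg (by positivity) (hg v)
  have h1 := ann_sum (s := s) hg hG (m := 1) le_rfl n
  rw [mul_one, Nat.cast_one, Real.one_rpow, mul_one] at h1
  have hsub : bx d l \ bx d 0 ⊆ (bx d 1 \ bx d 0) ∪ (bx d (2 ^ n) \ bx d 1) := by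
    intro v
    simp only [Finset.mem_union, Finset.mem_sdiff, mem_bx]
    omega
  refine (Finset.sum_le_sum_of_subset_of_nonneg hsub fun v _ _ => hnn v).trans ?_
  have hdis : Disjoint (bx d 1 \ bx d 0) (bx d (2 ^ n) \ bx d 1) := by
    rw [Finset.disjoint_left]
    intro v
    simp only [Finset.mem_sdiff, mem_bx]
    omega
  rw [Finset.sum_union hdis]
  apply add_le_add _ h1
  have h2 : ∑ v ∈ bx d 1 \ bx d 0, (normInf v : ℝ) ^ (-s) * g v ≤ ∑ v ∈ bx d 1, g v := by
    refine le_trans (Finset.sum_le_sum fun v hv => ?_)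
      (Finset.sum_le_sum_of_subset_of_nonneg Finset.sdiff_subset fun v _ _ => hg v)
    rw [Finset.mem_sdiff, mem_bx, mem_bx] at hv
    have : normInf v = 1 := by omega
    rw [this]; simp
  have h3 := hG 1 le_rfl
  simp only [Nat.cast_one, Real.one_rpow, mul_one] at h3
  linarith

theorem exists_dyadic {l : ℕ} (hl : 1 ≤ l) : ∃ n : ℕ, l ≤ 2 ^ n ∧ 2 ^ n ≤ 2 * l := by
  refine ⟨Nat.log 2 l + 1, (Nat.lt_pow_succ_log_self (by norm_num) l).le, ?_⟩
  rw [pow_succ, mul_comm]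
  exact Nat.mul_le_mul_left 2 (Nat.pow_log_le_self 2 (by omega))

theorem near_sum (h : s < γ) : ∃ K : ℝ, 0 < K ∧ ∀ (g : V d → ℝ) (G : ℝ), (∀ v, 0 ≤ g v) → 0 ≤ G →
    (∀ r : ℕ, 1 ≤ r → ∑ v ∈ bx d r, g v ≤ G * (r : ℝ) ^ γ) → ∀ l : ℕ, 1 ≤ l →
    ∑ v ∈ bx d l \ bx d 0, (normInf v : ℝ) ^ (-s) * g v ≤ K * G * (l : ℝ) ^ (γ - s) := by
  set q : ℝ := 2 ^ (γ - s) with hq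
  have hq0 : 0 < q := by positivity
  have hq1 : 1 < q := Real.one_lt_rpow (by norm_num) (by linarith)
  have hq2 : 0 < q - 1 := by linarith
  refine ⟨1 + 2 ^ (|s| + γ) * (2 ^ (γ - s) / (q - 1)), by positivity, ?_⟩
  intro g G hg hG0 hG l hl
  obtain ⟨n, hn1, hn2⟩ := exists_dyadic hl
  have hl1 : (1 : ℝ) ≤ l := by exact_mod_cast hl
  have h1 := near_aux (s := s) hg hG0 hG hn1
  have h2 : ∑ k ∈ Finset.range n, q ^ k ≤ 2 ^ (γ - s) / (q - 1) * (l : ℝ) ^ (γ - s) := by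
    rw [geom_sum_eq hq1.ne', div_mul_eq_mul_div]
    apply div_le_div_of_nonneg_right _ hq2.le
    have : q ^ n ≤ 2 ^ (γ - s) * (l : ℝ) ^ (γ - s) := by
      rw [hq, ← Real.mul_rpow (by norm_num) (by positivity), ← Real.rpow_natCast,
        ← Real.rpow_mul (by norm_num), mul_comm, Real.rpow_mul (by norm_num), Real.rpow_natCast]
      apply Real.rpow_le_rpow (by positivity) (by exact_mod_cast hn2) (by linarith)
    linarith
  have h3 : 1 ≤ (l : ℝ) ^ (γ - s) := Real.one_le_rpow hl1 (by linarith)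
  have h4 := mul_le_mul_of_nonneg_left h2 (by positivity : 0 ≤ (2 : ℝ) ^ (|s| + γ) * G)
  have h5 := mul_le_mul_of_nonneg_left h3 hG0
  calc _ ≤ _ := h1
    _ ≤ G * (l : ℝ) ^ (γ - s) + 2 ^ (|s| + γ) * G * (2 ^ (γ - s) / (q - 1) * (l : ℝ) ^ (γ - s)) := by
        linarith
    _ = _ := by ring

theorem log_sum : ∃ K : ℝ, 0 < K ∧ ∀ (g : V d → ℝ) (G : ℝ), (∀ v, 0 ≤ g v) → 0 ≤ G →
    (∀ r : ℕ, 1 ≤ r → ∑ v ∈ bx d r, g v ≤ G * (r : ℝ) ^ γ) → ∀ l : ℕ, 1 ≤ l →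
    ∑ v ∈ bx d l \ bx d 0, (normInf v : ℝ) ^ (-γ) * g v ≤ K * G * (1 + Real.log l) := by
  refine ⟨1 + 2 ^ (|γ| + γ) * 2, by positivity, ?_⟩
  intro g G hg hG0 hG l hl
  obtain ⟨n, hn1, hn2⟩ := exists_dyadic hl
  have hl1 : (1 : ℝ) ≤ l := by exact_mod_cast hl
  have h1 := near_aux (s := γ) hg hG0 hG hn1
  simp only [sub_self, Real.rpow_zero, one_pow, Finset.sum_const, Finset.card_range,
    nsmul_eq_mul, mul_one] at h1
  have hlog : 0 ≤ Real.log l := Real.log_nonneg hl1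
  have h2 : (n : ℝ) ≤ 2 * (1 + Real.log l) := by
    have : Real.log ((2 : ℝ) ^ n) ≤ Real.log (2 * l) :=
      Real.log_le_log (by positivity) (by exact_mod_cast hn2)
    rw [Real.log_pow, Real.log_mul (by norm_num) (by positivity)] at this
    have h5 := Real.log_two_gt_d9
    have h6 := Real.log_two_lt_d9
    have hn0 : (0 : ℝ) ≤ n := by positivity
    nlinarith
  have h4 := mul_le_mul_of_nonneg_left h2 (by positivity : 0 ≤ (2 : ℝ) ^ (|γ| + γ) * G)
  have h5 := mul_nonneg hG0 hlog
  calc _ ≤ _ := h1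
    _ ≤ G * (1 + Real.log l) + 2 ^ (|γ| + γ) * G * (2 * (1 + Real.log l)) := by linarith
    _ = _ := by ring

end Dy

section Boot
variable {d : ℕ}

noncomputable def ww (R : ℕ) (a b : V d) : ℝ :=
  if normInf b ≤ R then 0 else min 1 ((normInf (b - a) : ℝ) / R)

theorem ww_nonneg (R : ℕ) (a b : V d) : 0 ≤ ww R a b := by
  unfold ww; split_ifs <;> positivity

theorem ww_le_one (R : ℕ) (a b : V d) : ww R a b ≤ 1 := by
  unfold ww; split_ifs
  · norm_num
  · exact min_le_left _ _

theorem ww_le (R : ℕ) (a b : V d) : ww R a b ≤ (normInf (b - a) : ℝ) / R := by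
  unfold ww; split_ifs
  · positivity
  · exact min_le_right _ _

structure BT (d : ℕ) (α A B : ℝ) (τ : V d → ℝ) (t : ℕ → V d → ℝ) : Prop where
  nn : ∀ x, 0 ≤ τ x
  le1 : ∀ x, τ x ≤ 1
  ev : ∀ x, τ (-x) = τ x
  tnn : ∀ n x, 0 ≤ t n x
  tz : ∀ n x, n < normInf x → t n x = 0
  tA : ∀ n, 1 ≤ n → ∑ a ∈ bx d n, t n a ≤ A * (n : ℝ) ^ α
  sup : ∀ x u, (∀ n, t n x ≤ u) → τ x ≤ u
  av : ∀ R : ℕ, 1 ≤ R → ∀ x N, t N x ≤ t (2 * R) x + ∑ a ∈ bx d (2 * R), t (2 * R) a *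
    ∑ b ∈ bx d N, B * (normInf (b - a) : ℝ) ^ (-((d : ℝ) + α)) * ww R a b * τ (x - b)

theorem count_le (R : ℕ) (hR : 1 ≤ R) (a b : V d) :
    ∑ ρ ∈ Finset.Ico R (2 * R), (if normInf a ≤ ρ ∧ ρ < normInf b then (1 : ℝ) else 0) ≤
      R * ww R a b := by
  rw [← Finset.sum_filter, Finset.sum_const, nsmul_eq_mul, mul_one]
  have hR0 : (0 : ℝ) < R := by exact_mod_cast hR
  unfold ww
  split_ifs with h
  · rw [Finset.filter_false_of_mem]
    · simp
    · intro ρ hρ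
      rw [Finset.mem_Ico] at hρ
      omega
  · rw [mul_min_of_nonneg _ _ hR0.le, mul_div_cancel₀ _ hR0.ne', mul_one]
    apply le_min
    · have := Finset.card_filter_le (Finset.Ico R (2 * R))
        (fun ρ => normInf a ≤ ρ ∧ ρ < normInf b)
      rw [Nat.card_Ico] at this
      exact_mod_cast this.trans (by omega)
    · have hs : (Finset.Ico R (2 * R)).filter (fun ρ => normInf a ≤ ρ ∧ ρ < normInf b) ⊆
          Finset.Ico (normInf a) (normInf b) := by
        intro ρ hρ
        rw [Finset.mem_filter] at hρ
        exact Finset.mem_Ico.2 hρ.2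
      have h1 := Finset.card_le_card hs
      rw [Nat.card_Ico] at h1
      have h2 := normInf_add (b - a) a
      rw [sub_add_cancel] at h2
      exact_mod_cast h1.trans (by omega)

theorem BT_mk {J : V d → V d → ℝ} {α c C : ℝ} (hJ : KernelHyp d J α c C) {β B A : ℝ} (hβ : 0 ≤ β)
    (hB : β * C ≤ B)
    (hA : ∀ ρ : ℕ, 1 ≤ ρ → ∑ a ∈ bx d ρ, tau (bx d ρ) (pp J β) 0 a ≤ A * (ρ : ℝ) ^ α) :
    BT d α A B (fun x => ti (pp J β) 0 x) (fun n x => tau (bx d n) (pp J β) 0 x) := by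
  have hp := PP_pp hJ hβ
  have hT := TI_pp hJ β
  set p := pp J β with hpd
  have h0 : ∀ n, (0 : V d) ∈ bx d n := fun n => by rw [mem_bx, normInf_zero]; omega
  have hz : ∀ n (x : V d), n < normInf x → tau (bx d n) p 0 x = 0 := fun n x h =>
    tau_zero (h0 n) (by rw [mem_bx]; omega)
  refine ⟨fun x => ti_nonneg hp _ _, fun x => ti_le_one hp _ _, fun x => ti_even hp hT x,
    fun n x => tau_nonneg _ hp _ _, hz, hA, fun x u h => ti_le h, ?_⟩
  intro R hR x N
  have hC0 : 0 ≤ B := by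
    have := hJ.c_pos; have := hJ.c_le_C
    exact le_trans (mul_nonneg hβ (by linarith)) hB
  have hR0 : (0 : ℝ) < R := by exact_mod_cast hR
  have hFnn : ∀ a b : V d, 0 ≤ tau (bx d (2 * R)) p 0 a * (B * (normInf (b - a) : ℝ) ^
      (-((d : ℝ) + α)) * ti p 0 (x - b)) := fun a b =>
    mul_nonneg (tau_nonneg _ hp _ _) (mul_nonneg (by positivity) (ti_nonneg hp _ _))
  have hrhs : 0 ≤ ∑ a ∈ bx d (2 * R), tau (bx d (2 * R)) p 0 a *
    ∑ b ∈ bx d N, B * (normInf (b - a) : ℝ) ^ (-((d : ℝ) + α)) * ww R a b * ti p 0 (x - b) :=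
    Finset.sum_nonneg fun a _ => mul_nonneg (tau_nonneg _ hp _ _) (Finset.sum_nonneg fun b _ =>
      mul_nonneg (mul_nonneg (by positivity) (ww_nonneg _ _ _)) (ti_nonneg hp _ _))
  by_cases hN : N < 2 * R
  · have := tau_mono (bx_mono (d := d) hN.le) hp 0 x
    linarith
  by_cases hx : N < normInf x
  · have := tau_nonneg (bx d (2 * R)) hp 0 x
    rw [hz N x hx]
    linarith
  push Not at hN hx
  have key : ∀ ρ ∈ Finset.Ico R (2 * R), tau (bx d N) p 0 x ≤ tau (bx d (2 * R)) p 0 x +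
      ∑ a ∈ bx d (2 * R), ∑ b ∈ bx d N, (if normInf a ≤ ρ ∧ ρ < normInf b then (1 : ℝ) else 0) *
        (tau (bx d (2 * R)) p 0 a * (B * (normInf (b - a) : ℝ) ^
      (-((d : ℝ) + α)) * ti p 0 (x - b))) := by
    intro ρ hρ
    rw [Finset.mem_Ico] at hρ
    have h1 := simon_lieb (bx_mono (d := d) (by omega : ρ ≤ N)) hp (h0 ρ) (mem_bx.2 hx)
    refine h1.trans (add_le_add (tau_mono (bx_mono hρ.2.le) hp _ _) ?_)
    have e1 : ∀ a b : V d, 0 ≤ (if normInf a ≤ ρ ∧ ρ < normInf b then (1 : ℝ) else 0) *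
        (tau (bx d (2 * R)) p 0 a * (B * (normInf (b - a) : ℝ) ^
      (-((d : ℝ) + α)) * ti p 0 (x - b))) := fun a b =>
      mul_nonneg (by split_ifs <;> norm_num) (hFnn a b)
    refine le_trans ?_ (Finset.sum_le_sum_of_subset_of_nonneg (bx_mono hρ.2.le)
      (fun a _ _ => Finset.sum_nonneg fun b _ => e1 a b))
    apply Finset.sum_le_sum
    intro a ha
    refine le_trans ?_ (Finset.sum_le_sum_of_subset_of_nonneg (Finset.sdiff_subset (t := bx d ρ))
      (fun b _ _ => e1 a b))
    apply Finset.sum_le_sum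
    intro b hb
    rw [Finset.mem_sdiff, mem_bx, mem_bx] at hb
    rw [mem_bx] at ha
    rw [if_pos ⟨ha, by omega⟩, one_mul, mul_assoc]
    apply mul_le_mul (tau_mono (bx_mono hρ.2.le) hp _ _) _ _ (tau_nonneg _ hp _ _)
    · apply mul_le_mul _ _ (tau_nonneg _ hp _ _) (by positivity)
      · refine (pp_le hJ β a b).trans ?_
        have hab : a ≠ b := by rintro rfl; omega
        have h2 := hJ.upper a b hab
        have e : normInf (a - b) = normInf (b - a) := by rw [← normInf_neg, neg_sub]
        rw [e] at h2
        have e3 : -(d : ℝ) - α = -((d : ℝ) + α) := by ring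
        rw [e3] at h2
        calc β * J a b ≤ β * (C * (normInf (b - a) : ℝ) ^ (-((d : ℝ) + α))) :=
              mul_le_mul_of_nonneg_left h2 hβ
          _ = (β * C) * (normInf (b - a) : ℝ) ^ (-((d : ℝ) + α)) := by ring
          _ ≤ _ := mul_le_mul_of_nonneg_right hB (by positivity)
      · rw [← ti_zero hp hT]
        exact tau_le_ti hp _ _ _
    · exact mul_nonneg (hp _).1 (tau_nonneg _ hp _ _)
  have h3 := Finset.sum_le_sum key
  rw [Finset.sum_const, Nat.card_Ico, Finset.sum_add_distrib, Finset.sum_const, Nat.card_Ico,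
    show 2 * R - R = R by omega, nsmul_eq_mul, nsmul_eq_mul, Finset.sum_comm] at h3
  have h4 : ∑ a ∈ bx d (2 * R), ∑ ρ ∈ Finset.Ico R (2 * R), ∑ b ∈ bx d N,
      (if normInf a ≤ ρ ∧ ρ < normInf b then (1 : ℝ) else 0) *
        (tau (bx d (2 * R)) p 0 a * (B * (normInf (b - a) : ℝ) ^
      (-((d : ℝ) + α)) * ti p 0 (x - b))) ≤ R * ∑ a ∈ bx d (2 * R), tau (bx d (2 * R)) p 0 a *
    ∑ b ∈ bx d N, B * (normInf (b - a) : ℝ) ^ (-((d : ℝ) + α)) * ww R a b * ti p 0 (x - b) := by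
    rw [Finset.mul_sum]
    apply Finset.sum_le_sum
    intro a _
    rw [Finset.sum_comm, Finset.mul_sum, Finset.mul_sum]
    apply Finset.sum_le_sum
    intro b _
    rw [← Finset.sum_mul]
    refine (mul_le_mul_of_nonneg_right (count_le R hR a b) (hFnn a b)).trans (le_of_eq ?_)
    ring
  have h5 := h3.trans (add_le_add le_rfl h4)
  rw [← mul_add] at h5
  exact le_of_mul_le_mul_left h5 hR0

def GB (d : ℕ) (α : ℝ) (τ : V d → ℝ) (G : ℝ) : Prop :=
  ∀ (z : V d) (r : ℕ), 1 ≤ r → ∑ v ∈ bx d r, τ (z + v) ≤ G * (r : ℝ) ^ α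

theorem shift_sum {f : V d → ℝ} (hf : ∀ v, 0 ≤ f v) {a : V d} {s : ℕ} (ha : normInf a ≤ s) (N : ℕ) :
    ∑ b ∈ bx d N, f (b - a) ≤ ∑ v ∈ bx d (N + s), f v := by
  have e : ∑ b ∈ bx d N, f (b - a) = ∑ v ∈ (bx d N).map (addRightEmbedding (-a)), f v := by
    rw [Finset.sum_map]; simp [sub_eq_add_neg]
  rw [e]
  apply Finset.sum_le_sum_of_subset_of_nonneg _ fun v _ _ => hf v
  intro v hv
  rw [Finset.mem_map] at hv
  obtain ⟨b, hb, rfl⟩ := hv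
  rw [mem_bx] at *
  have := normInf_sub b a
  simp only [addRightEmbedding_apply, ← sub_eq_add_neg]
  omega

variable {α : ℝ}

theorem rpow_split {k : ℕ} (hd : 1 ≤ d) (hα0 : 0 < α) :
    (k : ℝ) ^ (-((d : ℝ) + α)) * k = (k : ℝ) ^ (-((d : ℝ) + α - 1)) ∨ k = 0 := by
  rcases Nat.eq_zero_or_pos k with h | h
  · right; exact h
  · left
    have : (0 : ℝ) < k := by exact_mod_cast h
    rw [← Real.rpow_add_one this.ne']
    congr 1; ring

/-- splitting a sum into short and long range parts -/
theorem split_bound (hd : 1 ≤ d) (hα0 : 0 < α) {N l R : ℕ} (hR : 1 ≤ R) {M : ℝ} (hM : 0 ≤ M)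
    {f h : V d → ℝ} (h0 : ∀ v, 0 ≤ h v)
    (hs : ∀ v, normInf v ≤ l → f v ≤ (normInf v : ℝ) / R * M)
    (hl : ∀ v, l < normInf v → f v ≤ h v) :
    ∑ v ∈ bx d N, (normInf v : ℝ) ^ (-((d : ℝ) + α)) * f v ≤
      (∑ v ∈ bx d l \ bx d 0, (normInf v : ℝ) ^ (-((d : ℝ) + α - 1)) * 1) * (M / R) +
      ∑ v ∈ bx d N \ bx d l, (normInf v : ℝ) ^ (-((d : ℝ) + α)) * h v := by
  have hR0 : (0 : ℝ) < R := by exact_mod_cast hR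
  have hne : (-((d : ℝ) + α)) ≠ 0 := by
    have : (0 : ℝ) ≤ d := by positivity
    linarith
  set F : V d → ℝ := fun v => if v ∈ bx d l \ bx d 0 then
    (normInf v : ℝ) ^ (-((d : ℝ) + α - 1)) * 1 * (M / R) else 0 with hF
  set F2 : V d → ℝ := fun v => if v ∈ bx d N \ bx d l then
    (normInf v : ℝ) ^ (-((d : ℝ) + α)) * h v else 0 with hF2
  have hF0 : ∀ v, 0 ≤ F v := by
    intro v; simp only [hF]; split_ifs
    · positivity
    · exact le_rfl
  have hF20 : ∀ v, 0 ≤ F2 v := by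
    intro v; simp only [hF2]; split_ifs
    · exact mul_nonneg (by positivity) (h0 v)
    · exact le_rfl
  have h1 : ∑ v ∈ bx d N, (normInf v : ℝ) ^ (-((d : ℝ) + α)) * f v ≤
      ∑ v ∈ bx d N, (F v + F2 v) := by
    apply Finset.sum_le_sum
    intro v hv
    by_cases hvl : l < normInf v
    · have : F2 v = (normInf v : ℝ) ^ (-((d : ℝ) + α)) * h v := by
        simp only [hF2]; rw [if_pos]
        rw [Finset.mem_sdiff, mem_bx (r := l)]; exact ⟨hv, by omega⟩
      rw [this]
      have := mul_le_mul_of_nonneg_left (hl v hvl)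
        (by positivity : 0 ≤ (normInf v : ℝ) ^ (-((d : ℝ) + α)))
      linarith [hF0 v]
    · push Not at hvl
      rcases rpow_split (k := normInf v) hd hα0 with h2 | h2
      · by_cases hv0 : normInf v = 0
        · rw [hv0, Nat.cast_zero, Real.zero_rpow hne, zero_mul]
          exact add_nonneg (hF0 v) (hF20 v)
        have : F v = (normInf v : ℝ) ^ (-((d : ℝ) + α - 1)) * 1 * (M / R) := by
          simp only [hF]; rw [if_pos]
          rw [Finset.mem_sdiff, mem_bx, mem_bx]; exact ⟨hvl, by omega⟩
        rw [this, ← h2]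
        have h3 := mul_le_mul_of_nonneg_left (hs v hvl)
          (by positivity : 0 ≤ (normInf v : ℝ) ^ (-((d : ℝ) + α)))
        have h4 : (normInf v : ℝ) ^ (-((d : ℝ) + α)) * (normInf v / R * M) =
          (normInf v : ℝ) ^ (-((d : ℝ) + α)) * normInf v * 1 * (M / R) := by ring
        linarith [hF20 v]
      · rw [h2, Nat.cast_zero, Real.zero_rpow hne, zero_mul]
        exact add_nonneg (hF0 v) (hF20 v)
  refine h1.trans ?_
  rw [Finset.sum_add_distrib]
  apply add_le_add
  · rw [Finset.sum_mul]
    simp only [hF]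
    rw [← Finset.sum_filter]
    apply Finset.sum_le_sum_of_subset_of_nonneg
    · intro v hv
      exact (Finset.mem_filter.1 hv).2
    · intro v _ _; positivity
  · simp only [hF2]
    rw [← Finset.sum_filter]
    apply Finset.sum_le_sum_of_subset_of_nonneg
    · intro v hv
      exact (Finset.mem_filter.1 hv).2
    · intro v _ _; exact mul_nonneg (by positivity) (h0 v)

end Boot

section Boot2
variable {d : ℕ} {α : ℝ}

theorem pt_step (hd : 1 ≤ d) (hα0 : 0 < α) (hα1 : α < 1) : ∃ K : ℝ, 0 < K ∧
    ∀ (A B : ℝ) (τ : V d → ℝ) (t : ℕ → V d → ℝ), 0 ≤ A → 0 ≤ B → BT d α A B τ t →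
    ∀ G : ℝ, 0 ≤ G → GB d α τ G → ∀ m l n : ℕ, 1 ≤ m → 1 ≤ l → 4 * (m * l) ≤ n →
    ∀ x : V d, n ≤ normInf x → ∀ M : ℝ, 0 ≤ M → (∀ z, n ≤ 4 * normInf z → τ z ≤ M) →
    τ x ≤ A * B * K * ((m : ℝ) ^ (-(1 - α)) * M +
      (m : ℝ) ^ (d : ℝ) * G * ((m * l : ℕ) : ℝ) ^ (-((d : ℝ) - α))) := by
  obtain ⟨K1, hK1, near⟩ := near_sum (d := d) (γ := (d : ℝ)) (s := (d : ℝ) + α - 1) (by linarith)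
  have hdr : (1 : ℝ) ≤ d := by exact_mod_cast hd
  obtain ⟨K2, hK2, far⟩ := far_sum (d := d) (γ := α) (s := (d : ℝ) + α) (by linarith)
  refine ⟨2 * (K1 * 3 ^ d + K2), by positivity, ?_⟩
  intro A B τ t hA hB bt G hG0 hG m l n hm hl hn x hx M hM hMz
  set R := m * l with hR
  have hR1 : 1 ≤ R := Nat.mul_pos hm hl
  have hlR : l ≤ R := Nat.le_mul_of_pos_left l hm
  have hR0 : (0 : ℝ) < R := by exact_mod_cast hR1
  have hm0 : (0 : ℝ) < m := by exact_mod_cast hm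
  have hl0 : (0 : ℝ) < l := by exact_mod_cast hl
  have hRml : (R : ℝ) = m * l := by rw [hR]; push_cast; rfl
  set S : ℝ := B * (K1 * 3 ^ d * (l : ℝ) ^ (1 - α) * (M / R) + K2 * G * (l : ℝ) ^ (-(d : ℝ)))
    with hS
  have hS0 : 0 ≤ S := by positivity
  have inner : ∀ N, ∀ a ∈ bx d (2 * R), ∑ b ∈ bx d N,
      B * (normInf (b - a) : ℝ) ^ (-((d : ℝ) + α)) * ww R a b * τ (x - b) ≤ S := by
    intro N a ha
    rw [mem_bx] at ha
    set f : V d → ℝ := fun v => if normInf v ≤ l then (normInf v : ℝ) / R * M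
      else τ (x - a - v) with hf
    have hf0 : ∀ v, 0 ≤ f v := by
      intro v; simp only [hf]; split_ifs
      · positivity
      · exact bt.nn _
    have h1 : ∑ b ∈ bx d N, B * (normInf (b - a) : ℝ) ^ (-((d : ℝ) + α)) * ww R a b * τ (x - b) ≤
        ∑ b ∈ bx d N, B * ((normInf (b - a) : ℝ) ^ (-((d : ℝ) + α)) * f (b - a)) := by
      apply Finset.sum_le_sum
      intro b _
      rw [mul_assoc, mul_assoc]
      apply mul_le_mul_of_nonneg_left _ hB
      apply mul_le_mul_of_nonneg_left _ (by positivity)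
      simp only [hf]
      split_ifs with hb
      · apply mul_le_mul (ww_le _ _ _) _ (bt.nn _) (by positivity)
        apply hMz
        have e1 := normInf_add (x - b) b
        have e2 := normInf_add (b - a) a
        rw [sub_add_cancel] at e1 e2
        omega
      · rw [show x - a - (b - a) = x - b by abel]
        exact mul_le_of_le_one_left (bt.nn _) (ww_le_one _ _ _)
    refine h1.trans ?_
    rw [← Finset.mul_sum]
    apply mul_le_mul_of_nonneg_left _ hB
    refine (shift_sum (f := fun v => (normInf v : ℝ) ^ (-((d : ℝ) + α)) * f v)
      (fun v => mul_nonneg (by positivity) (hf0 v)) ha N).trans ?_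
    refine (split_bound (l := l) (h := fun v => τ (x - a - v)) hd hα0 hR1 hM (fun v => bt.nn _)
      ?_ ?_).trans ?_
    · intro v hv; simp only [hf]; rw [if_pos hv]
    · intro v hv; simp only [hf]; rw [if_neg (by omega)]
    apply add_le_add
    · apply mul_le_mul_of_nonneg_right _ (by positivity)
      have := near (fun _ => 1) (3 ^ d) (fun _ => zero_le_one) (by positivity)
        (fun r hr => card_bx_le hr) l hl
      rwa [show (d : ℝ) - (d + α - 1) = 1 - α by ring] at this
    · have := far (fun v => τ (x - a - v)) G (fun _ => bt.nn _) hG0 (fun r hr => ?_) l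
        (N + 2 * R) hl
      · rwa [show α - (d + α) = -(d : ℝ) by ring] at this
      · have e := hG (a - x) r hr
        refine le_trans (le_of_eq ?_) e
        apply Finset.sum_congr rfl
        intro v _
        rw [← bt.ev]; congr 1; abel
  have h2 : τ x ≤ A * ((2 * R : ℕ) : ℝ) ^ α * S := by
    apply bt.sup
    intro N
    refine (bt.av R hR1 x N).trans ?_
    rw [bt.tz (2 * R) x (by omega), zero_add]
    refine (Finset.sum_le_sum fun a ha => mul_le_mul_of_nonneg_left (inner N a ha)
      (bt.tnn _ _)).trans ?_
    rw [← Finset.sum_mul]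
    exact mul_le_mul_of_nonneg_right (bt.tA _ (by omega)) hS0
  refine h2.trans ?_
  have h3 : ((2 * R : ℕ) : ℝ) ^ α ≤ 2 * (R : ℝ) ^ α := by
    push_cast
    rw [Real.mul_rpow (by norm_num) hR0.le]
    apply mul_le_mul_of_nonneg_right _ (by positivity)
    calc (2 : ℝ) ^ α ≤ 2 ^ (1 : ℝ) := Real.rpow_le_rpow_of_exponent_le (by norm_num) hα1.le
      _ = 2 := by norm_num
  have e1 : (R : ℝ) ^ α * ((l : ℝ) ^ (1 - α) / R) = (m : ℝ) ^ (-(1 - α)) := by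
    have : (l : ℝ) ^ (1 - α) * (m : ℝ) ^ (1 - α) = (R : ℝ) ^ (1 - α) := by
      rw [hRml, Real.mul_rpow hm0.le hl0.le, mul_comm]
    have h5 : (R : ℝ) ^ α * (R : ℝ) ^ (1 - α) = R := by
      rw [← Real.rpow_add hR0]; simp
    rw [Real.rpow_neg hm0.le]
    have hmp : 0 < (m : ℝ) ^ (1 - α) := by positivity
    apply eq_inv_of_mul_eq_one_left
    calc _ = (R : ℝ) ^ α * ((l : ℝ) ^ (1 - α) * (m : ℝ) ^ (1 - α)) / R := by ring
      _ = _ := by rw [this, h5, div_self hR0.ne']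
  have e2 : (R : ℝ) ^ α * (l : ℝ) ^ (-(d : ℝ)) = (m : ℝ) ^ (d : ℝ) * (R : ℝ) ^ (-((d : ℝ) - α)) := by
    have : (R : ℝ) ^ (-((d : ℝ) - α)) = (R : ℝ) ^ α * (R : ℝ) ^ (-(d : ℝ)) := by
      rw [← Real.rpow_add hR0]; congr 1; ring
    rw [this, hRml, Real.mul_rpow hm0.le hl0.le (z := -(d : ℝ)), Real.rpow_neg hm0.le]
    have hmp : (m : ℝ) ^ (d : ℝ) ≠ 0 := by positivity
    field_simp
  calc A * ((2 * R : ℕ) : ℝ) ^ α * S ≤ A * (2 * (R : ℝ) ^ α) * S := by gcongr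
    _ = 2 * A * B * (K1 * 3 ^ d * ((R : ℝ) ^ α * ((l : ℝ) ^ (1 - α) / R)) * M +
        K2 * G * ((R : ℝ) ^ α * (l : ℝ) ^ (-(d : ℝ)))) := by rw [hS]; ring
    _ = 2 * A * B * (K1 * 3 ^ d * ((m : ℝ) ^ (-(1 - α)) * M) +
        K2 * ((m : ℝ) ^ (d : ℝ) * G * (R : ℝ) ^ (-((d : ℝ) - α)))) := by rw [e1, e2]; ring
    _ ≤ 2 * A * B * ((K1 * 3 ^ d + K2) * ((m : ℝ) ^ (-(1 - α)) * M) +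
        (K1 * 3 ^ d + K2) * ((m : ℝ) ^ (d : ℝ) * G * (R : ℝ) ^ (-((d : ℝ) - α)))) := by
        gcongr
        · linarith
        · have : 0 < K1 * 3 ^ d := by positivity
          linarith
    _ = _ := by ring

theorem pt_bound (hd : 1 ≤ d) (hα0 : 0 < α) (hα1 : α < 1) (hαd : α < d) {A B : ℝ} (hA : 0 ≤ A)
    (hB : 0 ≤ B) : ∃ C1 : ℝ, 0 < C1 ∧
    ∀ (τ : V d → ℝ) (t : ℕ → V d → ℝ), BT d α A B τ t →
    ∀ G : ℝ, 0 ≤ G → GB d α τ G → ∀ n : ℕ, 1 ≤ n → ∀ x : V d, n ≤ normInf x →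
    τ x ≤ C1 * (1 + G) * (n : ℝ) ^ (-((d : ℝ) - α)) := by
  obtain ⟨K, hK, step⟩ := pt_step (d := d) hd hα0 hα1
  set E := (d : ℝ) - α with hE
  have hE0 : 0 < E := by linarith
  obtain ⟨m, hm, hm2⟩ : ∃ m : ℕ, 1 ≤ m ∧ A * B * K * 4 ^ E * (m : ℝ) ^ (-(1 - α)) ≤ 1 / 2 := by
    have h1 : Filter.Tendsto (fun m : ℕ => A * B * K * 4 ^ E * (m : ℝ) ^ (-(1 - α))) Filter.atTop
        (nhds (A * B * K * 4 ^ E * 0)) :=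
      ((tendsto_rpow_neg_atTop (by linarith)).comp tendsto_natCast_atTop_atTop).const_mul _
    rw [mul_zero] at h1
    have h2 := h1.eventually_le_const (by norm_num : (0 : ℝ) < 1 / 2)
    obtain ⟨m, h⟩ := (h2.and (Filter.eventually_ge_atTop 1)).exists
    exact ⟨m, h.2, h.1⟩
  have hm0 : (0 : ℝ) < m := by exact_mod_cast hm
  set D := A * B * K * (m : ℝ) ^ (d : ℝ) * 8 ^ E with hD
  have hD0 : 0 ≤ D := by positivity
  refine ⟨(8 * m) ^ E + 2 * D, by positivity, ?_⟩
  intro τ t bt G hG0 hG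
  set H := ((8 * m) ^ E + 2 * D) * (1 + G) with hH
  have hH0 : 0 ≤ H := by positivity
  intro n
  induction n using Nat.strong_induction_on with
  | _ n ih =>
  intro hn x hx
  have hn0 : (0 : ℝ) < n := by exact_mod_cast hn
  by_cases hsmall : n ≤ 8 * m
  · have h1 : (8 * m : ℝ) ^ (-E) ≤ (n : ℝ) ^ (-E) :=
      Real.rpow_le_rpow_of_nonpos hn0 (by exact_mod_cast hsmall) (by linarith)
    have h2 : (8 * m : ℝ) ^ E * (8 * m : ℝ) ^ (-E) = 1 := by
      rw [← Real.rpow_add (by positivity)]; simp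
    have h3 : (8 * m : ℝ) ^ E ≤ H := by
      rw [hH]
      have : 0 ≤ (8 * m : ℝ) ^ E := by positivity
      nlinarith [mul_nonneg this hG0, mul_nonneg hD0 hG0]
    calc τ x ≤ 1 := bt.le1 x
      _ = (8 * m : ℝ) ^ E * (8 * m : ℝ) ^ (-E) := h2.symm
      _ ≤ H * (n : ℝ) ^ (-E) := mul_le_mul h3 h1 (by positivity) hH0
  push Not at hsmall
  set l := n / (4 * m) with hl
  have hl1 : 1 ≤ l := (Nat.le_div_iff_mul_le (by omega)).2 (by omega)
  have hln : 4 * (m * l) ≤ n := by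
    have := Nat.mul_div_le n (4 * m)
    rw [← hl] at this
    linarith
  have hln2 : n ≤ 8 * (m * l) := by
    have h1 : n < 4 * m * (l + 1) := by
      rw [hl]; exact Nat.lt_mul_div_succ n (by omega)
    nlinarith
  have hM : ∀ z : V d, n ≤ 4 * normInf z → τ z ≤ H * (4 ^ E * (n : ℝ) ^ (-E)) := by
    intro z hz
    have h1 := ih ((n + 3) / 4) (by omega) (by omega) z (by omega)
    refine h1.trans (mul_le_mul_of_nonneg_left ?_ hH0)
    have h2 : (n : ℝ) / 4 ≤ ((n + 3) / 4 : ℕ) := by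
      have : n ≤ 4 * ((n + 3) / 4) := by omega
      have : (n : ℝ) ≤ 4 * ((n + 3) / 4 : ℕ) := by exact_mod_cast this
      linarith
    calc (((n + 3) / 4 : ℕ) : ℝ) ^ (-E) ≤ ((n : ℝ) / 4) ^ (-E) :=
          Real.rpow_le_rpow_of_nonpos (by positivity) h2 (by linarith)
      _ = _ := by
          rw [Real.div_rpow hn0.le (by norm_num), Real.rpow_neg (by norm_num : (0 : ℝ) ≤ 4)]
          field_simp
  have h4 := step A B τ t hA hB bt G hG0 hG m l n hm hl1 hln x hx _ (by positivity) hM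
  have h5 : ((m * l : ℕ) : ℝ) ^ (-E) ≤ 8 ^ E * (n : ℝ) ^ (-E) := by
    have h2 : (n : ℝ) / 8 ≤ ((m * l : ℕ) : ℝ) := by
      have : (n : ℝ) ≤ 8 * ((m * l : ℕ) : ℝ) := by exact_mod_cast hln2
      linarith
    calc ((m * l : ℕ) : ℝ) ^ (-E) ≤ ((n : ℝ) / 8) ^ (-E) :=
          Real.rpow_le_rpow_of_nonpos (by positivity) h2 (by linarith)
      _ = _ := by
          rw [Real.div_rpow hn0.le (by norm_num), Real.rpow_neg (by norm_num : (0 : ℝ) ≤ 8)]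
          field_simp
  set y := (n : ℝ) ^ (-E) with hy
  have hy0 : 0 ≤ y := by positivity
  calc τ x ≤ _ := h4
    _ ≤ A * B * K * ((m : ℝ) ^ (-(1 - α)) * (H * (4 ^ E * y)) + (m : ℝ) ^ (d : ℝ) * G * (8 ^ E * y)) := by
        gcongr
    _ = (A * B * K * 4 ^ E * (m : ℝ) ^ (-(1 - α))) * (H * y) + D * G * y := by rw [hD]; ring
    _ ≤ 1 / 2 * (H * y) + H / 2 * y := by
        apply add_le_add
        · exact mul_le_mul_of_nonneg_right hm2 (by positivity)
        · apply mul_le_mul_of_nonneg_right _ hy0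
          rw [hH]
          have : 0 ≤ (8 * m : ℝ) ^ E := by positivity
          nlinarith [mul_nonneg this hG0]
    _ = H * y := by ring

end Boot2

section Boot3
variable {d : ℕ} {α : ℝ}

theorem box_step (hd : 1 ≤ d) (hα0 : 0 < α) (hα1 : α < 1) (hαd : α < d) : ∃ K : ℝ, 0 < K ∧
    ∀ (A B : ℝ) (τ : V d → ℝ) (t : ℕ → V d → ℝ), 0 ≤ A → 0 ≤ B → BT d α A B τ t →
    ∀ H : ℝ, 0 ≤ H → (∀ n : ℕ, 1 ≤ n → ∀ x : V d, n ≤ normInf x →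
      τ x ≤ H * (n : ℝ) ^ (-((d : ℝ) - α))) →
    ∀ L : ℕ, 1 ≤ L → GB d α τ (A * (4 * (L + 2)) ^ α +
      3 ^ d * (1 + A * B * K) * H * (L : ℝ) ^ (-((d : ℝ) - α))) := by
  obtain ⟨K1, hK1, near⟩ := near_sum (d := d) (γ := (d : ℝ)) (s := (d : ℝ) + α - 1) (by linarith)
  obtain ⟨K2, hK2, far⟩ := far_sum (d := d) (γ := (d : ℝ)) (s := (d : ℝ) + α) (by linarith)
  refine ⟨2 * (K1 * 3 ^ d + K2 * 3 ^ d), by positivity, ?_⟩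
  intro A B τ t hA hB bt H hH hpt L hL z r hr
  set K := 2 * (K1 * 3 ^ d + K2 * 3 ^ d) with hK
  have hK0 : 0 < K := by positivity
  set E := (d : ℝ) - α with hE
  have hE0 : 0 < E := by linarith
  have hr0 : (0 : ℝ) < r := by exact_mod_cast hr
  have hL0 : (0 : ℝ) < L := by exact_mod_cast hL
  have hLr : 1 ≤ L * r := Nat.mul_pos hL hr
  have hLr0 : (0 : ℝ) < ((L * r : ℕ) : ℝ) := by exact_mod_cast hLr
  set Q := H * ((L * r : ℕ) : ℝ) ^ (-E) with hQ
  have hQ0 : 0 ≤ Q := by positivity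
  have hcard : ∀ W : ℝ, 0 ≤ W → ∑ _v ∈ bx d r, W * Q ≤ 3 ^ d * W * H * (L : ℝ) ^ (-E) * (r : ℝ) ^ α := by
    intro W hW
    have h1 := mul_le_mul_of_nonneg_right (card_bx_le (d := d) hr) (mul_nonneg hW hQ0)
    rw [Finset.sum_mul] at h1
    simp only [one_mul] at h1
    refine h1.trans (le_of_eq ?_)
    rw [hQ]
    push_cast
    rw [Real.mul_rpow hL0.le hr0.le]
    have : (r : ℝ) ^ (d : ℝ) * (r : ℝ) ^ (-E) = (r : ℝ) ^ α := by
      rw [← Real.rpow_add hr0]; congr 1; rw [hE]; ring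
    rw [← this]; ring
  have hsplit : (A * (4 * (L + 2) : ℝ) ^ α + 3 ^ d * (1 + A * B * K) * H * (L : ℝ) ^ (-E)) *
      (r : ℝ) ^ α = A * (4 * (L + 2) : ℝ) ^ α * (r : ℝ) ^ α +
      (3 ^ d * 1 * H * (L : ℝ) ^ (-E) * (r : ℝ) ^ α +
        3 ^ d * (A * B * K) * H * (L : ℝ) ^ (-E) * (r : ℝ) ^ α) := by ring
  rw [hsplit]
  have n1 : 0 ≤ A * (4 * (L + 2) : ℝ) ^ α * (r : ℝ) ^ α := by positivity
  have n2 : 0 ≤ 3 ^ d * 1 * H * (L : ℝ) ^ (-E) * (r : ℝ) ^ α := by positivity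
  have n3 : 0 ≤ 3 ^ d * (A * B * K) * H * (L : ℝ) ^ (-E) * (r : ℝ) ^ α := by positivity
  by_cases hz : (L + 1) * r ≤ normInf z
  · have h1 : ∑ v ∈ bx d r, τ (z + v) ≤ ∑ _v ∈ bx d r, 1 * Q := by
      apply Finset.sum_le_sum
      intro v hv
      rw [mem_bx] at hv
      rw [one_mul]
      apply hpt _ hLr
      have := normInf_sub (z + v) v
      rw [add_sub_cancel_right] at this
      nlinarith
    have := hcard 1 zero_le_one
    linarith
  push Not at hz
  set R := 2 * ((L + 2) * r) with hR
  have hR1 : 1 ≤ R := by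
    have : 1 ≤ (L + 2) * r := Nat.mul_pos (by omega) hr
    omega
  have hR0 : (0 : ℝ) < R := by exact_mod_cast hR1
  have hzv : ∀ v ∈ bx d r, normInf (z + v) ≤ (L + 2) * r := by
    intro v hv
    rw [mem_bx] at hv
    have := normInf_add z v
    nlinarith
  set S := B * (K1 * 3 ^ d * (R : ℝ) ^ (1 - α) * (Q / R) + K2 * (3 ^ d * Q) * (R : ℝ) ^ (-α)) with hS
  have hS0 : 0 ≤ S := by positivity
  have inner : ∀ x : V d, normInf x ≤ (L + 2) * r → ∀ N, ∀ a ∈ bx d (2 * R), ∑ b ∈ bx d N,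
      B * (normInf (b - a) : ℝ) ^ (-((d : ℝ) + α)) * ww R a b * τ (x - b) ≤ S := by
    intro x hx N a ha
    rw [mem_bx] at ha
    set f : V d → ℝ := fun v => if normInf v ≤ R then (normInf v : ℝ) / R * Q
      else Q with hf
    have hf0 : ∀ v, 0 ≤ f v := by
      intro v; simp only [hf]; split_ifs
      · positivity
      · exact hQ0
    have h1 : ∑ b ∈ bx d N, B * (normInf (b - a) : ℝ) ^ (-((d : ℝ) + α)) * ww R a b * τ (x - b) ≤
        ∑ b ∈ bx d N, B * ((normInf (b - a) : ℝ) ^ (-((d : ℝ) + α)) * f (b - a)) := by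
      apply Finset.sum_le_sum
      intro b _
      rw [mul_assoc, mul_assoc]
      apply mul_le_mul_of_nonneg_left _ hB
      apply mul_le_mul_of_nonneg_left _ (by positivity)
      by_cases hbR : normInf b ≤ R
      · have : ww R a b = 0 := by unfold ww; rw [if_pos hbR]
        rw [this, zero_mul]; exact hf0 _
      have hτ : τ (x - b) ≤ Q := by
        apply hpt _ hLr
        have e1 := normInf_sub x (x - b)
        rw [_root_.sub_sub_cancel] at e1
        have : L * r ≤ (L + 2) * r := Nat.mul_le_mul_right r (by omega)
        omega
      simp only [hf]
      split_ifs with hb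
      · exact mul_le_mul (ww_le _ _ _) hτ (bt.nn _) (by positivity)
      · exact (mul_le_of_le_one_left (bt.nn _) (ww_le_one _ _ _)).trans hτ
    refine h1.trans ?_
    rw [← Finset.mul_sum]
    apply mul_le_mul_of_nonneg_left _ hB
    refine (shift_sum (f := fun v => (normInf v : ℝ) ^ (-((d : ℝ) + α)) * f v)
      (fun v => mul_nonneg (by positivity) (hf0 v)) ha N).trans ?_
    refine (split_bound (l := R) (h := fun _ => Q) hd hα0 hR1 hQ0 (fun v => hQ0)
      ?_ ?_).trans ?_
    · intro v hv; simp only [hf]; rw [if_pos hv]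
    · intro v hv; simp only [hf]; rw [if_neg (by omega)]
    apply add_le_add
    · apply mul_le_mul_of_nonneg_right _ (by positivity)
      have := near (fun _ => 1) (3 ^ d) (fun _ => zero_le_one) (by positivity)
        (fun r hr => card_bx_le hr) R hR1
      rwa [show (d : ℝ) - (d + α - 1) = 1 - α by ring] at this
    · have := far (fun _ => Q) (3 ^ d * Q) (fun _ => hQ0) (by positivity) (fun r hr => ?_) R
        (N + 2 * R) hR1
      · rwa [show (d : ℝ) - (d + α) = -α by ring] at this
      · have := mul_le_mul_of_nonneg_right (card_bx_le (d := d) hr) hQ0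
        rw [Finset.sum_mul] at this
        simp only [one_mul] at this
        linarith
  have h3 : ((2 * R : ℕ) : ℝ) ^ α ≤ 2 * (R : ℝ) ^ α := by
    push_cast
    rw [Real.mul_rpow (by norm_num) hR0.le]
    apply mul_le_mul_of_nonneg_right _ (by positivity)
    calc (2 : ℝ) ^ α ≤ 2 ^ (1 : ℝ) := Real.rpow_le_rpow_of_exponent_le (by norm_num) hα1.le
      _ = 2 := by norm_num
  have e1 : (R : ℝ) ^ α * ((R : ℝ) ^ (1 - α) / R) = 1 := by
    rw [← mul_div_assoc, ← Real.rpow_add hR0]; simp [hR0.ne']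
  have e2 : (R : ℝ) ^ α * (R : ℝ) ^ (-α) = 1 := by
    rw [← Real.rpow_add hR0]; simp
  have h4 : A * ((2 * R : ℕ) : ℝ) ^ α * S ≤ A * B * K * Q := by
    calc A * ((2 * R : ℕ) : ℝ) ^ α * S ≤ A * (2 * (R : ℝ) ^ α) * S := by gcongr
      _ = 2 * A * B * Q * (K1 * 3 ^ d * ((R : ℝ) ^ α * ((R : ℝ) ^ (1 - α) / R)) +
          K2 * 3 ^ d * ((R : ℝ) ^ α * (R : ℝ) ^ (-α))) := by rw [hS]; ring
      _ = _ := by rw [e1, e2, hK]; ring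
  have h2 : ∀ x : V d, normInf x ≤ (L + 2) * r → τ x ≤ t (2 * R) x + A * B * K * Q := by
    intro x hx
    apply bt.sup
    intro N
    refine (bt.av R hR1 x N).trans (add_le_add le_rfl (le_trans ?_ h4))
    refine (Finset.sum_le_sum fun a ha => mul_le_mul_of_nonneg_left (inner x hx N a ha)
      (bt.tnn _ _)).trans ?_
    rw [← Finset.sum_mul]
    exact mul_le_mul_of_nonneg_right (bt.tA _ (by omega)) hS0
  have h5 : ∑ v ∈ bx d r, τ (z + v) ≤ ∑ v ∈ bx d r, (t (2 * R) (z + v) + A * B * K * Q) :=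
    Finset.sum_le_sum fun v hv => h2 _ (hzv v hv)
  rw [Finset.sum_add_distrib] at h5
  have h6 : ∑ v ∈ bx d r, t (2 * R) (z + v) ≤ A * (4 * (L + 2) : ℝ) ^ α * (r : ℝ) ^ α := by
    have e : ∑ v ∈ bx d r, t (2 * R) (z + v) =
        ∑ v ∈ (bx d r).map (addLeftEmbedding z), t (2 * R) v := by
      rw [Finset.sum_map]; simp
    have hsub : (bx d r).map (addLeftEmbedding z) ⊆ bx d (2 * R) := by
      intro y hy
      rw [Finset.mem_map] at hy
      obtain ⟨v, hv, rfl⟩ := hy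
      rw [mem_bx, addLeftEmbedding_apply]
      have := hzv v hv
      omega
    rw [e]
    refine (Finset.sum_le_sum_of_subset_of_nonneg hsub fun _ _ _ => bt.tnn _ _).trans ?_
    refine (bt.tA _ (by omega)).trans (le_of_eq ?_)
    rw [mul_assoc, ← Real.mul_rpow (by positivity) hr0.le, hR]
    push_cast
    congr 2; ring
  have h7 := hcard (A * B * K) (by positivity)
  linarith

theorem boot (hd : 1 ≤ d) (hα0 : 0 < α) (hα1 : α < 1) (hαd : α < d) {A B : ℝ} (hA : 0 ≤ A)
    (hB : 0 ≤ B) : ∃ G H : ℝ, 0 < G ∧ 0 < H ∧ ∀ (τ : V d → ℝ) (t : ℕ → V d → ℝ), BT d α A B τ t →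
      Summable τ → GB d α τ G ∧ ∀ n : ℕ, 1 ≤ n → ∀ x : V d, n ≤ normInf x →
        τ x ≤ H * (n : ℝ) ^ (-((d : ℝ) - α)) := by
  obtain ⟨C1, hC1, pt⟩ := pt_bound (d := d) hd hα0 hα1 hαd hA hB
  obtain ⟨K, hK, box⟩ := box_step (d := d) hd hα0 hα1 hαd
  set E := (d : ℝ) - α with hE
  have hE0 : 0 < E := by linarith
  obtain ⟨L, hL, hL2⟩ : ∃ L : ℕ, 1 ≤ L ∧ 3 ^ d * (1 + A * B * K) * C1 * (L : ℝ) ^ (-E) ≤ 1 / 2 := by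
    have h1 : Filter.Tendsto (fun L : ℕ => 3 ^ d * (1 + A * B * K) * C1 * (L : ℝ) ^ (-E)) Filter.atTop
        (nhds (3 ^ d * (1 + A * B * K) * C1 * 0)) :=
      ((tendsto_rpow_neg_atTop hE0).comp tendsto_natCast_atTop_atTop).const_mul _
    rw [mul_zero] at h1
    have h2 := h1.eventually_le_const (by norm_num : (0 : ℝ) < 1 / 2)
    obtain ⟨m, h⟩ := (h2.and (Filter.eventually_ge_atTop 1)).exists
    exact ⟨m, h.2, h.1⟩
  set K0 := A * (4 * (L + 2) : ℝ) ^ α + 1 / 2 with hK0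
  have hK00 : 0 < K0 := by positivity
  refine ⟨2 * K0, C1 * (1 + 2 * K0), by positivity, by positivity, ?_⟩
  intro τ t bt hs
  set χ := ∑' x, τ x with hχ
  have hχ0 : 0 ≤ χ := tsum_nonneg bt.nn
  have hGB : ∀ k : ℕ, GB d α τ (2 * K0 + χ * (1 / 2) ^ k) := by
    intro k
    induction k with
    | zero =>
      intro z r hr
      have h1 : ∑ v ∈ bx d r, τ (z + v) ≤ χ := by
        have e : ∑ v ∈ bx d r, τ (z + v) = ∑ v ∈ (bx d r).map (addLeftEmbedding z), τ v := by
          rw [Finset.sum_map]; simp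
        rw [e]
        exact hs.sum_le_tsum _ fun x _ => bt.nn x
      have h2 : 1 ≤ (r : ℝ) ^ α := Real.one_le_rpow (by exact_mod_cast hr) hα0.le
      rw [pow_zero, mul_one]
      nlinarith
    | succ k ih =>
      have h1 := pt τ t bt _ (by positivity) ih
      have h2 := box A B τ t hA hB bt _ (by positivity) h1 L hL
      intro z r hr
      refine (h2 z r hr).trans (mul_le_mul_of_nonneg_right ?_ (by positivity))
      set g := 2 * K0 + χ * (1 / 2) ^ k with hg
      have hg0 : 0 ≤ 1 + g := by positivity
      have h3 := mul_le_mul_of_nonneg_right hL2 hg0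
      have h4 : 3 ^ d * (1 + A * B * K) * (C1 * (1 + g)) * (L : ℝ) ^ (-E) =
        3 ^ d * (1 + A * B * K) * C1 * (L : ℝ) ^ (-E) * (1 + g) := by ring
      rw [h4, pow_succ]
      linarith
  have hfin : GB d α τ (2 * K0) := by
    intro z r hr
    have h1 : Filter.Tendsto (fun k : ℕ => (2 * K0 + χ * (1 / 2 : ℝ) ^ k) * (r : ℝ) ^ α)
        Filter.atTop (nhds ((2 * K0 + χ * 0) * (r : ℝ) ^ α)) :=
      (((_root_.tendsto_pow_atTop_nhds_zero_of_lt_one (by norm_num) (by norm_num)).const_mul _).const_add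
        _).mul_const _
    rw [mul_zero, add_zero] at h1
    exact ge_of_tendsto' h1 fun k => hGB k z r hr
  exact ⟨hfin, pt τ t bt _ (by positivity) hfin⟩

end Boot3

section Tri
variable {d : ℕ} {α : ℝ}

theorem conv_sum {γ s : ℝ} (h : γ < s) : ∃ K : ℝ, 0 < K ∧ ∀ (g : V d → ℝ) (G : ℝ), (∀ v, 0 ≤ g v) →
    0 ≤ G → (∀ r : ℕ, 1 ≤ r → ∑ v ∈ bx d r, g v ≤ G * (r : ℝ) ^ γ) → ∀ l : ℕ, 1 ≤ l →
    ∑ v ∈ bx d l \ bx d 0, (normInf v : ℝ) ^ (-s) * g v ≤ K * G * 1 := by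
  set q : ℝ := 2 ^ (γ - s) with hq
  have hq0 : 0 < q := by positivity
  have hq1 : q < 1 := Real.rpow_lt_one_of_one_lt_of_neg (by norm_num) (by linarith)
  have hq2 : 0 < 1 - q := by linarith
  refine ⟨1 + 2 ^ (|s| + γ) * (1 - q)⁻¹, by positivity, ?_⟩
  intro g G hg hG0 hG l hl
  obtain ⟨n, hn1, hn2⟩ := exists_dyadic hl
  have h1 := near_aux (s := s) hg hG0 hG hn1
  have h3 : ∑ k ∈ Finset.range n, q ^ k ≤ (1 - q)⁻¹ := by
    rw [← tsum_geometric_of_lt_one hq0.le hq1]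
    exact (summable_geometric_of_lt_one hq0.le hq1).sum_le_tsum _ fun _ _ => by positivity
  have h4 := mul_le_mul_of_nonneg_left h3 (by positivity : 0 ≤ (2 : ℝ) ^ (|s| + γ) * G)
  calc _ ≤ _ := h1
    _ ≤ G + 2 ^ (|s| + γ) * G * (1 - q)⁻¹ := by linarith
    _ = _ := by ring

theorem tsum_le_real {F : V d → ℝ≥0∞} {u : V d → ℝ} (hu : ∀ y, 0 ≤ u y)
    (hF : ∀ y, F y ≤ ENNReal.ofReal (u y)) {b : ℝ} (h : ∀ N, ∑ y ∈ bx d N, u y ≤ b) :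
    ∑' y, F y ≤ ENNReal.ofReal b := by
  rw [ENNReal.tsum_eq_iSup_sum]
  apply iSup_le
  intro s
  obtain ⟨N, hN⟩ := exists_bx s
  calc ∑ y ∈ s, F y ≤ ∑ y ∈ bx d N, F y := Finset.sum_le_sum_of_subset hN
    _ ≤ ∑ y ∈ bx d N, ENNReal.ofReal (u y) := Finset.sum_le_sum fun y _ => hF y
    _ = ENNReal.ofReal (∑ y ∈ bx d N, u y) := (ENNReal.ofReal_sum_of_nonneg fun y _ => hu y).symm
    _ ≤ _ := ENNReal.ofReal_le_ofReal (h N)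

/-- reduction of the triangle to a region -/
theorem tri_red (f : V d → ℝ≥0∞) (hev : ∀ x, f (-x) = f x) :
    ∑' x : V d, ∑' y : V d, f x * f (y - x) * f y ≤ 3 * ∑' y : V d, ∑' x : V d,
      (if normInf x ≤ normInf y ∧ normInf y ≤ 2 * normInf (y - x) then f x * f (y - x) * f y else 0) := by
  set Q : V d → V d → ℝ≥0∞ := fun x y => if normInf x ≤ normInf y ∧
    normInf y ≤ 2 * normInf (y - x) then f x * f (y - x) * f y else 0 with hQ
  have key : ∀ x y, f x * f (y - x) * f y ≤ Q x y + Q y x + Q (y - x) y := by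
    intro x y
    have n1 : normInf (x - y) = normInf (y - x) := by rw [← normInf_neg, neg_sub]
    have n2 := normInf_add (y - x) x
    have n3 := normInf_sub y (y - x)
    rw [sub_add_cancel] at n2
    rw [_root_.sub_sub_cancel] at n3
    have e1 : f (x - y) = f (y - x) := by rw [← hev, neg_sub]
    by_cases h1 : normInf x ≤ normInf y ∧ normInf y ≤ 2 * normInf (y - x)
    · have : Q x y = f x * f (y - x) * f y := if_pos h1
      rw [this, add_assoc]; exact le_self_add
    by_cases h2 : normInf y ≤ normInf x ∧ normInf x ≤ 2 * normInf (x - y)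
    · have : Q y x = f y * f (x - y) * f x := if_pos h2
      rw [this, e1]
      refine le_trans (le_of_eq (by ring)) (le_self_add.trans (le_of_eq
        (show f y * f (y - x) * f x + (Q x y + Q (y - x) y) = _ by ring)))
    · have h3 : normInf (y - x) ≤ normInf y ∧ normInf y ≤ 2 * normInf (y - (y - x)) := by
        rw [_root_.sub_sub_cancel]; omega
      have : Q (y - x) y = f (y - x) * f (y - (y - x)) * f y := if_pos h3
      rw [this, _root_.sub_sub_cancel]
      refine le_trans (le_of_eq (by ring)) le_add_self
  have h1 : ∑' x, ∑' y, Q x y = ∑' y, ∑' x, Q x y := ENNReal.tsum_comm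
  have h3 : ∑' x, ∑' y, Q (y - x) y = ∑' y, ∑' x, Q x y := by
    rw [ENNReal.tsum_comm]
    congr 1; funext y
    exact (Equiv.subLeft y).tsum_eq (fun x => Q x y)
  calc _ ≤ ∑' x, ∑' y, (Q x y + Q y x + Q (y - x) y) :=
        ENNReal.tsum_le_tsum fun x => ENNReal.tsum_le_tsum fun y => key x y
    _ = ∑' x, ∑' y, Q x y + ∑' x, ∑' y, Q y x + ∑' x, ∑' y, Q (y - x) y := by
        simp_rw [ENNReal.tsum_add]
    _ = _ := by rw [h1, h3]; ring

theorem tri_main (hα0 : 0 < α) (hαd : α < d) {τ : V d → ℝ} (h0 : ∀ x, 0 ≤ τ x) (h1 : ∀ x, τ x ≤ 1)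
    (hev : ∀ x, τ (-x) = τ x) (hs : Summable τ) {G H : ℝ} (hG0 : 0 ≤ G) (hH0 : 0 ≤ H)
    (hG : GB d α τ G) (hpt : ∀ n : ℕ, 1 ≤ n → ∀ x : V d, n ≤ normInf x →
        τ x ≤ H * (n : ℝ) ^ (-((d : ℝ) - α))) {n : ℕ} (hn : 1 ≤ n)
    (hχ : ∑' x, τ x ≤ 2 * ∑ x ∈ bx d n, τ x) {K lam : ℝ}
    (hl1 : 1 ≤ lam) (hl2 : (n : ℝ) ^ (3 * α - d) ≤ lam)
    (hK : ∑ v ∈ bx d n \ bx d 0, (normInf v : ℝ) ^ (-((d : ℝ) - 2 * α)) * τ v ≤ K * G * lam) :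
    ∑' x : V d, ∑' y : V d, ENNReal.ofReal (τ x) * ENNReal.ofReal (τ (y - x)) * ENNReal.ofReal (τ y) ≤
      ENNReal.ofReal (3 * (1 + H * 2 ^ ((d : ℝ) - α) * G * (K * G) +
        4 * (H * 2 ^ ((d : ℝ) - α)) * G ^ 2) * lam) := by
  refine (tri_red (fun x => ENNReal.ofReal (τ x)) (fun x => by rw [hev])).trans ?_
  set E := (d : ℝ) - α with hE
  have hE0 : 0 < E := by linarith
  set H2 := H * 2 ^ E with hH2
  have hH20 : 0 ≤ H2 := by positivity
  set χ := ∑' x, τ x with hχd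
  have hχ0 : 0 ≤ χ := tsum_nonneg h0
  have hn0 : (0 : ℝ) < n := by exact_mod_cast hn
  set u : V d → ℝ := fun y => if normInf y = 0 then 1 else if normInf y ≤ n then
    H2 * G * ((normInf y : ℝ) ^ (-((d : ℝ) - 2 * α)) * τ y) else H2 * (n : ℝ) ^ (-E) * χ * τ y with hu
  have hu0 : ∀ y, 0 ≤ u y := by
    intro y
    simp only [hu]
    split_ifs
    · exact zero_le_one
    · exact mul_nonneg (by positivity) (mul_nonneg (by positivity) (h0 y))
    · exact mul_nonneg (by positivity) (h0 y)
  have hmid : ∀ y : V d, ∀ b : ℝ, 0 ≤ b → (∀ x : V d, normInf y ≤ 2 * normInf (y - x) → τ (y - x) ≤ b) →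
      ∑' x : V d, (if normInf x ≤ normInf y ∧ normInf y ≤ 2 * normInf (y - x) then
        ENNReal.ofReal (τ x) * ENNReal.ofReal (τ (y - x)) * ENNReal.ofReal (τ y) else 0) ≤
      ENNReal.ofReal ((∑ x ∈ bx d (normInf y), τ x) * b * τ y) := by
    intro y b hb hby
    rw [tsum_eq_sum (s := bx d (normInf y))]
    · rw [Finset.sum_mul, Finset.sum_mul, ENNReal.ofReal_sum_of_nonneg
        (fun x _ => mul_nonneg (mul_nonneg (h0 x) hb) (h0 y))]
      apply Finset.sum_le_sum
      intro x _
      split_ifs with h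
      · rw [← ENNReal.ofReal_mul (h0 _), ← ENNReal.ofReal_mul (mul_nonneg (h0 _) (h0 _))]
        apply ENNReal.ofReal_le_ofReal
        exact mul_le_mul_of_nonneg_right (mul_le_mul_of_nonneg_left (hby x h.2) (h0 x)) (h0 y)
      · exact zero_le
    · intro x hx
      rw [mem_bx] at hx
      rw [if_neg (fun h => hx h.1)]
  have hhalf : ∀ k : ℕ, 1 ≤ k → ∀ z : V d, k ≤ 2 * normInf z → τ z ≤ H2 * (k : ℝ) ^ (-E) := by
    intro k hk z hz
    have hk0 : (0 : ℝ) < k := by exact_mod_cast hk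
    have e := hpt ((k + 1) / 2) (by omega) z (by omega)
    refine e.trans ?_
    rw [hH2, mul_assoc]
    apply mul_le_mul_of_nonneg_left _ hH0
    have h2 : (k : ℝ) / 2 ≤ ((k + 1) / 2 : ℕ) := by
      have : k ≤ 2 * ((k + 1) / 2) := by omega
      have : (k : ℝ) ≤ 2 * ((k + 1) / 2 : ℕ) := by exact_mod_cast this
      linarith
    calc (((k + 1) / 2 : ℕ) : ℝ) ^ (-E) ≤ ((k : ℝ) / 2) ^ (-E) :=
          Real.rpow_le_rpow_of_nonpos (by positivity) h2 (by linarith)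
      _ = _ := by
          rw [Real.div_rpow hk0.le (by norm_num), Real.rpow_neg (by norm_num : (0 : ℝ) ≤ 2)]
          field_simp
  have hbox : ∀ r : ℕ, 1 ≤ r → ∑ x ∈ bx d r, τ x ≤ G * (r : ℝ) ^ α := by
    intro r hr
    have := hG 0 r hr
    simpa using this
  have hF : ∀ y : V d, ∑' x : V d, (if normInf x ≤ normInf y ∧ normInf y ≤ 2 * normInf (y - x) then
        ENNReal.ofReal (τ x) * ENNReal.ofReal (τ (y - x)) * ENNReal.ofReal (τ y) else 0) ≤
      ENNReal.ofReal (u y) := by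
    intro y
    by_cases hy : normInf y = 0
    · refine (hmid y 1 zero_le_one fun x _ => h1 _).trans (ENNReal.ofReal_le_ofReal ?_)
      have hu1 : u y = 1 := by simp only [hu]; rw [if_pos hy]
      have hy0 : y = 0 := by
        by_contra h
        have := normInf_pos h
        omega
      have hb : bx d 0 = {(0 : V d)} := by
        ext x
        rw [mem_bx, Finset.mem_singleton]
        constructor
        · intro h
          by_contra h'
          have := normInf_pos h'
          omega
        · rintro rfl; rw [normInf_zero]
      rw [hu1, hy, hb, Finset.sum_singleton, mul_one]
      exact mul_le_one₀ (h1 _) (h0 _) (h1 _)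
    have hy1 : 1 ≤ normInf y := by omega
    have hy0 : (0 : ℝ) < normInf y := by exact_mod_cast hy1
    refine (hmid y _ (by positivity) fun x hx => hhalf _ hy1 _ hx).trans
      (ENNReal.ofReal_le_ofReal ?_)
    by_cases hyn : normInf y ≤ n
    · have hu1 : u y = H2 * G * ((normInf y : ℝ) ^ (-((d : ℝ) - 2 * α)) * τ y) := by
        simp only [hu]; rw [if_neg hy, if_pos hyn]
      rw [hu1]
      have e : (normInf y : ℝ) ^ (-((d : ℝ) - 2 * α)) = (normInf y : ℝ) ^ α * (normInf y : ℝ) ^ (-E) := by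
        rw [← Real.rpow_add hy0]; congr 1; rw [hE]; ring
      rw [e]
      have := mul_le_mul_of_nonneg_right (hbox _ hy1)
        (mul_nonneg (mul_nonneg hH20 (by positivity : 0 ≤ (normInf y : ℝ) ^ (-E))) (h0 y))
      linarith
    · have hu1 : u y = H2 * (n : ℝ) ^ (-E) * χ * τ y := by
        simp only [hu]; rw [if_neg hy, if_neg hyn]
      rw [hu1]
      apply mul_le_mul_of_nonneg_right _ (h0 y)
      rw [mul_comm]
      apply mul_le_mul _ (hs.sum_le_tsum _ fun x _ => h0 x) (Finset.sum_nonneg fun x _ => h0 x)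
        (by positivity)
      apply mul_le_mul_of_nonneg_left _ hH20
      push Not at hyn
      exact Real.rpow_le_rpow_of_nonpos hn0 (by exact_mod_cast hyn.le) (by linarith)
  have hsum : ∀ N, ∑ y ∈ bx d N, u y ≤ (1 + H2 * G * (K * G) + 4 * H2 * G ^ 2) * lam := by
    intro N
    have hsub : bx d N ⊆ (bx d 0 ∪ (bx d n \ bx d 0)) ∪ (bx d (N + n) \ bx d n) := by
      intro v
      simp only [Finset.mem_union, Finset.mem_sdiff, mem_bx]
      omega
    refine (Finset.sum_le_sum_of_subset_of_nonneg hsub fun y _ _ => hu0 y).trans ?_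
    rw [Finset.sum_union, Finset.sum_union Finset.disjoint_sdiff]
    · have a1 : ∑ y ∈ bx d 0, u y = 1 := by
        have : ∀ y ∈ bx d 0, u y = 1 := by
          intro y hy
          rw [mem_bx] at hy
          simp only [hu]; rw [if_pos (by omega)]
        rw [Finset.sum_congr rfl this, Finset.sum_const, nsmul_eq_mul, card_bx]
        simp
      have a2 : ∑ y ∈ bx d n \ bx d 0, u y ≤ H2 * G * (K * G * lam) := by
        refine le_trans (le_of_eq ?_) (mul_le_mul_of_nonneg_left hK (mul_nonneg hH20 hG0))
        rw [Finset.mul_sum]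
        apply Finset.sum_congr rfl
        intro y hy
        rw [Finset.mem_sdiff, mem_bx, mem_bx] at hy
        simp only [hu]; rw [if_neg (by omega), if_pos hy.1]
      have a3 : ∑ y ∈ bx d (N + n) \ bx d n, u y ≤ 4 * H2 * G ^ 2 * lam := by
        have e : ∑ y ∈ bx d (N + n) \ bx d n, u y =
            H2 * (n : ℝ) ^ (-E) * χ * ∑ y ∈ bx d (N + n) \ bx d n, τ y := by
          rw [Finset.mul_sum]
          apply Finset.sum_congr rfl
          intro y hy
          rw [Finset.mem_sdiff, mem_bx, mem_bx] at hy
          simp only [hu]; rw [if_neg (by omega), if_neg (by omega)]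
        have e2 : ∑ y ∈ bx d (N + n) \ bx d n, τ y ≤ χ := hs.sum_le_tsum _ fun x _ => h0 x
        have e3 : χ ≤ 2 * (G * (n : ℝ) ^ α) := hχ.trans (by linarith [hbox n hn])
        have e4 : (n : ℝ) ^ (3 * α - d) = (n : ℝ) ^ (-E) * ((n : ℝ) ^ α * (n : ℝ) ^ α) := by
          rw [← Real.rpow_add hn0, ← Real.rpow_add hn0]; congr 1; rw [hE]; ring
        rw [e]
        calc _ ≤ H2 * (n : ℝ) ^ (-E) * χ * χ := mul_le_mul_of_nonneg_left e2 (by positivity)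
          _ = H2 * (n : ℝ) ^ (-E) * (χ * χ) := by ring
          _ ≤ H2 * (n : ℝ) ^ (-E) * ((2 * (G * (n : ℝ) ^ α)) * (2 * (G * (n : ℝ) ^ α))) := by
              gcongr
          _ = 4 * H2 * G ^ 2 * (n : ℝ) ^ (3 * α - d) := by rw [e4]; ring
          _ ≤ _ := mul_le_mul_of_nonneg_left hl2 (by positivity)
      rw [a1]
      linarith
    · rw [Finset.disjoint_left]
      intro v
      simp only [Finset.mem_union, Finset.mem_sdiff, mem_bx]
      omega
  have hfin := tsum_le_real hu0 hF hsum
  calc _ ≤ 3 * ENNReal.ofReal ((1 + H2 * G * (K * G) + 4 * H2 * G ^ 2) * lam) := by gcongr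
    _ = ENNReal.ofReal 3 * ENNReal.ofReal ((1 + H2 * G * (K * G) + 4 * H2 * G ^ 2) * lam) := by
        norm_num
    _ = _ := by
        rw [← ENNReal.ofReal_mul (by norm_num)]; congr 1; ring

end Tri

section Fin
variable {d : ℕ} {α : ℝ}

theorem lam_exists : ∃ (K : ℝ) (lam : ℕ → ℝ), 0 < K ∧ (∀ n : ℕ, 1 ≤ n → 1 ≤ lam n ∧
    (n : ℝ) ^ (3 * α - d) ≤ lam n) ∧
    (∀ (g : V d → ℝ) (G : ℝ), (∀ v, 0 ≤ g v) → 0 ≤ G →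
      (∀ r : ℕ, 1 ≤ r → ∑ v ∈ bx d r, g v ≤ G * (r : ℝ) ^ α) → ∀ l : ℕ, 1 ≤ l →
      ∑ v ∈ bx d l \ bx d 0, (normInf v : ℝ) ^ (-((d : ℝ) - 2 * α)) * g v ≤ K * G * lam l) ∧
    (α < (d : ℝ) / 3 → ∀ n, lam n = 1) ∧
    (α = (d : ℝ) / 3 → ∀ n, lam n = 1 + Real.log n) ∧
    ((d : ℝ) / 3 < α → ∀ n, lam n = (n : ℝ) ^ (3 * α - d)) := by
  rcases lt_trichotomy α ((d : ℝ) / 3) with h | h | h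
  · obtain ⟨K, hK, hs⟩ := conv_sum (d := d) (γ := α) (s := (d : ℝ) - 2 * α) (by linarith)
    refine ⟨K, fun _ => 1, hK, fun n hn => ⟨le_rfl, ?_⟩, hs, fun _ _ => rfl, fun h' => absurd h' h.ne,
      fun h' => absurd h' h.le.not_gt⟩
    exact Real.rpow_le_one_of_one_le_of_nonpos (by exact_mod_cast hn) (by linarith)
  · obtain ⟨K, hK, hs⟩ := log_sum (d := d) (γ := α)
    refine ⟨K, fun n => 1 + Real.log n, hK, fun n hn => ?_, ?_, fun h' => absurd h h'.ne,
      fun _ _ => rfl, fun h' => absurd h h'.ne'⟩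
    · have : 0 ≤ Real.log n := Real.log_nonneg (by exact_mod_cast hn)
      rw [show 3 * α - d = 0 by linarith, Real.rpow_zero]
      constructor <;> linarith
    · rw [show (d : ℝ) - 2 * α = α by linarith]; exact hs
  · obtain ⟨K, hK, hs⟩ := near_sum (d := d) (γ := α) (s := (d : ℝ) - 2 * α) (by linarith)
    refine ⟨K, fun n => (n : ℝ) ^ (3 * α - d), hK, fun n hn => ⟨?_, le_rfl⟩, ?_,
      fun h' => absurd h' h.le.not_gt, fun h' => absurd h' h.ne', fun _ _ => rfl⟩
    · exact Real.one_le_rpow (by exact_mod_cast hn) (by linarith)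
    · rw [show α - ((d : ℝ) - 2 * α) = 3 * α - d by ring] at hs; exact hs

theorem xi_nat {P : ℝ → Measure (Config d)} {β : ℝ} {τ : V d → ℝ} (h0 : ∀ x, 0 ≤ τ x)
    (hs : Summable τ) (h : ∀ x, twoPoint P β 0 x = ENNReal.ofReal (τ x)) :
    ∃ n : ℕ, 1 ≤ n ∧ xi P β = n ∧ ∑' x, τ x ≤ 2 * ∑ x ∈ bx d n, τ x := by
  have hchi : chi P β = ENNReal.ofReal (∑' x, τ x) := by
    unfold chi
    rw [ENNReal.ofReal_tsum_of_nonneg h0 hs]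
    exact tsum_congr h
  have hbox : ∀ n, boxSum P β n = ENNReal.ofReal (∑ x ∈ bx d n, τ x) := by
    intro n
    unfold boxSum
    rw [tsum_eq_sum (s := bx d n)]
    · rw [ENNReal.ofReal_sum_of_nonneg fun x _ => h0 x]
      apply Finset.sum_congr rfl
      intro x hx
      rw [mem_bx] at hx
      rw [if_pos hx, h]
    · intro x hx
      rw [mem_bx] at hx
      rw [if_neg hx]
  have hiff : ∀ n, chi P β ≤ 2 * boxSum P β n ↔ ∑' x, τ x ≤ 2 * ∑ x ∈ bx d n, τ x := by
    intro n
    have hnn : 0 ≤ ∑ x ∈ bx d n, τ x := Finset.sum_nonneg fun x _ => h0 x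
    rw [hchi, hbox, show (2 : ℝ≥0∞) = ENNReal.ofReal 2 by norm_num,
      ← ENNReal.ofReal_mul (by norm_num), ENNReal.ofReal_le_ofReal_iff (by positivity)]
  have hex : ∃ n : ℕ, 1 ≤ n ∧ ∑' x, τ x ≤ 2 * ∑ x ∈ bx d n, τ x := by
    have hχ0 : 0 ≤ ∑' x, τ x := tsum_nonneg h0
    rcases hχ0.eq_or_lt with hz | hpos
    · refine ⟨1, le_rfl, ?_⟩
      rw [← hz]
      exact mul_nonneg (by norm_num) (Finset.sum_nonneg fun x _ => h0 x)
    · have h1 : ∀ᶠ s : Finset (V d) in Filter.atTop, (∑' x, τ x) / 2 < ∑ x ∈ s, τ x :=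
        hs.hasSum.eventually_const_lt (by linarith)
      obtain ⟨s, hs1⟩ := h1.exists
      obtain ⟨r, hr⟩ := exists_bx s
      refine ⟨r + 1, by omega, ?_⟩
      have : ∑ x ∈ s, τ x ≤ ∑ x ∈ bx d (r + 1), τ x :=
        Finset.sum_le_sum_of_subset_of_nonneg (hr.trans (bx_mono (by omega))) fun x _ _ => h0 x
      linarith
  classical
  refine ⟨Nat.find hex, (Nat.find_spec hex).1, ?_, (Nat.find_spec hex).2⟩
  apply IsLeast.csInf_eq
  constructor
  · exact ⟨_, rfl, (Nat.find_spec hex).1, (hiff _).2 (Nat.find_spec hex).2⟩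
  · rintro r ⟨n, rfl, hn, hn2⟩
    exact_mod_cast Nat.find_min' hex ⟨hn, (hiff n).1 hn2⟩

end Fin

/-- Triangle diagram in terms of the correlation length: for `β_c/2 ≤ β < β_c`,
`∇_β ≤ C₁` if `α < d/3`, `∇_β ≤ C₁(1 + log ξ(β))` if `α = d/3`, and
`∇_β ≤ C₁ ξ(β)^{3α-d}` if `α > d/3`. -/
theorem triangle_correlation_length_bound {d : ℕ} {J : V d → V d → ℝ} {α c C : ℝ}
    (hJ : KernelHyp d J α c C)
    (P : ℝ → Measure (Config d)) (hP : IsLRP J P)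
    (hα : α < 1) :
    ∃ C₁ : ℝ, 0 < C₁ ∧ ∀ β : ℝ, betaC P / 2 ≤ β → β < betaC P →
      (α < (d : ℝ) / 3 → triangle P β ≤ ENNReal.ofReal C₁) ∧
      (α = (d : ℝ) / 3 →
        triangle P β ≤ ENNReal.ofReal (C₁ * (1 + Real.log (xi P β).toReal))) ∧
      ((d : ℝ) / 3 < α →
        triangle P β ≤ ENNReal.ofReal C₁ * xi P β ^ (3 * α - (d : ℝ))) := by
  have hd := hJ.d_pos
  have hα0 := hJ.alpha_pos
  have hαd := hJ.alpha_lt_d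
  have hC : 0 < C := hJ.c_pos.trans_le hJ.c_le_C
  by_cases hb : betaC P ≤ 0
  · refine ⟨1, one_pos, fun β h1 h2 => ?_⟩
    exfalso; linarith
  push Not at hb
  obtain ⟨A, hA, havg⟩ := avg_bound hJ (half_pos hb)
  obtain ⟨G, H, hG0, hH0, hboot⟩ := boot (d := d) hd hα0 hα hαd hA.le
    (mul_pos hb hC).le
  obtain ⟨K, lam, hK0, hlam, hsum, c1, c2, c3⟩ := lam_exists (d := d) (α := α)
  refine ⟨3 * (1 + H * 2 ^ ((d : ℝ) - α) * G * (K * G) + 4 * (H * 2 ^ ((d : ℝ) - α)) * G ^ 2),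
    by positivity, ?_⟩
  set C₁ := 3 * (1 + H * 2 ^ ((d : ℝ) - α) * G * (K * G) + 4 * (H * 2 ^ ((d : ℝ) - α)) * G ^ 2)
    with hC1
  have hC10 : 0 < C₁ := by positivity
  intro β hβ1 hβ2
  have hβ0 : 0 ≤ β := by linarith
  have hp := PP_pp hJ hβ0
  have hT := TI_pp hJ β
  have hs := sharp hJ hP hβ0 hβ2
  have hbt := BT_mk hJ hβ0 (mul_le_mul_of_nonneg_right hβ2.le hC.le) (havg β hβ1 hs)
  obtain ⟨hG, hpt⟩ := hboot _ _ hbt hs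
  obtain ⟨n, hn, hxi, hχ⟩ := xi_nat (P := P) (β := β) hbt.nn hs (fun x => twoPoint_eq hP hp 0 x)
  have hgb : ∀ r : ℕ, 1 ≤ r → ∑ v ∈ bx d r, ti (pp J β) 0 v ≤ G * (r : ℝ) ^ α := by
    intro r hr
    have := hG 0 r hr
    simpa using this
  have hmain := tri_main hα0 hαd hbt.nn hbt.le1 hbt.ev hs hG0.le hH0.le hG hpt hn hχ
    (hlam n hn).1 (hlam n hn).2 (hsum _ G hbt.nn hG0.le hgb n hn)
  rw [← hC1] at hmain
  have htri : triangle P β ≤ ENNReal.ofReal (C₁ * lam n) := by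
    refine le_trans (le_of_eq ?_) hmain
    unfold triangle
    congr 1; funext x; congr 1; funext y
    rw [twoPoint_eq hP hp, twoPoint_eq hP hp, twoPoint_eq hP hp, ti_zero hp hT x y, ti_symm _ y 0]
  refine ⟨fun h => ?_, fun h => ?_, fun h => ?_⟩
  · rwa [c1 h, mul_one] at htri
  · rw [c2 h] at htri
    rw [hxi, ENNReal.toReal_natCast]
    exact htri
  · rw [c3 h, ENNReal.ofReal_mul hC10.le] at htri
    have hn0 : (0 : ℝ) < n := by exact_mod_cast hn
    rw [hxi, ← ENNReal.ofReal_natCast, ENNReal.ofReal_rpow_of_pos hn0]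
    exact htri


end LRP
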